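/- arXiv:1312.2568 — 2 statements merged into one kernel-verified Lean document; each statement's English description precedes it below -/
import Mathlib

section
/- Let d ≥ 3 be an integer, u_⋆(x) = (1+|x|²)^{−(d−2)/2}, f_0 = u_⋆, f_i(x) = x_i u_⋆(x)/(1+|x|²) for i = 1,…,d, and f_{d+1}(x) = (1−|x|²) u_⋆(x)/(1+|x|²). Define F[f] = ∫ |∇f|² dx − d(d+2) ∫ f² (1+|x|²)^{−2} dx and G[f] = (1/(d(d+2))) ∫ f² (1+|x|²)^{−2} dx − ∫ (f/(1+|x|²)²) (−Δ)^{−1}( f/(1+|x|²)² ) dx. Then: (i) for every g in L²(ℝ^d, (1+|x|²)^{−2} dx) satisfying ∫ g f_i (1+|x|²)^{−2} dx = 0 for all i = 0, 1, …, d+1, one has ∫ (g/(1+|x|²)²) (−Δ)^{−1}( g/(1+|x|²)² ) dx ≤ (1/((d+2)(d+4))) ∫ g² (1+|x|²)^{−2} dx; and (ii) for every f in D^{1,2}(ℝ^d) satisfying the same orthogonality conditions, (4/(d(d+2)(d+4))) ∫ f² (1+|x|²)^{−2} dx ≤ G[f] ≤ (1/(d(d+2)²(d+4))) F[f], and both inequalities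 in (ii) are achieved by some nonzero f in L²(ℝ^d, (1+|x|²)^{−2} dx). -/
open MeasureTheory Real

noncomputable section

/-- Surface area of the unit sphere `𝕊^{d-1} ⊆ ℝ^d`. -/
def sphereArea (d : ℕ) : ℝ := 2 * Real.pi ^ ((d : ℝ) / 2) / Real.Gamma ((d : ℝ) / 2)

/-- Green function of `-Δ` on `ℝ^d`, `d ≥ 3`: `G_d(x) = |x|^{2-d} / ((d-2)|𝕊^{d-1}|)`. -/
def greenKernel (d : ℕ) (x : EuclideanSpace ℝ (Fin d)) : ℝ :=
  ‖x‖ ^ ((2 : ℝ) - d) / (((d : ℝ) - 2) * sphereArea d)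

/-- `(−Δ)⁻¹ v`, the convolution of `v` with the Green function of `-Δ` on `ℝ^d`. -/
def invLap (d : ℕ) (v : EuclideanSpace ℝ (Fin d) → ℝ) (x : EuclideanSpace ℝ (Fin d)) : ℝ :=
  ∫ y, greenKernel d (x - y) * v y

/-- The Aubin–Talenti (optimal Sobolev) constant
`S_d = (1/(π d (d−2))) (Γ(d)/Γ(d/2))^{2/d}`. -/
def sobolevConst (d : ℕ) : ℝ :=
  1 / (Real.pi * d * ((d : ℝ) - 2)) *
    (Real.Gamma (d : ℝ) / Real.Gamma ((d : ℝ) / 2)) ^ ((2 : ℝ) / (d : ℝ))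

/-- Membership in `D^{1,2}(ℝ^d)`: a (weakly) differentiable function with
`∇u ∈ L²` and `u ∈ L^{2*}`, `2* = 2d/(d-2)`. -/
def MemD12 (d : ℕ) (u : EuclideanSpace ℝ (Fin d) → ℝ) : Prop :=
  Differentiable ℝ u ∧
  Integrable (fun x => ‖gradient u x‖ ^ 2) ∧
  Integrable (fun x => |u x| ^ (2 * (d : ℝ) / ((d : ℝ) - 2)))

/-- The `L^p` norm of `u`, written with real exponents: `(∫ |u|^p)^{1/p}`. -/
def lpNorm' {d : ℕ} (p : ℝ) (u : EuclideanSpace ℝ (Fin d) → ℝ) : ℝ :=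
  (∫ x, |u x| ^ p) ^ (1 / p)

/-- The Laplacian `Δu = ∑ ∂²u/∂x_i²`. -/
def lap (d : ℕ) (u : EuclideanSpace ℝ (Fin d) → ℝ) (x : EuclideanSpace ℝ (Fin d)) : ℝ :=
  ∑ i : Fin d, iteratedFDeriv ℝ 2 u x ![EuclideanSpace.single i 1, EuclideanSpace.single i 1]

/-- The Aubin–Talenti extremal function `u_⋆(x) = (1+|x|²)^{−(d−2)/2}`. -/
def uAT (d : ℕ) (x : EuclideanSpace ℝ (Fin d)) : ℝ :=
  (1 + ‖x‖ ^ 2) ^ (-(((d : ℝ) - 2) / 2))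

/-- `f_i(x) = x_i u_⋆(x)/(1+|x|²)`, `i = 1, …, d`. -/
def atFi (d : ℕ) (i : Fin d) (x : EuclideanSpace ℝ (Fin d)) : ℝ :=
  x i * uAT d x / (1 + ‖x‖ ^ 2)

/-- `f_{d+1}(x) = (1−|x|²) u_⋆(x)/(1+|x|²)`. -/
def atFlast (d : ℕ) (x : EuclideanSpace ℝ (Fin d)) : ℝ :=
  (1 - ‖x‖ ^ 2) * uAT d x / (1 + ‖x‖ ^ 2)

/-- Orthogonality, in `L²(ℝ^d, (1+|x|²)^{−2} dx)`, to `f_0 = u_⋆`, `f_1, …, f_d` and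
`f_{d+1}`. -/
def orthAT (d : ℕ) (f : EuclideanSpace ℝ (Fin d) → ℝ) : Prop :=
  (∫ x, f x * uAT d x / (1 + ‖x‖ ^ 2) ^ 2) = 0 ∧
  (∀ i : Fin d, (∫ x, f x * atFi d i x / (1 + ‖x‖ ^ 2) ^ 2) = 0) ∧
  (∫ x, f x * atFlast d x / (1 + ‖x‖ ^ 2) ^ 2) = 0

/-- The quadratic form `F`, the second-order expansion of the Sobolev deficit
around the Aubin–Talenti function. -/
def quadF (d : ℕ) (f : EuclideanSpace ℝ (Fin d) → ℝ) : ℝ :=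
  (∫ x, ‖gradient f x‖ ^ 2) -
    (d : ℝ) * ((d : ℝ) + 2) * ∫ x, f x ^ 2 / (1 + ‖x‖ ^ 2) ^ 2

/-- The quadratic form `G`, the second-order expansion of the Hardy-Littlewood-Sobolev
deficit around the Aubin–Talenti function. -/
def quadG (d : ℕ) (f : EuclideanSpace ℝ (Fin d) → ℝ) : ℝ :=
  1 / ((d : ℝ) * ((d : ℝ) + 2)) * (∫ x, f x ^ 2 / (1 + ‖x‖ ^ 2) ^ 2) -
    ∫ x, f x / (1 + ‖x‖ ^ 2) ^ 2 *
      invLap d (fun y => f y / (1 + ‖y‖ ^ 2) ^ 2) x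

/-!
Stereographic projection turns `-Δ` into the conformal Laplacian of `𝕊^d`: after division by `u_⋆`,
the operator `T f = (−Δ)⁻¹ (f/(1+|x|²)²)` becomes a bounded symmetric operator on `L²(𝕊^d)`. No
spherical harmonics are needed, because a direct computation shows that, for `P` homogeneous of
degree at most `k`,
`-(1+|x|²)² Δ (P (1+|x|²)^{-k} u_⋆) = λ_k P (1+|x|²)^{-k} u_⋆ + (terms of lower level)`,
where `λ_k = (2k+d-2)(2k+d)`. So `T` is triangular with diagonal `1/λ_k` along the filtration of the
polynomials on `𝕊^d` by degree. By symmetry and density of polynomials, `⟪T g, g⟫ ≤ λ_n⁻¹ ‖g‖²` for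
every `g` orthogonal to the levels below `n`. The functions `f_0, …, f_{d+1}` span the levels `0`
and `1`, so `n = 2` gives (i) and the lower bound in (ii), as `d(d+2) = λ_1` and
`(d+2)(d+4) = λ_2`.

Expanding `∫|∇f - ∇(T w)|² ≥ 0` gives `2⟪f, w⟫ ≤ ∫|∇f|² + ⟪T w, w⟫`. The choice `w = λ_2 f`,
combined with (i), is the upper bound in (ii). Equality holds for the eigenfunctions of level `2`,
such as `x_i x_j (1+|x|²)^{-2} u_⋆` with `i ≠ j`.
-/

open Filter Topology Asymptotics

section Weight

variable {E : Type*} [NormedAddCommGroup E]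

/-- The weight `1 + |x|²`. Decay at infinity is measured by its powers throughout, in the form
`f =O[⊤] (rho · ^ a)`, that is, `|f| ≤ C (1 + |x|²) ^ a` on the whole space. -/
def rho (x : E) : ℝ := 1 + ‖x‖ ^ 2

lemma rho_pos (x : E) : 0 < rho x := by unfold rho; positivity

lemma one_le_rho (x : E) : 1 ≤ rho x := le_add_of_nonneg_right (sq_nonneg _)

lemma rho_rpow_pos (a : ℝ) (x : E) : 0 < rho x ^ a := rpow_pos_of_pos (rho_pos x) a

lemma rho_rpow_le_one {a : ℝ} (ha : a ≤ 0) (x : E) : rho x ^ a ≤ 1 :=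
  rpow_le_one_of_one_le_of_nonpos (one_le_rho x) ha

lemma norm_le_rho_rpow_half (x : E) : ‖x‖ ≤ rho x ^ (1 / 2 : ℝ) := by
  rw [← sqrt_eq_rpow]
  exact le_sqrt_of_sq_le (by unfold rho; linarith)

lemma rho_rpow_div_sq (a : ℝ) (x : E) : rho x ^ a / rho x ^ 2 = rho x ^ (a - 2) := by
  rw [rpow_sub (rho_pos x), rpow_two]

lemma continuous_rho_rpow (a : ℝ) : Continuous fun x : E => rho x ^ a :=
  Continuous.rpow_const (by unfold rho; fun_prop) fun x => Or.inl (rho_pos x).ne'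

/-- Peetre's inequality. -/
lemma rho_le_two_mul_rho_mul_rho_sub (x y : E) : rho y ≤ 2 * rho x * rho (y - x) := by
  have triangle : ‖y‖ ≤ ‖x‖ + ‖y - x‖ := by
    simpa using norm_add_le x (y - x)
  have sq_triangle : ‖y‖ ^ 2 ≤ (‖x‖ + ‖y - x‖) ^ 2 := by gcongr
  unfold rho
  nlinarith [sq_nonneg (‖x‖ - ‖y - x‖), sq_nonneg (‖x‖ * ‖y - x‖)]

lemma isBigO_rho_rpow_of_le {a b : ℝ} (h : a ≤ b) :
    (fun x : E => rho x ^ a) =O[⊤] fun x => rho x ^ b :=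
  isBigO_of_le _ fun x => by
    rw [norm_of_nonneg (rho_rpow_pos a x).le, norm_of_nonneg (rho_rpow_pos b x).le]
    exact rpow_le_rpow_of_exponent_le (one_le_rho x) h

lemma isBigO_rho_rpow_mul {f g : E → ℝ} {a b c : ℝ} (hf : f =O[⊤] (rho · ^ a))
    (hg : g =O[⊤] (rho · ^ b)) (h : a + b ≤ c) :
    (fun x => f x * g x) =O[⊤] (rho · ^ c) :=
  ((hf.mul hg).congr_right fun x => (rpow_add (rho_pos x) a b).symm).trans
    (isBigO_rho_rpow_of_le h)

lemma isBigO_rho_rpow_div_sq {f : E → ℝ} {a b : ℝ} (hf : f =O[⊤] (rho · ^ a)) (h : a - 2 = b) :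
    (fun x => f x / rho x ^ 2) =O[⊤] (rho · ^ b) := by
  subst h
  have inv_sq : ∀ x : E, rho x ^ (-2 : ℝ) = (rho x ^ 2)⁻¹ := fun x => by
    rw [rpow_neg (rho_pos x).le, rpow_two]
  simpa only [div_eq_mul_inv, inv_sq, sub_eq_add_neg] using
    isBigO_rho_rpow_mul hf (isBigO_refl (fun x : E => rho x ^ (-2 : ℝ)) ⊤) le_rfl

lemma exists_forall_abs_le_of_isBigO_rho_rpow {f : E → ℝ} {a : ℝ} (ha : a ≤ 0)
    (hf : f =O[⊤] (rho · ^ a)) : ∃ C, ∀ x, |f x| ≤ C := by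
  have bounded : f =O[⊤] fun _ => (1 : ℝ) := by
    simpa only [rpow_zero] using hf.trans (isBigO_rho_rpow_of_le ha)
  obtain ⟨C, hC⟩ := isBigO_top.mp bounded
  exact ⟨C, fun x => by simpa using hC x⟩

lemma isBigO_add_norm_sub_sq_rpow {a s : ℝ} (ha : 0 < a) (hs : s ≤ 0) (c : E) :
    (fun y => (a + ‖y - c‖ ^ 2) ^ s) =O[⊤] (rho · ^ s) := by
  set κ := min a 1 / (2 * rho c) with hκ
  have κ_pos : 0 < κ := div_pos (lt_min ha one_pos) (by linarith [rho_pos c])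
  have κ_mul_rho_le : ∀ y, κ * rho y ≤ a + ‖y - c‖ ^ 2 := fun y => calc
    κ * rho y ≤ κ * (2 * rho c * rho (y - c)) := by
      gcongr; exact rho_le_two_mul_rho_mul_rho_sub c y
    _ = min a 1 * 1 + min a 1 * ‖y - c‖ ^ 2 := by
      rw [hκ, rho.eq_1 (y - c)]; field_simp [(rho_pos c).ne']
    _ ≤ a + ‖y - c‖ ^ 2 := by
      nlinarith [min_le_left a 1, min_le_right a 1, sq_nonneg ‖y - c‖]
  refine IsBigO.of_bound (κ ^ s) (Eventually.of_forall fun y => ?_)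
  rw [norm_of_nonneg (by positivity), norm_of_nonneg (rho_rpow_pos s y).le,
    ← mul_rpow κ_pos.le (rho_pos y).le]
  exact rpow_le_rpow_of_nonpos (mul_pos κ_pos (rho_pos y)) (κ_mul_rho_le y) hs

lemma integrable_rho_rpow [NormedSpace ℝ E] [FiniteDimensional ℝ E] [MeasurableSpace E]
    [BorelSpace E] {μ : Measure E} [μ.IsAddHaarMeasure] {a : ℝ}
    (ha : a < -((Module.finrank ℝ E : ℝ) / 2)) : Integrable (fun x : E => rho x ^ a) μ := by
  have h := integrable_rpow_neg_one_add_norm_sq (μ := μ) (r := -(2 * a)) (by linarith)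
  simpa [rho, show -(-(2 * a)) / 2 = a by ring] using h

end Weight

section Cutoff

variable {E : Type*} [NormedAddCommGroup E]

/-- The cutoff `δ / (δ + |x|²)`, which tends to `1` as `δ → ∞`. It is written as an instance of the
functions `(a + |x - c|²) ^ s`, which also include the regularised Green functions. -/
def cutoff (δ : ℝ) (x : E) : ℝ := δ * (δ + ‖x - 0‖ ^ 2) ^ (-1 : ℝ)

lemma cutoff_eq_div (δ : ℝ) (x : E) : cutoff δ x = δ / (δ + ‖x‖ ^ 2) := by
  rw [cutoff, rpow_neg_one, sub_zero, div_eq_mul_inv]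

variable {δ : ℝ}

lemma norm_cutoff_le_one (hδ : 0 < δ) (x : E) : ‖cutoff δ x‖ ≤ 1 := by
  rw [cutoff_eq_div, norm_of_nonneg (by positivity)]
  exact div_le_one_of_le₀ (by nlinarith [sq_nonneg ‖x‖]) (by positivity)

lemma isBigO_cutoff (hδ : 0 < δ) : cutoff δ =O[⊤] fun x : E => rho x ^ (-(1 / 2) : ℝ) :=
  ((isBigO_add_norm_sub_sq_rpow hδ (by norm_num) 0).const_mul_left δ).trans
    (isBigO_rho_rpow_of_le (by norm_num))

lemma tendsto_cutoff_atTop (x : E) : Tendsto (cutoff · x) atTop (𝓝 1) := by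
  have tendsto_denom : Tendsto (fun δ : ℝ => δ + ‖x‖ ^ 2) atTop atTop :=
    tendsto_atTop_add_const_right _ _ tendsto_id
  have h := (tendsto_const_nhds (x := ‖x‖ ^ 2)).div_atTop tendsto_denom |>.const_sub 1
  rw [sub_zero] at h
  refine h.congr' ?_
  filter_upwards [eventually_gt_atTop 0] with δ hδ
  rw [cutoff_eq_div]
  field_simp
  ring

variable [InnerProductSpace ℝ E]

lemma hasFDerivAt_add_norm_sub_sq_rpow {a : ℝ} (ha : 0 < a) (c : E) (s : ℝ) (x : E) :
    HasFDerivAt (fun y : E => (a + ‖y - c‖ ^ 2) ^ s)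
      ((s * (a + ‖x - c‖ ^ 2) ^ (s - 1)) • (2 • innerSL ℝ (x - c))) x := by
  have h := (hasStrictFDerivAt_norm_sq (x - c)).hasFDerivAt.comp x ((hasFDerivAt_id x).sub_const c)
  exact HasFDerivAt.rpow_const (by simpa using h.const_add a) (Or.inl (by positivity))

lemma differentiable_cutoff (hδ : 0 < δ) : Differentiable ℝ (cutoff (E := E) δ) := fun x =>
  (hasFDerivAt_add_norm_sub_sq_rpow hδ 0 (-1) x).differentiableAt.const_mul δ

lemma fderiv_cutoff_apply (hδ : 0 < δ) (x v : E) :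
    fderiv ℝ (cutoff δ) x v = -2 * inner ℝ x v * cutoff δ x / (δ + ‖x‖ ^ 2) := by
  have hder := (hasFDerivAt_add_norm_sub_sq_rpow hδ (0 : E) (-1) x).const_mul δ
  have exponent : (-1 - 1 : ℝ) = -(2 : ℕ) := by norm_num
  rw [show cutoff δ = fun y : E => δ * (δ + ‖y - 0‖ ^ 2) ^ (-1 : ℝ) from rfl, hder.fderiv,
    exponent, rpow_neg (by positivity), rpow_natCast]
  simp only [sub_zero, rpow_neg_one, smul_apply, innerSL_apply_apply,
    smul_eq_mul, nsmul_eq_mul, Nat.cast_ofNat]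
  field_simp

lemma norm_fderiv_cutoff_apply_le (hδ : 1 ≤ δ) (x v : E) :
    ‖fderiv ℝ (cutoff δ) x v‖ ≤ 2 * ‖v‖ * rho x ^ (-(1 / 2) : ℝ) := by
  have hδ' : 0 < δ := one_pos.trans_le hδ
  have norm_div_le : ‖x‖ / (δ + ‖x‖ ^ 2) ≤ rho x ^ (-(1 / 2) : ℝ) := calc
    ‖x‖ / (δ + ‖x‖ ^ 2) ≤ rho x ^ (1 / 2 : ℝ) / rho x := by
      gcongr
      · exact (rho_rpow_pos _ x).le
      · exact rho_pos x
      · exact norm_le_rho_rpow_half x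
      · exact add_le_add_left hδ _
    _ = rho x ^ (-(1 / 2) : ℝ) := by
      rw [← rpow_sub_one (rho_pos x).ne']; norm_num
  rw [fderiv_cutoff_apply hδ', norm_div, norm_mul, norm_mul, norm_of_nonneg (by positivity :
    0 ≤ δ + ‖x‖ ^ 2), show ‖(-2 : ℝ)‖ = 2 by norm_num]
  calc 2 * ‖inner ℝ x v‖ * ‖cutoff δ x‖ / (δ + ‖x‖ ^ 2)
      ≤ 2 * (‖x‖ * ‖v‖) * 1 / (δ + ‖x‖ ^ 2) := by
        gcongr
        exacts [norm_inner_le_norm x v, norm_cutoff_le_one hδ' x]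
    _ = 2 * ‖v‖ * (‖x‖ / (δ + ‖x‖ ^ 2)) := by ring
    _ ≤ _ := by gcongr

lemma tendsto_fderiv_cutoff_apply_atTop (x v : E) :
    Tendsto (fun δ => fderiv ℝ (cutoff δ) x v) atTop (𝓝 0) := by
  have tendsto_denom : Tendsto (fun δ : ℝ => δ + ‖x‖ ^ 2) atTop atTop :=
    tendsto_atTop_add_const_right _ _ tendsto_id
  refine (((tendsto_cutoff_atTop x).const_mul (-2 * inner ℝ x v)).div_atTop tendsto_denom).congr' ?_
  filter_upwards [eventually_gt_atTop 0] with δ hδ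
  exact (fderiv_cutoff_apply hδ x v).symm

variable [FiniteDimensional ℝ E] [MeasurableSpace E] [BorelSpace E] {μ : Measure E}
  [μ.IsAddHaarMeasure] {f g : E → ℝ} {v : E}

lemma integral_cutoff_mul_fderiv (hδ : 1 ≤ δ) (hf : Differentiable ℝ f) (hg : Differentiable ℝ g)
    (hf'g : Integrable (fun x => fderiv ℝ f x v * g x) μ)
    (hfg' : Integrable (fun x => f x * fderiv ℝ g x v) μ)
    (hfg : Integrable (fun x => f x * g x * rho x ^ (-(1 / 2) : ℝ)) μ) :
    ∫ x, cutoff δ x * (f x * fderiv ℝ g x v) ∂μ =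
      -∫ x, (cutoff δ x * (fderiv ℝ f x v * g x) +
        fderiv ℝ (cutoff δ) x v * (f x * g x)) ∂μ := by
  have hδ' : 0 < δ := one_pos.trans_le hδ
  have hχ := differentiable_cutoff (E := E) hδ'
  have hχm := hχ.continuous.aestronglyMeasurable (μ := μ)
  have hχ1 : ∀ᵐ x ∂μ, ‖cutoff δ x‖ ≤ 1 := ae_of_all _ (norm_cutoff_le_one hδ')
  have fderiv_cutoff_mul : ∀ x, fderiv ℝ (fun y => cutoff δ y * f y) x v =
      cutoff δ x * fderiv ℝ f x v + fderiv ℝ (cutoff δ) x v * f x := fun x => by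
    rw [fderiv_fun_mul (hχ x) (hf x)]
    simp only [add_apply, smul_apply, smul_eq_mul]
    ring
  have hχ'fg : Integrable (fun x => fderiv ℝ (cutoff δ) x v * (f x * g x)) μ := by
    refine IsBigO.integrable ((measurable_fderiv_apply_const ℝ _ v).aestronglyMeasurable.mul
      (hf.continuous.mul hg.continuous).aestronglyMeasurable) ?_ hfg
    refine (((IsBigO.of_bound (2 * ‖v‖) (Eventually.of_forall fun x => ?_)).mul
      (isBigO_refl (fun x => f x * g x) ⊤)).congr_right fun x => mul_comm _ _)
    rw [norm_of_nonneg (rho_rpow_pos _ x).le]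
    exact norm_fderiv_cutoff_apply_le hδ x v
  have hχfg : Integrable (fun x => cutoff δ x * f x * g x) μ := by
    refine IsBigO.integrable
      ((hχ.continuous.mul hf.continuous).mul hg.continuous).aestronglyMeasurable ?_ hfg
    exact (((isBigO_cutoff hδ').mul (isBigO_refl (fun x => f x * g x) ⊤)).congr
      (fun x => (mul_assoc _ _ _).symm) fun x => mul_comm _ _)
  have parts := integral_mul_fderiv_eq_neg_fderiv_mul_of_integrable (μ := μ)
    (f := fun y => cutoff δ y * f y) (g := g) (v := v)
    (((hf'g.bdd_mul hχm hχ1).add hχ'fg).congr (ae_of_all _ fun x => by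
      simp only [Pi.add_apply, fderiv_cutoff_mul]; ring))
    ((hfg'.bdd_mul hχm hχ1).congr (ae_of_all _ fun x => by ring))
    hχfg (fun x _ => (hχ x).mul (hf x)) fun x _ => hg x
  simp only [fderiv_cutoff_mul] at parts
  simp only [← mul_assoc, parts]
  congr 2 with x
  ring

/-- Unlike in Mathlib's `integral_mul_fderiv_eq_neg_fderiv_mul_of_integrable`, the product `f g`
need not be integrable: the derivative of the cutoff supplies the factor `(1 + |x|²)^{-1/2}`. -/
lemma integral_mul_fderiv_eq_neg_of_integrable_mul_rho (hf : Differentiable ℝ f)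
    (hg : Differentiable ℝ g)
    (hf'g : Integrable (fun x => fderiv ℝ f x v * g x) μ)
    (hfg' : Integrable (fun x => f x * fderiv ℝ g x v) μ)
    (hfg : Integrable (fun x => f x * g x * rho x ^ (-(1 / 2) : ℝ)) μ) :
    ∫ x, f x * fderiv ℝ g x v ∂μ = -∫ x, fderiv ℝ f x v * g x ∂μ := by
  have hχm : ∀ δ ≥ 1, AEStronglyMeasurable (cutoff (E := E) δ) μ := fun δ hδ =>
    (differentiable_cutoff (one_pos.trans_le hδ)).continuous.aestronglyMeasurable
  have hfgm := (hf.continuous.mul hg.continuous).aestronglyMeasurable (μ := μ)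
  have cutoff_mul_le : ∀ δ ≥ 1, ∀ (t : ℝ) (x : E), ‖cutoff δ x * t‖ ≤ ‖t‖ := fun δ hδ t x => by
    rw [norm_mul]
    exact mul_le_of_le_one_left (norm_nonneg t) (norm_cutoff_le_one (one_pos.trans_le hδ) x)
  have tendsto_left : Tendsto (fun δ => ∫ x, cutoff δ x * (f x * fderiv ℝ g x v) ∂μ) atTop
      (𝓝 (∫ x, f x * fderiv ℝ g x v ∂μ)) := by
    refine tendsto_integral_filter_of_dominated_convergence _
      ((eventually_ge_atTop 1).mono fun δ hδ => (hχm δ hδ).mul hfg'.1)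
      ((eventually_ge_atTop 1).mono fun δ hδ => ae_of_all _ fun x => cutoff_mul_le δ hδ _ x)
      hfg'.norm (ae_of_all _ fun x => ?_)
    simpa using (tendsto_cutoff_atTop x).mul_const (f x * fderiv ℝ g x v)
  have tendsto_right : Tendsto (fun δ => ∫ x, (cutoff δ x * (fderiv ℝ f x v * g x) +
      fderiv ℝ (cutoff δ) x v * (f x * g x)) ∂μ) atTop (𝓝 (∫ x, fderiv ℝ f x v * g x ∂μ)) := by
    refine tendsto_integral_filter_of_dominated_convergence
      (fun x => ‖fderiv ℝ f x v * g x‖ + 2 * ‖v‖ * ‖f x * g x * rho x ^ (-(1 / 2) : ℝ)‖)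
      ((eventually_ge_atTop 1).mono fun δ hδ => ((hχm δ hδ).mul hf'g.1).add
        ((measurable_fderiv_apply_const ℝ _ v).aestronglyMeasurable.mul hfgm))
      ((eventually_ge_atTop 1).mono fun δ hδ => ae_of_all _ fun x =>
        (norm_add_le _ _).trans (add_le_add (cutoff_mul_le δ hδ _ x) ?_))
      (hf'g.norm.add (hfg.norm.const_mul _)) (ae_of_all _ fun x => ?_)
    · rw [norm_mul, norm_mul _ (rho x ^ _), norm_of_nonneg (rho_rpow_pos _ x).le,
        mul_comm ‖f x * g x‖, ← mul_assoc]
      gcongr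
      exact norm_fderiv_cutoff_apply_le hδ x v
    · simpa using ((tendsto_cutoff_atTop x).mul_const (fderiv ℝ f x v * g x)).add
        ((tendsto_fderiv_cutoff_apply_atTop x v).mul_const (f x * g x))
  exact tendsto_nhds_unique_of_eventuallyEq tendsto_left tendsto_right.neg
    ((eventually_ge_atTop 1).mono fun δ hδ =>
      integral_cutoff_mul_fderiv hδ hf hg hf'g hfg' hfg)

end Cutoff

section PartialDeriv

variable {d : ℕ}

/-- The partial derivative `∂f/∂x_i`, with value `0` where `f` is not differentiable. -/
def partialDeriv (i : Fin d) (f : EuclideanSpace ℝ (Fin d) → ℝ) (x : EuclideanSpace ℝ (Fin d)) :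
    ℝ :=
  fderiv ℝ f x (EuclideanSpace.single i 1)

lemma measurable_partialDeriv (i : Fin d) (f : EuclideanSpace ℝ (Fin d) → ℝ) :
    Measurable (partialDeriv i f) :=
  measurable_fderiv_apply_const ℝ f _

section Rules

variable {f g : EuclideanSpace ℝ (Fin d) → ℝ} (i : Fin d)

lemma partialDeriv_add (hf : Differentiable ℝ f) (hg : Differentiable ℝ g) :
    partialDeriv i (fun y => f y + g y) = fun x => partialDeriv i f x + partialDeriv i g x := by
  ext x
  simp only [partialDeriv, fderiv_fun_add (hf x) (hg x), add_apply]

lemma partialDeriv_const_mul (c : ℝ) (hf : Differentiable ℝ f) :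
    partialDeriv i (fun y => c * f y) = fun x => c * partialDeriv i f x := by
  ext x
  simp only [partialDeriv, fderiv_const_mul (hf x), smul_apply, smul_eq_mul]

lemma partialDeriv_mul (hf : Differentiable ℝ f) (hg : Differentiable ℝ g) :
    partialDeriv i (fun y => f y * g y) =
      fun x => f x * partialDeriv i g x + partialDeriv i f x * g x := by
  ext x
  simp only [partialDeriv, fderiv_fun_mul (hf x) (hg x), add_apply, smul_apply, smul_eq_mul,
    mul_comm (g x)]

end Rules

lemma differentiable_coord_sub (i : Fin d) (c : ℝ) :
    Differentiable ℝ fun y : EuclideanSpace ℝ (Fin d) => y i - c :=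
  (EuclideanSpace.proj i : EuclideanSpace ℝ (Fin d) →L[ℝ] ℝ).differentiable.sub_const c

lemma partialDeriv_coord_sub (i j : Fin d) (c : ℝ) :
    partialDeriv i (fun y => y j - c) = fun _ => if j = i then 1 else 0 := by
  ext x
  have hder : HasFDerivAt (fun y : EuclideanSpace ℝ (Fin d) => y j - c)
      (EuclideanSpace.proj j : EuclideanSpace ℝ (Fin d) →L[ℝ] ℝ) x :=
    (EuclideanSpace.proj j : EuclideanSpace ℝ (Fin d) →L[ℝ] ℝ).hasFDerivAt.sub_const c
  simp [partialDeriv, hder.fderiv]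

lemma differentiable_add_norm_sub_sq_rpow {a : ℝ} (ha : 0 < a) (c : EuclideanSpace ℝ (Fin d))
    (s : ℝ) : Differentiable ℝ fun y => (a + ‖y - c‖ ^ 2) ^ s := fun y =>
  (hasFDerivAt_add_norm_sub_sq_rpow ha c s y).differentiableAt

lemma partialDeriv_add_norm_sub_sq_rpow {a : ℝ} (ha : 0 < a) (c : EuclideanSpace ℝ (Fin d))
    (s : ℝ) (i : Fin d) :
    partialDeriv i (fun y => (a + ‖y - c‖ ^ 2) ^ s) =
      fun x => 2 * s * ((x i - c i) * (a + ‖x - c‖ ^ 2) ^ (s - 1)) := by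
  ext x
  simp only [partialDeriv, (hasFDerivAt_add_norm_sub_sq_rpow ha c s x).fderiv, smul_apply,
    innerSL_apply_apply, EuclideanSpace.inner_single_right, PiLp.sub_apply, smul_eq_mul,
    nsmul_eq_mul, one_mul, conj_trivial, Nat.cast_ofNat]
  ring

lemma isBigO_coord_sub (i : Fin d) (c : ℝ) :
    (fun y : EuclideanSpace ℝ (Fin d) => y i - c) =O[⊤] (rho · ^ (1 / 2 : ℝ)) := by
  refine IsBigO.sub (isBigO_of_le _ fun y => ?_) ?_
  · rw [norm_of_nonneg (rho_rpow_pos _ y).le]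
    exact (PiLp.norm_apply_le y i).trans (norm_le_rho_rpow_half y)
  · simpa using (isBigO_rho_rpow_of_le (by norm_num : (0 : ℝ) ≤ 1 / 2)).const_mul_left c

lemma integrable_rho_rpow_euclidean {a : ℝ} (ha : a < -((d : ℝ) / 2)) :
    Integrable fun x : EuclideanSpace ℝ (Fin d) => rho x ^ a :=
  integrable_rho_rpow (by rwa [finrank_euclideanSpace_fin])

end PartialDeriv

section DecayingPotential

variable {d : ℕ} {s q s' q' : EuclideanSpace ℝ (Fin d) → ℝ}

/-- `q` is a classical solution of `-Δq = s`, where `q`, its first and second derivatives and the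
source `s` decay like those of the Aubin–Talenti function. -/
structure DecayingPotential (s q : EuclideanSpace ℝ (Fin d) → ℝ) : Prop where
  differentiable : Differentiable ℝ q
  differentiable_partialDeriv (i : Fin d) : Differentiable ℝ (partialDeriv i q)
  isBigO : q =O[⊤] (rho · ^ (-(((d : ℝ) - 2) / 2)))
  isBigO_partialDeriv (i : Fin d) : partialDeriv i q =O[⊤] (rho · ^ (-(((d : ℝ) - 1) / 2)))
  isBigO_partialDeriv_partialDeriv (i : Fin d) :
    partialDeriv i (partialDeriv i q) =O[⊤] (rho · ^ (-((d : ℝ) / 2)))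
  continuous_source : Continuous s
  isBigO_source : s =O[⊤] (rho · ^ (-(((d : ℝ) + 2) / 2)))
  neg_laplacian_eq (x : EuclideanSpace ℝ (Fin d)) :
    -∑ i, partialDeriv i (partialDeriv i q) x = s x

namespace DecayingPotential

lemma add (h : DecayingPotential s q) (h' : DecayingPotential s' q') :
    DecayingPotential (fun x => s x + s' x) (fun x => q x + q' x) := by
  have first : ∀ i, partialDeriv i (fun x => q x + q' x) =
      fun x => partialDeriv i q x + partialDeriv i q' x :=
    fun i => partialDeriv_add i h.differentiable h'.differentiable
  have second : ∀ i, partialDeriv i (partialDeriv i fun x => q x + q' x) =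
      fun x => partialDeriv i (partialDeriv i q) x + partialDeriv i (partialDeriv i q') x :=
    fun i => first i ▸
      partialDeriv_add i (h.differentiable_partialDeriv i) (h'.differentiable_partialDeriv i)
  exact
    { differentiable := h.differentiable.add h'.differentiable
      differentiable_partialDeriv := fun i => first i ▸
        (h.differentiable_partialDeriv i).add (h'.differentiable_partialDeriv i)
      isBigO := h.isBigO.add h'.isBigO
      isBigO_partialDeriv := fun i => first i ▸
        (h.isBigO_partialDeriv i).add (h'.isBigO_partialDeriv i)
      isBigO_partialDeriv_partialDeriv := fun i => second i ▸
        (h.isBigO_partialDeriv_partialDeriv i).add (h'.isBigO_partialDeriv_partialDeriv i)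
      continuous_source := h.continuous_source.add h'.continuous_source
      isBigO_source := h.isBigO_source.add h'.isBigO_source
      neg_laplacian_eq := fun x => by
        simp only [second, Finset.sum_add_distrib, neg_add, h.neg_laplacian_eq,
          h'.neg_laplacian_eq] }

lemma const_mul (h : DecayingPotential s q) (c : ℝ) :
    DecayingPotential (fun x => c * s x) (fun x => c * q x) := by
  have first : ∀ i, partialDeriv i (fun x => c * q x) = fun x => c * partialDeriv i q x :=
    fun i => partialDeriv_const_mul i c h.differentiable
  have second : ∀ i, partialDeriv i (partialDeriv i fun x => c * q x) =
      fun x => c * partialDeriv i (partialDeriv i q) x :=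
    fun i => first i ▸ partialDeriv_const_mul i c (h.differentiable_partialDeriv i)
  exact
    { differentiable := h.differentiable.const_mul c
      differentiable_partialDeriv := fun i => first i ▸
        (h.differentiable_partialDeriv i).const_mul c
      isBigO := h.isBigO.const_mul_left c
      isBigO_partialDeriv := fun i => first i ▸ (h.isBigO_partialDeriv i).const_mul_left c
      isBigO_partialDeriv_partialDeriv := fun i => second i ▸
        (h.isBigO_partialDeriv_partialDeriv i).const_mul_left c
      continuous_source := h.continuous_source.const_mul c
      isBigO_source := h.isBigO_source.const_mul_left c
      neg_laplacian_eq := fun x => by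
        simp only [second, ← Finset.mul_sum, ← mul_neg, h.neg_laplacian_eq] }

lemma integral_mul_source (h : DecayingPotential s q) {f : EuclideanSpace ℝ (Fin d) → ℝ}
    (hf : Differentiable ℝ f) (hf0 : Integrable fun x => f x * rho x ^ (-((d : ℝ) / 2)))
    (hf1 : ∀ i, Integrable fun x => partialDeriv i f x * partialDeriv i q x) :
    ∫ x, f x * s x = ∑ i, ∫ x, partialDeriv i f x * partialDeriv i q x := by
  have hfm := hf.continuous.aestronglyMeasurable (μ := volume)
  have int_second : ∀ i, Integrable fun x => f x * partialDeriv i (partialDeriv i q) x := fun i =>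
    IsBigO.integrable (hfm.mul (measurable_partialDeriv i _).aestronglyMeasurable)
      ((isBigO_refl f ⊤).mul (h.isBigO_partialDeriv_partialDeriv i)) hf0
  have int_first : ∀ i, Integrable fun x =>
      f x * partialDeriv i q x * rho x ^ (-(1 / 2) : ℝ) := fun i => by
    refine IsBigO.integrable ((hfm.mul (measurable_partialDeriv i _).aestronglyMeasurable).mul
      (continuous_rho_rpow _).aestronglyMeasurable) ?_ hf0
    simpa only [mul_assoc] using (isBigO_refl f ⊤).mul (isBigO_rho_rpow_mul
      (h.isBigO_partialDeriv i) (isBigO_refl (rho · ^ (-(1 / 2) : ℝ)) ⊤) (by linarith))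
  simp only [← h.neg_laplacian_eq, mul_neg, Finset.mul_sum]
  rw [integral_neg, integral_finsetSum _ fun i _ => int_second i, ← Finset.sum_neg_distrib]
  refine Finset.sum_congr rfl fun i _ => ?_
  rw [neg_eq_iff_eq_neg]
  exact integral_mul_fderiv_eq_neg_of_integrable_mul_rho hf (h.differentiable_partialDeriv i)
    (hf1 i) (int_second i) (int_first i)

lemma integrable_mul_rho_rpow (hd : 3 ≤ d) (h : DecayingPotential s q) :
    Integrable fun x => q x * rho x ^ (-((d : ℝ) / 2)) := by
  have hd' : (3 : ℝ) ≤ d := mod_cast hd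
  refine IsBigO.integrable
    (h.differentiable.continuous.mul (continuous_rho_rpow _)).aestronglyMeasurable
    (isBigO_rho_rpow_mul h.isBigO (isBigO_refl _ ⊤) le_rfl)
    (integrable_rho_rpow_euclidean (by linarith))

lemma integrable_partialDeriv_mul (hd : 3 ≤ d) (h : DecayingPotential s q)
    (h' : DecayingPotential s' q') (i : Fin d) :
    Integrable fun x => partialDeriv i q x * partialDeriv i q' x := by
  have hd' : (3 : ℝ) ≤ d := mod_cast hd
  exact IsBigO.integrable
    ((measurable_partialDeriv i _).mul (measurable_partialDeriv i _)).aestronglyMeasurable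
    (isBigO_rho_rpow_mul (h.isBigO_partialDeriv i) (h'.isBigO_partialDeriv i) le_rfl)
    (integrable_rho_rpow_euclidean (by linarith))

lemma integral_mul_source_eq_dirichlet (hd : 3 ≤ d) (h : DecayingPotential s q)
    (h' : DecayingPotential s' q') :
    ∫ x, q' x * s x = ∑ i, ∫ x, partialDeriv i q' x * partialDeriv i q x :=
  h.integral_mul_source h'.differentiable (h'.integrable_mul_rho_rpow hd)
    fun i => h'.integrable_partialDeriv_mul hd h i

lemma integral_mul_source_comm (hd : 3 ≤ d) (h : DecayingPotential s q)
    (h' : DecayingPotential s' q') : ∫ x, q' x * s x = ∫ x, q x * s' x := by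
  rw [h.integral_mul_source_eq_dirichlet hd h', h'.integral_mul_source_eq_dirichlet hd h]
  simp only [mul_comm]

end DecayingPotential

end DecayingPotential

section GreenFunction

variable {d : ℕ}

/-- The Green function `|y - c|^{2-d}` (up to its constant) with its singularity smoothed out. -/
def regGreen (d : ℕ) (a : ℝ) (c y : EuclideanSpace ℝ (Fin d)) : ℝ :=
  (a + ‖y - c‖ ^ 2) ^ (-(((d : ℝ) - 2) / 2))

lemma partialDeriv_regGreen {a : ℝ} (ha : 0 < a) (c : EuclideanSpace ℝ (Fin d)) (i : Fin d) :
    partialDeriv i (regGreen d a c) =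
      fun y => -((d : ℝ) - 2) * ((y i - c i) * (a + ‖y - c‖ ^ 2) ^ (-((d : ℝ) / 2))) := by
  rw [show regGreen d a c = fun y => (a + ‖y - c‖ ^ 2) ^ (-(((d : ℝ) - 2) / 2)) from rfl,
    partialDeriv_add_norm_sub_sq_rpow ha, show -(((d : ℝ) - 2) / 2) - 1 = -((d : ℝ) / 2) by ring]
  ext y
  ring

lemma partialDeriv_partialDeriv_regGreen {a : ℝ} (ha : 0 < a) (c : EuclideanSpace ℝ (Fin d))
    (i : Fin d) :
    partialDeriv i (partialDeriv i (regGreen d a c)) = fun y => -((d : ℝ) - 2) *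
      ((a + ‖y - c‖ ^ 2) ^ (-((d : ℝ) / 2)) -
        d * ((y i - c i) * ((y i - c i) * (a + ‖y - c‖ ^ 2) ^ (-(((d : ℝ) + 2) / 2))))) := by
  have hcoord := differentiable_coord_sub i (c i)
  have hpow := differentiable_add_norm_sub_sq_rpow ha c (-((d : ℝ) / 2))
  rw [partialDeriv_regGreen ha, partialDeriv_const_mul i _ (hcoord.fun_mul hpow),
    partialDeriv_mul i hcoord hpow, partialDeriv_coord_sub, partialDeriv_add_norm_sub_sq_rpow ha,
    show -((d : ℝ) / 2) - 1 = -(((d : ℝ) + 2) / 2) by ring]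
  ext y
  rw [if_pos rfl]
  ring

lemma neg_laplacian_regGreen {a : ℝ} (ha : 0 < a) (c y : EuclideanSpace ℝ (Fin d)) :
    -∑ i, partialDeriv i (partialDeriv i (regGreen d a c)) y =
      d * ((d : ℝ) - 2) * a * (a + ‖y - c‖ ^ 2) ^ (-(((d : ℝ) + 2) / 2)) := by
  have sum_coord : ∑ i : Fin d, (y i - c i) * ((y i - c i) *
      (a + ‖y - c‖ ^ 2) ^ (-(((d : ℝ) + 2) / 2))) =
      ‖y - c‖ ^ 2 * (a + ‖y - c‖ ^ 2) ^ (-(((d : ℝ) + 2) / 2)) := by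
    rw [EuclideanSpace.real_norm_sq_eq (y - c), Finset.sum_mul]
    exact Finset.sum_congr rfl fun i _ => by rw [PiLp.sub_apply]; ring
  have rpow_split : (a + ‖y - c‖ ^ 2) ^ (-((d : ℝ) / 2)) =
      (a + ‖y - c‖ ^ 2) * (a + ‖y - c‖ ^ 2) ^ (-(((d : ℝ) + 2) / 2)) := by
    have hA : 0 < a + ‖y - c‖ ^ 2 := by positivity
    rw [show -((d : ℝ) / 2) = 1 + -(((d : ℝ) + 2) / 2) by ring, rpow_add hA, rpow_one]
  simp only [partialDeriv_partialDeriv_regGreen ha, ← Finset.mul_sum, Finset.sum_sub_distrib,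
    sum_coord, Finset.sum_const, Finset.card_univ, Fintype.card_fin, nsmul_eq_mul, rpow_split]
  ring

lemma decayingPotential_regGreen (hd : 2 ≤ d) {a : ℝ} (ha : 0 < a)
    (c : EuclideanSpace ℝ (Fin d)) :
    DecayingPotential
      (fun y => d * ((d : ℝ) - 2) * a * (a + ‖y - c‖ ^ 2) ^ (-(((d : ℝ) + 2) / 2)))
      (regGreen d a c) where
  differentiable := differentiable_add_norm_sub_sq_rpow ha c _
  differentiable_partialDeriv i := partialDeriv_regGreen ha c i ▸
    ((differentiable_coord_sub i _).mul (differentiable_add_norm_sub_sq_rpow ha c _)).const_mul _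
  isBigO := isBigO_add_norm_sub_sq_rpow ha
    (by have : (2 : ℝ) ≤ d := mod_cast hd; linarith) c
  isBigO_partialDeriv i := partialDeriv_regGreen ha c i ▸
    (isBigO_rho_rpow_mul (isBigO_coord_sub i _)
      (isBigO_add_norm_sub_sq_rpow ha (by simp only [neg_nonpos]; positivity) c)
      (by linarith)).const_mul_left _
  isBigO_partialDeriv_partialDeriv i := partialDeriv_partialDeriv_regGreen ha c i ▸
    ((isBigO_add_norm_sub_sq_rpow ha (by simp only [neg_nonpos]; positivity) c).sub
      ((isBigO_rho_rpow_mul (isBigO_coord_sub i _)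
        (isBigO_rho_rpow_mul (isBigO_coord_sub i _)
          (isBigO_add_norm_sub_sq_rpow ha (by simp only [neg_nonpos]; positivity) c)
        le_rfl) (by linarith)).const_mul_left _)).const_mul_left _
  continuous_source := (differentiable_add_norm_sub_sq_rpow ha c _).continuous.const_mul _
  isBigO_source := (isBigO_add_norm_sub_sq_rpow ha
    (by simp only [neg_nonpos]; positivity) c).const_mul_left _
  neg_laplacian_eq := neg_laplacian_regGreen ha c

end GreenFunction

section GreenKernel

variable {d : ℕ}

lemma integral_Ioi_pow_mul_one_add_sq_rpow (hd : 0 < d) :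
    ∫ r in Set.Ioi (0 : ℝ), r ^ (d - 1) * (1 + r ^ 2) ^ (-(((d : ℝ) + 2) / 2)) = 1 / (d : ℝ) := by
  have : (0 : ℝ) < d := mod_cast hd
  have antideriv : ∀ r ∈ Set.Ici (0 : ℝ), HasDerivAt
      (fun r : ℝ => 1 / (d : ℝ) * (r ^ d * (1 + r ^ 2) ^ (-((d : ℝ) / 2))))
      (r ^ (d - 1) * (1 + r ^ 2) ^ (-(((d : ℝ) + 2) / 2))) r := fun r _ => by
    have hA : 0 < 1 + r ^ 2 := by positivity
    have hbase : HasDerivAt (fun r : ℝ => 1 + r ^ 2) (2 * r) r := by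
      simpa using (hasDerivAt_pow 2 r).const_add 1
    refine (((hasDerivAt_pow d r).mul
      (hbase.rpow_const (p := -((d : ℝ) / 2)) (Or.inl hA.ne'))).const_mul _).congr_deriv ?_
    rw [show -((d : ℝ) / 2) - 1 = -(((d : ℝ) + 2) / 2) by ring,
      show -((d : ℝ) / 2) = 1 + -(((d : ℝ) + 2) / 2) by ring, rpow_add hA, rpow_one,
      ← pow_sub_one_mul hd.ne' r]
    field_simp
    ring
  have limit : Tendsto (fun r : ℝ => 1 / (d : ℝ) * (r ^ d * (1 + r ^ 2) ^ (-((d : ℝ) / 2))))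
      atTop (𝓝 (1 / (d : ℝ) * 1)) := by
    have base : Tendsto (fun r : ℝ => (1 + (r ^ 2)⁻¹) ^ (-((d : ℝ) / 2))) atTop (𝓝 1) := by
      simpa using ((tendsto_inv_atTop_zero.comp (tendsto_pow_atTop two_ne_zero)).const_add
        (1 : ℝ)).rpow_const (p := -((d : ℝ) / 2)) (Or.inl (by norm_num))
    refine (base.congr' ?_).const_mul _
    filter_upwards [eventually_gt_atTop 0] with r hr
    have hpow : (r ^ 2) ^ (-((d : ℝ) / 2)) = (r ^ d)⁻¹ := by
      rw [← rpow_natCast, ← rpow_mul hr.le, ← rpow_natCast r d, ← rpow_neg hr.le]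
      congr 1; push_cast; ring
    rw [show 1 + r ^ 2 = r ^ 2 * (1 + (r ^ 2)⁻¹) by field_simp; ring,
      mul_rpow (by positivity) (by positivity), hpow, mul_inv_cancel_left₀ (by positivity)]
  rw [integral_Ioi_of_hasDerivAt_of_nonneg' antideriv
    (fun r (hr : 0 < r) => by positivity) limit]
  simp [hd.ne']

lemma sphereArea_eq_mul_volume_ball (hd : 0 < d) :
    sphereArea d = d * (volume (α := EuclideanSpace ℝ (Fin d))).real (Metric.ball 0 1) := by
  have : NeZero d := ⟨hd.ne'⟩
  have : 0 < Gamma ((d : ℝ) / 2) := Gamma_pos_of_pos (by positivity)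
  have hpi : √π ^ d = π ^ ((d : ℝ) / 2) := by
    rw [sqrt_eq_rpow, ← rpow_natCast, ← rpow_mul pi_pos.le]
    congr 1; ring
  rw [Measure.real, EuclideanSpace.volume_ball, sphereArea, Fintype.card_fin, hpi,
    Gamma_add_one (by positivity), ENNReal.ofReal_one, one_pow, one_mul,
    ENNReal.toReal_ofReal (by positivity)]
  field_simp

lemma sphereArea_pos (hd : 0 < d) : 0 < sphereArea d := by
  have : 0 < Gamma ((d : ℝ) / 2) := Gamma_pos_of_pos (by positivity)
  unfold sphereArea
  positivity

lemma integral_rho_rpow_eq_sphereArea_div (hd : 0 < d) :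
    ∫ z : EuclideanSpace ℝ (Fin d), rho z ^ (-(((d : ℝ) + 2) / 2)) = sphereArea d / d := by
  have : NeZero d := ⟨hd.ne'⟩
  have polar := integral_fun_norm_addHaar (volume (α := EuclideanSpace ℝ (Fin d)))
    fun r : ℝ => (1 + r ^ 2) ^ (-(((d : ℝ) + 2) / 2))
  simp only [finrank_euclideanSpace, Fintype.card_fin, smul_eq_mul, nsmul_eq_mul,
    integral_Ioi_pow_mul_one_add_sq_rpow hd] at polar
  rw [sphereArea_eq_mul_volume_ball hd]
  unfold rho
  rw [polar]
  field_simp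

lemma integral_regGreen_source_eq_integral_comp {ε : ℝ} (hε : 0 < ε)
    (x : EuclideanSpace ℝ (Fin d)) (q : EuclideanSpace ℝ (Fin d) → ℝ) :
    ∫ y, ε ^ 2 * (ε ^ 2 + ‖y - x‖ ^ 2) ^ (-(((d : ℝ) + 2) / 2)) * q y =
      ∫ z, rho z ^ (-(((d : ℝ) + 2) / 2)) * q (x + ε • z) := by
  have scaling := Measure.integral_comp_smul (volume (α := EuclideanSpace ℝ (Fin d)))
    (fun y => ε ^ 2 * (ε ^ 2 + ‖y‖ ^ 2) ^ (-(((d : ℝ) + 2) / 2)) * q (x + y)) ε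
  simp only [finrank_euclideanSpace, Fintype.card_fin, smul_eq_mul] at scaling
  rw [← integral_add_left_eq_self _ x]
  simp only [add_sub_cancel_left]
  rw [← mul_right_inj' (by positivity : |(ε ^ d)⁻¹| ≠ 0), ← scaling, abs_of_pos (by positivity),
    ← integral_const_mul]
  refine integral_congr_ae (Eventually.of_forall fun z => ?_)
  have hbase : ε ^ 2 + ‖ε • z‖ ^ 2 = ε ^ 2 * rho z := by
    rw [norm_smul, norm_of_nonneg hε.le, rho]; ring
  have hpow : (ε ^ 2) ^ (-(((d : ℝ) + 2) / 2)) = (ε ^ d)⁻¹ * (ε ^ 2)⁻¹ := by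
    rw [← mul_inv, ← pow_add, ← rpow_natCast, ← rpow_mul hε.le, ← rpow_natCast, ← rpow_neg hε.le]
    congr 1; push_cast; ring
  simp only [hbase, mul_rpow (sq_nonneg ε) (rho_pos z).le, hpow]
  field_simp

lemma greenKernel_nonneg (hd : 2 ≤ d) (z : EuclideanSpace ℝ (Fin d)) : 0 ≤ greenKernel d z := by
  have hd' : (0 : ℝ) ≤ d - 2 := sub_nonneg.mpr (mod_cast hd)
  have := sphereArea_pos (by lia : 0 < d)
  unfold greenKernel
  positivity

lemma measurable_greenKernel (d : ℕ) : Measurable (greenKernel d) := by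
  unfold greenKernel; fun_prop

lemma integrableOn_ball_norm_rpow_two_sub (hd : 0 < d) :
    IntegrableOn (fun z : EuclideanSpace ℝ (Fin d) => ‖z‖ ^ ((2 : ℝ) - d))
      (Metric.ball 0 1) := by
  have : NeZero d := ⟨hd.ne'⟩
  have hloc := locallyIntegrable_of_norm_le_rpow (μ := volume (α := EuclideanSpace ℝ (Fin d)))
    (f := fun z : EuclideanSpace ℝ (Fin d) => ‖z‖ ^ ((2 : ℝ) - d)) (C := 1) (α := (d : ℝ) - 2)
    (by simpa using Nat.one_le_iff_ne_zero.mpr hd.ne') (by simp)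
    (Eventually.of_forall fun z => by
      rw [norm_of_nonneg (by positivity), one_mul, neg_sub])
    (Measurable.aestronglyMeasurable (by fun_prop))
  exact (hloc.integrableOn_isCompact (isCompact_closedBall 0 1)).mono_set
    Metric.ball_subset_closedBall

lemma integrable_norm_sub_rpow_mul_rho_rpow (hd : 2 ≤ d) (x : EuclideanSpace ℝ (Fin d)) :
    Integrable fun y => ‖x - y‖ ^ ((2 : ℝ) - d) * rho y ^ (-(((d : ℝ) + 2) / 2)) := by
  have hd' : (2 : ℝ) ≤ d := mod_cast hd
  have near : Integrable fun y => (Metric.ball (0 : EuclideanSpace ℝ (Fin d)) 1).indicator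
      (fun z => ‖z‖ ^ ((2 : ℝ) - d)) (x - y) :=
    ((integrable_indicator_iff Metric.isOpen_ball.measurableSet).mpr
      (integrableOn_ball_norm_rpow_two_sub (by lia))).comp_sub_left x
  have far : Integrable fun y : EuclideanSpace ℝ (Fin d) => rho y ^ (-(((d : ℝ) + 2) / 2)) :=
    integrable_rho_rpow_euclidean (by linarith)
  refine (near.add far).mono'
    (Measurable.mul (by fun_prop) (continuous_rho_rpow _).measurable).aestronglyMeasurable
    (Eventually.of_forall fun y => ?_)
  have hρ := rho_rpow_pos (-(((d : ℝ) + 2) / 2)) y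
  have hnorm : 0 ≤ ‖x - y‖ ^ ((2 : ℝ) - d) := by positivity
  rw [norm_of_nonneg (by positivity), Pi.add_apply]
  by_cases hxy : x - y ∈ Metric.ball (0 : EuclideanSpace ℝ (Fin d)) 1
  · rw [Set.indicator_of_mem hxy]
    nlinarith [rho_rpow_le_one (by linarith : -(((d : ℝ) + 2) / 2) ≤ 0) y]
  · rw [Set.indicator_of_notMem hxy, zero_add]
    exact mul_le_of_le_one_left hρ.le
      (rpow_le_one_of_one_le_of_nonpos (by simpa using hxy) (by linarith))

namespace DecayingPotential

variable {s q : EuclideanSpace ℝ (Fin d) → ℝ}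

lemma integrable_norm_sub_rpow_mul_source (hd : 2 ≤ d) (h : DecayingPotential s q)
    (x : EuclideanSpace ℝ (Fin d)) : Integrable fun y => ‖x - y‖ ^ ((2 : ℝ) - d) * s y :=
  IsBigO.integrable
    (Measurable.mul (by fun_prop) h.continuous_source.measurable).aestronglyMeasurable
    ((isBigO_refl _ ⊤).mul h.isBigO_source) (integrable_norm_sub_rpow_mul_rho_rpow hd x)

lemma tendsto_integral_regGreen_mul_source (hd : 2 ≤ d) (h : DecayingPotential s q)
    (x : EuclideanSpace ℝ (Fin d)) :
    Tendsto (fun ε : ℝ => ∫ y, regGreen d (ε ^ 2) x y * s y) (𝓝[>] 0)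
      (𝓝 (∫ y, ‖x - y‖ ^ ((2 : ℝ) - d) * s y)) := by
  have hd' : (2 : ℝ) ≤ d := mod_cast hd
  have kernel_eq (y : EuclideanSpace ℝ (Fin d)) :
      ‖x - y‖ ^ ((2 : ℝ) - d) = regGreen d 0 x y := by
    rw [regGreen, norm_sub_rev, zero_add, ← rpow_natCast, ← rpow_mul (norm_nonneg _)]
    congr 1; push_cast; ring
  have ae_ne : ∀ᵐ y : EuclideanSpace ℝ (Fin d), y ≠ x := by
    have : NeZero d := ⟨by lia⟩
    simp [ae_iff]
  refine tendsto_integral_filter_of_dominated_convergence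
    (fun y => ‖‖x - y‖ ^ ((2 : ℝ) - d) * s y‖) ?_ ?_
    (h.integrable_norm_sub_rpow_mul_source hd x).norm ?_
  · filter_upwards [self_mem_nhdsWithin] with ε hε
    have hε2 : 0 < ε ^ 2 := pow_pos hε 2
    exact ((decayingPotential_regGreen hd hε2 x).differentiable.continuous.mul
      h.continuous_source).aestronglyMeasurable
  · refine Eventually.of_forall fun ε => ?_
    filter_upwards [ae_ne] with y hy
    have hpos : 0 < ‖y - x‖ := norm_pos_iff.mpr (sub_ne_zero.mpr hy)
    rw [norm_mul, norm_mul, kernel_eq, regGreen, regGreen]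
    gcongr ?_ * _
    rw [norm_of_nonneg (by positivity), norm_of_nonneg (by positivity)]
    exact rpow_le_rpow_of_nonpos (by positivity) (by gcongr; positivity) (by linarith)
  · filter_upwards [ae_ne] with y hy
    have hpos : 0 < ‖y - x‖ := norm_pos_iff.mpr (sub_ne_zero.mpr hy)
    have hsq : Tendsto (fun ε : ℝ => ε ^ 2 + ‖y - x‖ ^ 2) (𝓝[>] 0) (𝓝 (0 + ‖y - x‖ ^ 2)) :=
      tendsto_nhdsWithin_of_tendsto_nhds
        (Continuous.tendsto' (by fun_prop) _ _ (by simp))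
    rw [kernel_eq]
    exact (hsq.rpow_const (Or.inl (by positivity))).mul_const _

lemma tendsto_integral_rho_rpow_mul_comp (hd : 2 ≤ d) (h : DecayingPotential s q)
    (x : EuclideanSpace ℝ (Fin d)) :
    Tendsto (fun ε : ℝ => ∫ z, rho z ^ (-(((d : ℝ) + 2) / 2)) * q (x + ε • z)) (𝓝[>] 0)
      (𝓝 (sphereArea d / d * q x)) := by
  have hd' : (2 : ℝ) ≤ d := mod_cast hd
  have hq := h.differentiable.continuous
  obtain ⟨C, hC⟩ := exists_forall_abs_le_of_isBigO_rho_rpow (by linarith) h.isBigO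
  rw [← integral_rho_rpow_eq_sphereArea_div (by lia), ← integral_mul_const]
  refine tendsto_integral_filter_of_dominated_convergence
    (fun z => rho z ^ (-(((d : ℝ) + 2) / 2)) * C) ?_ ?_
    ((integrable_rho_rpow_euclidean (by linarith)).mul_const C) ?_
  · exact Eventually.of_forall fun ε =>
      ((continuous_rho_rpow _).mul (by fun_prop)).aestronglyMeasurable
  · refine Eventually.of_forall fun ε => Eventually.of_forall fun z => ?_
    rw [norm_mul, norm_of_nonneg (rho_rpow_pos _ z).le]
    exact mul_le_mul_of_nonneg_left (hC _) (rho_rpow_pos _ z).le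
  · refine Eventually.of_forall fun z => Tendsto.const_mul _ ?_
    exact tendsto_nhdsWithin_of_tendsto_nhds (Continuous.tendsto' (by fun_prop) _ _ (by simp))

/-- Green's identity against the regularised Green function, followed by `ε → 0` on both sides. -/
lemma integral_greenKernel_mul_source (hd : 3 ≤ d) (h : DecayingPotential s q)
    (x : EuclideanSpace ℝ (Fin d)) : ∫ y, greenKernel d (x - y) * s y = q x := by
  have hd2 : (0 : ℝ) < d - 2 := sub_pos.mpr (mod_cast hd)
  have hS := sphereArea_pos (by lia : 0 < d)
  have green_identity : ∀ ε : ℝ, 0 < ε → ∫ y, regGreen d (ε ^ 2) x y * s y =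
      d * ((d : ℝ) - 2) * ∫ z, rho z ^ (-(((d : ℝ) + 2) / 2)) * q (x + ε • z) := fun ε hε => by
    rw [h.integral_mul_source_comm hd (decayingPotential_regGreen (by lia) (pow_pos hε 2) x),
      ← integral_regGreen_source_eq_integral_comp hε, ← integral_const_mul]
    exact integral_congr_ae (Eventually.of_forall fun y => by ring)
  have limit : ∫ y, ‖x - y‖ ^ ((2 : ℝ) - d) * s y =
      d * ((d : ℝ) - 2) * (sphereArea d / d * q x) := by
    refine tendsto_nhds_unique (h.tendsto_integral_regGreen_mul_source (by lia) x)
      (((h.tendsto_integral_rho_rpow_mul_comp (by lia) x).const_mul _).congr' ?_)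
    filter_upwards [self_mem_nhdsWithin] with ε hε using (green_identity ε hε).symm
  simp only [greenKernel, div_mul_eq_mul_div, integral_div, limit]
  field_simp

end DecayingPotential

end GreenKernel

section LevelSpan

variable {M : Type*} [AddCommGroup M] [Module ℝ M]

/-- The span of the levels of index less than `n` in a family of generating sets. -/
def levelSpan (S : ℕ → Set M) (n : ℕ) : Submodule ℝ M := Submodule.span ℝ (⋃ k < n, S k)

variable {S : ℕ → Set M} {m n k : ℕ}

lemma mem_levelSpan_of_mem {x : M} (hx : x ∈ S k) (h : k < n) : x ∈ levelSpan S n :=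
  Submodule.subset_span (Set.mem_biUnion h hx)

lemma levelSpan_le {K : Submodule ℝ M} : levelSpan S n ≤ K ↔ ∀ k < n, S k ⊆ K := by
  rw [levelSpan, Submodule.span_le, Set.iUnion₂_subset_iff]

lemma levelSpan_mono : Monotone (levelSpan S) := fun _ _ h =>
  levelSpan_le.2 fun _ hk _ hx => mem_levelSpan_of_mem hx (hk.trans_le h)

lemma levelSpan_succ_le {K : Submodule ℝ M} :
    levelSpan S (n + 1) ≤ K ↔ levelSpan S n ≤ K ∧ S n ⊆ K := by
  simp only [levelSpan_le, Nat.forall_lt_succ_right]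

/-- `T` inverts, up to terms of lower level, multiplication by `l n` on the `n`-th level. Such a
`T` is upper triangular along the filtration `levelSpan S`, with diagonal entries `(l n)⁻¹`. -/
def IsLevelTriangular (T : M →ₗ[ℝ] M) (S : ℕ → Set M) (l : ℕ → ℝ) : Prop :=
  ∀ n, ∀ h ∈ S n, ∃ r ∈ levelSpan S n, T (l n • h + r) = h

namespace IsLevelTriangular

variable {T : M →ₗ[ℝ] M} {l : ℕ → ℝ}

lemma exists_map_eq (h : IsLevelTriangular T S l) (hl : ∀ n, l n ≠ 0) {x : M} (hx : x ∈ S n) :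
    ∃ r ∈ levelSpan S n, T x = (l n)⁻¹ • (x - T r) := by
  obtain ⟨r, hr, hTr⟩ := h n x hx
  rw [map_add, map_smul] at hTr
  exact ⟨r, hr, (eq_inv_smul_iff₀ (hl n)).2 (eq_sub_of_add_eq hTr)⟩

lemma map_mem (h : IsLevelTriangular T S l) (hl : ∀ n, l n ≠ 0) (n : ℕ) :
    levelSpan S n ≤ (levelSpan S n).comap T := by
  induction n with
  | zero => simp [levelSpan]
  | succ n ih =>
    have lift : levelSpan S n ≤ levelSpan S (n + 1) := levelSpan_mono n.le_succ
    refine levelSpan_succ_le.2 ⟨ih.trans (Submodule.comap_mono lift), fun x hx => ?_⟩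
    obtain ⟨r, hr, hTx⟩ := h.exists_map_eq hl hx
    rw [SetLike.mem_coe, Submodule.mem_comap, hTx]
    exact Submodule.smul_mem _ _
      (Submodule.sub_mem _ (mem_levelSpan_of_mem hx n.lt_succ_self) (lift (ih hr)))

lemma map_sub_smul_mem (h : IsLevelTriangular T S l) (hl : ∀ n, l n ≠ 0) {x : M}
    (hx : x ∈ levelSpan S (n + 1)) : T x - (l n)⁻¹ • x ∈ levelSpan S n := by
  suffices levelSpan S (n + 1) ≤ (levelSpan S n).comap (T - (l n)⁻¹ • LinearMap.id) from this hx
  refine levelSpan_succ_le.2 ⟨fun x hx => ?_, fun x hx => ?_⟩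
  · exact Submodule.sub_mem (levelSpan S n) (h.map_mem hl n hx) (Submodule.smul_mem _ _ hx)
  · obtain ⟨r, hr, hTx⟩ := h.exists_map_eq hl hx
    have shift : T x - (l n)⁻¹ • x = -((l n)⁻¹ • T r) := by
      rw [hTx, smul_sub, sub_sub_cancel_left]
    change T x - (l n)⁻¹ • x ∈ levelSpan S n
    rw [shift]
    exact Submodule.neg_mem _ (Submodule.smul_mem _ _ (h.map_mem hl n hr))

end IsLevelTriangular

end LevelSpan

section SpectralBound

open scoped InnerProductSpace

variable {H : Type*} [NormedAddCommGroup H] [InnerProductSpace ℝ H] {S : ℕ → Set H} {l : ℕ → ℝ}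

lemma inner_map_add_le_of_invariant {T : H →ₗ[ℝ] H} (hT : T.IsSymmetric) {K : Submodule ℝ H}
    (hK : ∀ x ∈ K, T x ∈ K) {p e : H} {c C : ℝ} (hp : p ∈ K) (he : e ∈ Kᗮ)
    (hTe : T e - c • e ∈ K) (hcC : c ≤ C) (hTp : ⟪T p, p⟫_ℝ ≤ C * ‖p‖ ^ 2) :
    ⟪T (p + e), p + e⟫_ℝ ≤ C * ‖p + e‖ ^ 2 := by
  have orth : ∀ v ∈ K, ⟪v, e⟫_ℝ = 0 := he
  have diag : ⟪T e, e⟫_ℝ = c * ‖e‖ ^ 2 := by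
    have := orth _ hTe
    rwa [inner_sub_left, real_inner_smul_left, real_inner_self_eq_norm_sq, sub_eq_zero] at this
  have off : ⟪T e, p⟫_ℝ = 0 := by rw [hT, real_inner_comm, orth _ (hK p hp)]
  calc ⟪T (p + e), p + e⟫_ℝ = ⟪T p, p⟫_ℝ + c * ‖e‖ ^ 2 := by
        rw [map_add, inner_add_left, inner_add_right, inner_add_right, off, orth _ (hK p hp), diag]
        ring
    _ ≤ C * ‖p‖ ^ 2 + C * ‖e‖ ^ 2 := by gcongr
    _ = C * ‖p + e‖ ^ 2 := by rw [norm_add_sq_real, orth p hp]; ring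

namespace IsLevelTriangular

lemma mem_orthogonal_of_eigenvector {T : H →ₗ[ℝ] H} (h : IsLevelTriangular T S l)
    (hT : T.IsSymmetric) {v : H} {μ : ℝ} (hv : T v = μ • v) {n : ℕ} (hμ : ∀ k < n, μ * l k ≠ 1) :
    v ∈ (levelSpan S n)ᗮ := by
  induction n with
  | zero => simp [levelSpan]
  | succ n ih =>
    have low : v ∈ (levelSpan S n)ᗮ := ih fun k hk => hμ k (hk.trans n.lt_succ_self)
    suffices levelSpan S (n + 1) ≤ (ℝ ∙ v)ᗮ from fun x hx =>
      (Submodule.mem_orthogonal_singleton_iff_inner_left.1 (this hx))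
    refine levelSpan_succ_le.2 ⟨fun x hx => ?_, fun x hx => ?_⟩
    · exact Submodule.mem_orthogonal_singleton_iff_inner_left.2 (low x hx)
    · obtain ⟨r, hr, hTr⟩ := h n x hx
      have self : ⟪x, v⟫_ℝ = μ * l n * ⟪x, v⟫_ℝ :=
        calc ⟪x, v⟫_ℝ = ⟪l n • x + r, T v⟫_ℝ := by rw [← hT, hTr]
          _ = μ * l n * ⟪x, v⟫_ℝ := by
            rw [hv, real_inner_smul_right, inner_add_left, real_inner_smul_left, low r hr]
            ring
      have zero : (1 - μ * l n) * ⟪x, v⟫_ℝ = 0 := by rw [sub_mul, ← self]; ring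
      exact Submodule.mem_orthogonal_singleton_iff_inner_left.2
        ((mul_eq_zero.1 zero).resolve_left (sub_ne_zero.2 (hμ n n.lt_succ_self).symm))

variable [CompleteSpace H] {T : H →L[ℝ] H}

lemma inner_map_self_le_of_mem_closure (h : IsLevelTriangular (T : H →ₗ[ℝ] H) S l)
    (hT : (T : H →ₗ[ℝ] H).IsSymmetric) (hl : ∀ n, 0 < l n) (hmono : Monotone l) {n N : ℕ}
    (hnN : n ≤ N) :
    ∀ p ∈ (levelSpan S N).topologicalClosure, p ∈ (levelSpan S n)ᗮ →
      ⟪T p, p⟫_ℝ ≤ (l n)⁻¹ * ‖p‖ ^ 2 := by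
  induction N, hnN using Nat.le_induction with
  | base =>
    intro p hp horth
    rw [← Submodule.orthogonal_closure] at horth
    have : p = 0 := inner_self_eq_zero.1 (horth p hp)
    simp [this]
  | succ N hnN ih =>
    intro p hp horth
    set V := (levelSpan S N).topologicalClosure
    have : CompleteSpace V := (Submodule.isClosed_topologicalClosure _).completeSpace_coe
    have proj_mem : V.starProjection p ∈ V := Submodule.starProjection_apply_mem _ _
    have rest_orth : p - V.starProjection p ∈ Vᗮ := Submodule.sub_starProjection_mem_orthogonal p
    have rest_mem : p - V.starProjection p ∈ (levelSpan S (N + 1)).topologicalClosure :=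
      Submodule.sub_mem _ hp
        (Submodule.topologicalClosure_mono (levelSpan_mono N.le_succ) proj_mem)
    have proj_orth : V.starProjection p ∈ (levelSpan S n)ᗮ := by
      have lower : p - V.starProjection p ∈ (levelSpan S n)ᗮ :=
        Submodule.orthogonal_le
          ((levelSpan_mono hnN).trans (Submodule.le_topologicalClosure _)) rest_orth
      simpa using Submodule.sub_mem _ horth lower
    have map_rest : T (p - V.starProjection p) - (l N)⁻¹ • (p - V.starProjection p) ∈ V :=
      map_mem_closure (f := fun x => T x - (l N)⁻¹ • x) (by fun_prop) rest_mem
        fun x hx => h.map_sub_smul_mem (fun k => (hl k).ne') hx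
    have map_closure : ∀ x ∈ V, T x ∈ V := fun x hx =>
      map_mem_closure (t := (levelSpan S N : Set H)) T.continuous hx
        (h.map_mem (fun k => (hl k).ne') N)
    have step := inner_map_add_le_of_invariant hT map_closure
      proj_mem rest_orth map_rest (inv_anti₀ (hl n) (hmono hnN)) (ih _ proj_mem proj_orth)
    simpa using step

/-- By density it is enough to treat `g` with finitely many levels, where one splits off one level
at a time: on the part of level `N` orthogonal to all lower levels, `T` acts as `(l N)⁻¹`. -/
theorem inner_map_self_le (h : IsLevelTriangular (T : H →ₗ[ℝ] H) S l)
    (hT : (T : H →ₗ[ℝ] H).IsSymmetric) (hl : ∀ n, 0 < l n) (hmono : Monotone l)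
    (hdense : Dense ((⨆ n, levelSpan S n : Submodule ℝ H) : Set H)) {n : ℕ} {g : H}
    (hg : g ∈ (levelSpan S n)ᗮ) : ⟪T g, g⟫_ℝ ≤ (l n)⁻¹ * ‖g‖ ^ 2 := by
  set V := (levelSpan S n).topologicalClosure
  have : CompleteSpace V := (Submodule.isClosed_topologicalClosure _).completeSpace_coe
  have all : ∀ w : H, ⟪T (w - V.starProjection w), w - V.starProjection w⟫_ℝ ≤
      (l n)⁻¹ * ‖w - V.starProjection w‖ ^ 2 := by
    refine hdense.induction (fun w hw => ?_) (isClosed_le (by fun_prop) (by fun_prop))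
    obtain ⟨N, hwN⟩ := (Submodule.mem_iSup_of_directed _ levelSpan_mono.directed_le).1 hw
    refine h.inner_map_self_le_of_mem_closure hT hl hmono (le_max_left n N) _ ?_ ?_
    · exact Submodule.sub_mem _
        (Submodule.le_topologicalClosure _ (levelSpan_mono (le_max_right n N) hwN))
        (Submodule.topologicalClosure_mono (levelSpan_mono (le_max_left n N))
          (Submodule.starProjection_apply_mem _ _))
    · rw [← Submodule.orthogonal_closure]
      exact Submodule.sub_starProjection_mem_orthogonal w
  have proj_zero : V.starProjection g = 0 := by
    rwa [Submodule.starProjection_apply_eq_zero_iff, Submodule.orthogonal_closure]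
  simpa [proj_zero] using all g

end IsLevelTriangular

end SpectralBound

section PolyEval

open MvPolynomial

variable {d : ℕ}

/-- The polynomial function on Euclidean space given by `P`. -/
def polyEval (P : MvPolynomial (Fin d) ℝ) (x : EuclideanSpace ℝ (Fin d)) : ℝ :=
  eval (fun i => x i) P

lemma polyEval_C (a : ℝ) : polyEval (d := d) (C a) = fun _ => a := by ext x; simp [polyEval]

lemma polyEval_add (P Q : MvPolynomial (Fin d) ℝ) :
    polyEval (P + Q) = fun x => polyEval P x + polyEval Q x := by ext x; simp [polyEval]

lemma polyEval_mul_X (P : MvPolynomial (Fin d) ℝ) (j : Fin d) :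
    polyEval (P * X j) = fun x => polyEval P x * (x j - 0) := by ext x; simp [polyEval]

lemma differentiable_polyEval (P : MvPolynomial (Fin d) ℝ) : Differentiable ℝ (polyEval P) := by
  induction P using MvPolynomial.induction_on with
  | C a => exact polyEval_C a ▸ differentiable_const a
  | add p q hp hq => exact polyEval_add p q ▸ hp.add hq
  | mul_X p j hp => exact polyEval_mul_X p j ▸ hp.mul (differentiable_coord_sub j 0)

lemma partialDeriv_polyEval (P : MvPolynomial (Fin d) ℝ) (i : Fin d) :
    partialDeriv i (polyEval P) = polyEval (pderiv i P) := by
  induction P using MvPolynomial.induction_on with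
  | C a =>
    ext x
    simp [polyEval_C, partialDeriv, polyEval]
  | add p q hp hq =>
    rw [polyEval_add, partialDeriv_add i (differentiable_polyEval p) (differentiable_polyEval q),
      hp, hq, map_add, polyEval_add]
  | mul_X p j hp =>
    rw [polyEval_mul_X, partialDeriv_mul i (differentiable_polyEval p)
      (differentiable_coord_sub j 0), hp, partialDeriv_coord_sub]
    ext x
    by_cases h : j = i
    · simp only [polyEval, h, pderiv_mul, pderiv_X_self, map_add, map_mul, eval_X, map_one,
        if_true]
      ring
    · simp only [polyEval, h, pderiv_mul, pderiv_X_of_ne h, map_add, map_mul, eval_X, map_zero,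
        if_false]
      ring

lemma isBigO_polyEval {P : MvPolynomial (Fin d) ℝ} {m : ℕ} (hP : P.IsHomogeneous m) :
    polyEval P =O[⊤] (rho · ^ ((m : ℝ) / 2)) := by
  have monomial_le : ∀ a ∈ P.support, (fun x : EuclideanSpace ℝ (Fin d) => ∏ i, x i ^ a i)
      =O[⊤] (rho · ^ ((m : ℝ) / 2)) := by
    refine fun a ha => isBigO_of_le _ fun x => ?_
    have degree : ∑ i, a i = m := by
      rw [← Finsupp.degree_eq_sum]
      by_contra h
      exact mem_support_iff.1 ha (hP.coeff_eq_zero h)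
    rw [norm_prod, norm_of_nonneg (rho_rpow_pos _ x).le]
    calc ∏ i, ‖x i ^ a i‖ ≤ ∏ i, (rho x ^ (1 / 2 : ℝ)) ^ a i := by
          gcongr with i
          rw [norm_pow]
          gcongr
          exact (PiLp.norm_apply_le x i).trans (norm_le_rho_rpow_half x)
      _ = rho x ^ ((m : ℝ) / 2) := by
          rw [Finset.prod_pow_eq_pow_sum, degree, ← rpow_natCast, ← rpow_mul (rho_pos x).le]
          congr 1
          ring
  have expand : polyEval P = fun x => ∑ a ∈ P.support, P.coeff a * ∏ i, x i ^ a i := by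
    ext x; exact eval_eq' _ _
  rw [expand]
  exact IsBigO.fun_sum fun a ha => (monomial_le a ha).const_mul_left _

lemma pderiv_eq_zero_of_isHomogeneous_zero {P : MvPolynomial (Fin d) ℝ} (hP : P.IsHomogeneous 0)
    (i : Fin d) : pderiv i P = 0 := by
  rw [totalDegree_eq_zero_iff_eq_C.1 (Nat.le_zero.1 hP.totalDegree_le), pderiv_C]

/-- The Laplacian of a polynomial. -/
def polyLaplacian (P : MvPolynomial (Fin d) ℝ) : MvPolynomial (Fin d) ℝ :=
  ∑ i, pderiv i (pderiv i P)

lemma isHomogeneous_polyLaplacian {P : MvPolynomial (Fin d) ℝ} {m : ℕ} (hP : P.IsHomogeneous m) :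
    (polyLaplacian P).IsHomogeneous (m - 2) :=
  IsHomogeneous.sum _ _ _ fun _ _ => hP.pderiv.pderiv

lemma polyLaplacian_eq_zero {P : MvPolynomial (Fin d) ℝ} {m : ℕ} (hP : P.IsHomogeneous m)
    (hm : m < 2) : polyLaplacian P = 0 := by
  refine Finset.sum_eq_zero fun i _ => pderiv_eq_zero_of_isHomogeneous_zero ?_ i
  simpa [Nat.sub_eq_zero_of_le (Nat.le_of_lt_succ hm)] using hP.pderiv (i := i)

end PolyEval

section WeightedPoly

open MvPolynomial

variable {d : ℕ}

/-- The function `P(x) (1+|x|²)^b`. These functions are stable under partial derivatives. -/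
def weightedPoly (P : MvPolynomial (Fin d) ℝ) (b : ℝ) (x : EuclideanSpace ℝ (Fin d)) : ℝ :=
  polyEval P x * rho x ^ b

variable (P : MvPolynomial (Fin d) ℝ) (b : ℝ) (i : Fin d)

lemma differentiable_rho_rpow : Differentiable ℝ fun x : EuclideanSpace ℝ (Fin d) => rho x ^ b := by
  simpa [rho] using differentiable_add_norm_sub_sq_rpow one_pos (0 : EuclideanSpace ℝ (Fin d)) b

lemma partialDeriv_rho_rpow :
    partialDeriv i (fun x => rho x ^ b) = fun x => 2 * b * (x i * rho x ^ (b - 1)) := by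
  simpa [rho] using partialDeriv_add_norm_sub_sq_rpow one_pos (0 : EuclideanSpace ℝ (Fin d)) b i

lemma weightedPoly_zero : weightedPoly (d := d) 0 b = fun _ => 0 := by
  ext x
  simp [weightedPoly, polyEval]

lemma differentiable_weightedPoly : Differentiable ℝ (weightedPoly P b) :=
  (differentiable_polyEval P).mul (differentiable_rho_rpow b)

lemma partialDeriv_weightedPoly : partialDeriv i (weightedPoly P b) =
    fun x => 2 * b * weightedPoly (P * X i) (b - 1) x + weightedPoly (pderiv i P) b x := by
  refine (partialDeriv_mul i (differentiable_polyEval P) (differentiable_rho_rpow b)).trans ?_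
  ext x
  simp only [partialDeriv_polyEval, partialDeriv_rho_rpow, weightedPoly, polyEval_mul_X]
  ring

lemma differentiable_partialDeriv_weightedPoly :
    Differentiable ℝ (partialDeriv i (weightedPoly P b)) := by
  rw [partialDeriv_weightedPoly]
  exact ((differentiable_weightedPoly _ _).const_mul _).add (differentiable_weightedPoly _ _)

lemma partialDeriv_partialDeriv_weightedPoly :
    partialDeriv i (partialDeriv i (weightedPoly P b)) =
      fun x => 2 * b * partialDeriv i (weightedPoly (P * X i) (b - 1)) x +
        partialDeriv i (weightedPoly (pderiv i P) b) x := by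
  rw [partialDeriv_weightedPoly, partialDeriv_add i
    ((differentiable_weightedPoly _ _).const_mul _) (differentiable_weightedPoly _ _),
    partialDeriv_const_mul i _ (differentiable_weightedPoly _ _)]

variable {P} {m : ℕ} {b c : ℝ}

lemma isBigO_weightedPoly (hP : P.IsHomogeneous m) (h : (m : ℝ) / 2 + b ≤ c) :
    weightedPoly P b =O[⊤] (rho · ^ c) :=
  isBigO_rho_rpow_mul (isBigO_polyEval hP) (isBigO_refl _ _) h

lemma isBigO_partialDeriv_weightedPoly (hP : P.IsHomogeneous m)
    (h : ((m : ℝ) - 1) / 2 + b ≤ c) : partialDeriv i (weightedPoly P b) =O[⊤] (rho · ^ c) := by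
  rw [partialDeriv_weightedPoly]
  refine ((isBigO_weightedPoly (hP.mul (isHomogeneous_X ℝ i)) ?_).const_mul_left _).add ?_
  · push_cast
    linarith
  · cases m with
    | zero =>
      rw [pderiv_eq_zero_of_isHomogeneous_zero hP, weightedPoly_zero]
      exact isBigO_zero _ _
    | succ m => exact isBigO_weightedPoly hP.pderiv (by simpa using h)

lemma isBigO_partialDeriv_partialDeriv_weightedPoly (hP : P.IsHomogeneous m)
    (h : ((m : ℝ) - 2) / 2 + b ≤ c) :
    partialDeriv i (partialDeriv i (weightedPoly P b)) =O[⊤] (rho · ^ c) := by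
  rw [partialDeriv_partialDeriv_weightedPoly]
  refine ((isBigO_partialDeriv_weightedPoly i (hP.mul (isHomogeneous_X ℝ i)) ?_).const_mul_left
    _).add ?_
  · push_cast
    linarith
  · cases m with
    | zero =>
      rw [pderiv_eq_zero_of_isHomogeneous_zero hP, partialDeriv_weightedPoly, zero_mul, map_zero]
      simp only [weightedPoly_zero, mul_zero, add_zero]
      exact isBigO_zero _ _
    | succ m =>
      exact isBigO_partialDeriv_weightedPoly i hP.pderiv
        (by push_cast [Nat.add_sub_cancel] at h ⊢; linarith)

lemma sum_coord_mul_polyEval_pderiv (hP : P.IsHomogeneous m) (x : EuclideanSpace ℝ (Fin d)) :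
    ∑ i, x i * polyEval (pderiv i P) x = m * polyEval P x := by
  simpa [polyEval] using congrArg (eval fun i => x i) hP.sum_X_mul_pderiv

lemma laplacian_weightedPoly (hP : P.IsHomogeneous m) (b : ℝ) (x : EuclideanSpace ℝ (Fin d)) :
    ∑ i, partialDeriv i (partialDeriv i (weightedPoly P b)) x =
      -(4 * b * (b - 1)) * weightedPoly P (b - 2) x +
        2 * b * (d + 2 * m + 2 * (b - 1)) * weightedPoly P (b - 1) x +
        weightedPoly (polyLaplacian P) b x := by
  have second : ∀ i, partialDeriv i (partialDeriv i (weightedPoly P b)) x =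
      4 * b * (b - 1) * (polyEval P x * rho x ^ (b - 2)) * (x i) ^ 2 +
        2 * b * weightedPoly P (b - 1) x +
        4 * b * rho x ^ (b - 1) * (x i * polyEval (pderiv i P) x) +
        polyEval (pderiv i (pderiv i P)) x * rho x ^ b := by
    intro i
    have exponent : b - 1 - 1 = b - 2 := by ring
    rw [partialDeriv_partialDeriv_weightedPoly]
    simp only [partialDeriv_weightedPoly, exponent, weightedPoly, polyEval, pderiv_mul,
      pderiv_X_self, map_mul, map_add, eval_X, map_one]
    ring
  have sum_sq : ∑ i, (x i) ^ 2 = rho x - 1 := by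
    rw [rho, add_sub_cancel_left, EuclideanSpace.real_norm_sq_eq]
  have lower : rho x ^ (b - 1) = rho x * rho x ^ (b - 2) := by
    rw [mul_comm, ← rpow_add_one (rho_pos x).ne']
    congr 1
    ring
  have eval_laplacian : ∑ i, polyEval (pderiv i (pderiv i P)) x = polyEval (polyLaplacian P) x := by
    simp [polyEval, polyLaplacian]
  simp only [second, Finset.sum_add_distrib, ← Finset.mul_sum, ← Finset.sum_mul, sum_sq,
    sum_coord_mul_polyEval_pderiv hP, Finset.sum_const, Finset.card_univ, Fintype.card_fin,
    nsmul_eq_mul, weightedPoly, eval_laplacian, lower]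
  ring

end WeightedPoly

section SphericalPoly

open MvPolynomial

variable {d : ℕ}

/-- The number `(2k + d - 2)(2k + d)`, which is `4 (k(k + d - 1) + d(d-2)/4)`: up to the factor `4`,
the `k`-th eigenvalue of the conformal Laplacian of the unit sphere `𝕊^d`. -/
def conformalEigenvalue (d k : ℕ) : ℝ := (2 * (k : ℝ) + d - 2) * (2 * (k : ℝ) + d)

lemma conformalEigenvalue_pos (hd : 3 ≤ d) (k : ℕ) : 0 < conformalEigenvalue d k := by
  have hd' : (3 : ℝ) ≤ d := mod_cast hd
  have : (0 : ℝ) ≤ k := k.cast_nonneg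
  exact mul_pos (by linarith) (by linarith)

lemma conformalEigenvalue_strictMono (hd : 0 < d) : StrictMono (conformalEigenvalue d) := by
  refine strictMono_nat_of_lt_succ fun k => ?_
  have hd' : (1 : ℝ) ≤ d := mod_cast hd
  have : (0 : ℝ) ≤ k := k.cast_nonneg
  simp only [conformalEigenvalue]
  push_cast
  nlinarith

/-- The function `P(x) (1+|x|²)^{-k} u_⋆(x)`. For `P` homogeneous of degree at most `k` this is
`u_⋆` times the pullback under stereographic projection of a polynomial of degree `k` on `𝕊^d`. -/
def sphericalPoly (P : MvPolynomial (Fin d) ℝ) (k : ℝ) : EuclideanSpace ℝ (Fin d) → ℝ :=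
  weightedPoly P (-(k + ((d : ℝ) - 2) / 2))

lemma sphericalPoly_eq (P : MvPolynomial (Fin d) ℝ) (k : ℕ) (x : EuclideanSpace ℝ (Fin d)) :
    sphericalPoly P k x = polyEval P x / rho x ^ k * uAT d x := by
  change polyEval P x * rho x ^ (-((k : ℝ) + ((d : ℝ) - 2) / 2)) =
    polyEval P x / rho x ^ k * rho x ^ (-(((d : ℝ) - 2) / 2))
  rw [neg_add, rpow_add (rho_pos x), rpow_neg (rho_pos x).le, rpow_natCast]
  ring

lemma weightedPoly_div_rho_sq (P : MvPolynomial (Fin d) ℝ) (b : ℝ) (x : EuclideanSpace ℝ (Fin d)) :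
    weightedPoly P b x / rho x ^ 2 = weightedPoly P (b - 2) x := by
  rw [weightedPoly, mul_div_assoc, rho_rpow_div_sq, weightedPoly]

/-- The part of lower level in `-(1+|x|²)² Δ (sphericalPoly P k)`, for `P` homogeneous of degree
`m`. -/
def sphericalRemainder (P : MvPolynomial (Fin d) ℝ) (m k : ℝ) : EuclideanSpace ℝ (Fin d) → ℝ :=
  (4 * (k + ((d : ℝ) - 2) / 2) * (m - k)) • sphericalPoly P (k - 1) -
    sphericalPoly (polyLaplacian P) (k - 2)

lemma neg_laplacian_sphericalPoly {P : MvPolynomial (Fin d) ℝ} {m : ℕ} (hP : P.IsHomogeneous m)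
    (k : ℕ) (x : EuclideanSpace ℝ (Fin d)) :
    -∑ i, partialDeriv i (partialDeriv i (sphericalPoly P k)) x =
      (conformalEigenvalue d k • sphericalPoly P k + sphericalRemainder P m k) x / rho x ^ 2 := by
  have first_exponent : -((k : ℝ) - 1 + ((d : ℝ) - 2) / 2) - 2 =
      -((k : ℝ) + ((d : ℝ) - 2) / 2) - 1 := by ring
  have second_exponent : -((k : ℝ) - 2 + ((d : ℝ) - 2) / 2) - 2 =
      -((k : ℝ) + ((d : ℝ) - 2) / 2) := by ring
  simp only [sphericalRemainder, Pi.add_apply, Pi.sub_apply, Pi.smul_apply, smul_eq_mul,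
    add_div _ _ (rho x ^ 2), sub_div _ _ (rho x ^ 2), mul_div_assoc _ _ (rho x ^ 2), sphericalPoly,
    weightedPoly_div_rho_sq, first_exponent, second_exponent, laplacian_weightedPoly hP,
    conformalEigenvalue]
  ring

/-- The functions of level `k`: as `u_⋆` times the pullbacks of the polynomials on `𝕊^d` of
degree `k`, they are the natural candidates for the `k`-th eigenspace modulo lower levels. -/
def sphericalSet (d k : ℕ) : Set (EuclideanSpace ℝ (Fin d) → ℝ) :=
  {f | ∃ (m : ℕ) (P : MvPolynomial (Fin d) ℝ), P.IsHomogeneous m ∧ m ≤ k ∧ f = sphericalPoly P k}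

lemma sphericalRemainder_mem_levelSpan {P : MvPolynomial (Fin d) ℝ} {m k : ℕ}
    (hP : P.IsHomogeneous m) (hmk : m ≤ k) :
    sphericalRemainder P m k ∈ levelSpan (sphericalSet d) k := by
  refine Submodule.sub_mem _ ?_ ?_
  · rcases hmk.eq_or_lt with rfl | hlt
    · simp
    · refine Submodule.smul_mem _ _ (mem_levelSpan_of_mem (k := k - 1) ⟨m, P, hP, ?_, ?_⟩ ?_)
      · lia
      · rw [Nat.cast_pred (by lia)]
      · lia
  · rcases lt_or_ge m 2 with hm | hm
    · rw [polyLaplacian_eq_zero hP hm, sphericalPoly, weightedPoly_zero]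
      exact Submodule.zero_mem _
    · refine mem_levelSpan_of_mem (k := k - 2)
        ⟨m - 2, _, isHomogeneous_polyLaplacian hP, ?_, ?_⟩ ?_
      · lia
      · rw [Nat.cast_sub (hm.trans hmk), Nat.cast_ofNat]
      · lia

/-- The continuous functions on `ℝ^d` that decay like the Aubin–Talenti function. -/
def decayingFunctions (d : ℕ) : Submodule ℝ (EuclideanSpace ℝ (Fin d) → ℝ) where
  carrier := {f | Continuous f ∧ f =O[⊤] uAT d}
  zero_mem' := ⟨continuous_zero, isBigO_zero _ _⟩
  add_mem' hf hg := ⟨hf.1.add hg.1, hf.2.add hg.2⟩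
  smul_mem' c _ hf := ⟨hf.1.const_smul c, hf.2.const_smul_left c⟩

lemma levelSpan_sphericalSet_le_decayingFunctions (n : ℕ) :
    levelSpan (sphericalSet d) n ≤ decayingFunctions d := by
  refine levelSpan_le.2 fun k _ => ?_
  rintro _ ⟨m, P, hP, hmk, rfl⟩
  have hmk' : (m : ℝ) ≤ k := mod_cast hmk
  have : (0 : ℝ) ≤ k := k.cast_nonneg
  exact ⟨(differentiable_weightedPoly _ _).continuous, isBigO_weightedPoly hP (by linarith)⟩

lemma decayingPotential_sphericalPoly {P : MvPolynomial (Fin d) ℝ} {m k : ℕ}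
    (hP : P.IsHomogeneous m) (hmk : m ≤ k) :
    DecayingPotential
      (fun x => (conformalEigenvalue d k • sphericalPoly P k + sphericalRemainder P m k) x
        / rho x ^ 2)
      (sphericalPoly P k) := by
  have hmk' : (m : ℝ) ≤ k := mod_cast hmk
  have : (0 : ℝ) ≤ k := k.cast_nonneg
  obtain ⟨source_continuous, source_isBigO⟩ : conformalEigenvalue d k • sphericalPoly P k +
      sphericalRemainder P m k ∈ decayingFunctions d := by
    refine levelSpan_sphericalSet_le_decayingFunctions (k + 1) (Submodule.add_mem _
      (Submodule.smul_mem _ _ ?_) ?_)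
    · exact mem_levelSpan_of_mem ⟨m, P, hP, hmk, rfl⟩ k.lt_succ_self
    · exact levelSpan_mono k.le_succ (sphericalRemainder_mem_levelSpan hP hmk)
  exact
    { differentiable := differentiable_weightedPoly _ _
      differentiable_partialDeriv := differentiable_partialDeriv_weightedPoly _ _
      isBigO := isBigO_weightedPoly hP (by linarith)
      isBigO_partialDeriv := fun i => isBigO_partialDeriv_weightedPoly i hP (by linarith)
      isBigO_partialDeriv_partialDeriv := fun i =>
        isBigO_partialDeriv_partialDeriv_weightedPoly i hP (by linarith)
      continuous_source := source_continuous.div (by fun_prop [rho]) fun x => by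
        have := rho_pos x
        positivity
      isBigO_source := isBigO_rho_rpow_div_sq source_isBigO (by ring)
      neg_laplacian_eq := neg_laplacian_sphericalPoly hP k }

/-- The functions `f` for which `-Δq = f/(1+|x|²)²` has a decaying classical solution `q`. -/
def solvableFunctions (d : ℕ) : Submodule ℝ (EuclideanSpace ℝ (Fin d) → ℝ) where
  carrier := {f | ∃ q, DecayingPotential (fun x => f x / rho x ^ 2) q}
  zero_mem' := ⟨_, by
    simpa using (decayingPotential_sphericalPoly (d := d) (isHomogeneous_zero _ _ 0)
      le_rfl).const_mul 0⟩
  add_mem' := fun ⟨_, hf⟩ ⟨_, hg⟩ => ⟨_, by simpa [add_div] using hf.add hg⟩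
  smul_mem' c _ := fun ⟨_, hf⟩ => ⟨_, by simpa [mul_div_assoc] using hf.const_mul c⟩

lemma levelSpan_sphericalSet_le_solvableFunctions (hd : 3 ≤ d) (n : ℕ) :
    levelSpan (sphericalSet d) n ≤ solvableFunctions d := by
  induction n with
  | zero => simp [levelSpan]
  | succ n ih =>
    refine levelSpan_succ_le.2 ⟨ih, ?_⟩
    rintro _ ⟨m, P, hP, hmn, rfl⟩
    have whole : conformalEigenvalue d n • sphericalPoly P n + sphericalRemainder P m n ∈
        solvableFunctions d := ⟨_, decayingPotential_sphericalPoly hP hmn⟩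
    have remainder := ih (sphericalRemainder_mem_levelSpan hP hmn)
    have scaled := Submodule.sub_mem _ whole remainder
    rw [add_sub_cancel_right] at scaled
    exact (Submodule.smul_mem_iff _ (conformalEigenvalue_pos hd n).ne').1 scaled

end SphericalPoly

section CouplingOperator

open scoped InnerProductSpace

variable {α β : Type*} [MeasurableSpace α] [MeasurableSpace β] {μ : Measure α} {ν : Measure β}
  {κ : Measure (α × β)}

lemma inner_eq_integral_mul {v w : Lp ℝ 2 μ} {a b : α → ℝ} (hv : v =ᵐ[μ] a) (hw : w =ᵐ[μ] b) :
    ⟪v, w⟫_ℝ = ∫ x, a x * b x ∂μ := by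
  rw [L2.inner_def]
  refine integral_congr_ae ?_
  filter_upwards [hv, hw] with x hvx hwx
  simp [hvx, hwx, mul_comm]

/-- The operator `L²(ν) → L²(μ)` whose bilinear form is integration against a coupling `κ` of `μ`
and `ν`, that is, the conditional expectation of the second coordinate given the first. It is
bounded because both coordinate projections induce isometries into `L²(κ)`. -/
def couplingOperator (hfst : MeasurePreserving Prod.fst κ μ)
    (hsnd : MeasurePreserving Prod.snd κ ν) : Lp ℝ 2 ν →L[ℝ] Lp ℝ 2 μ :=
  (Lp.compMeasurePreservingₗᵢ ℝ Prod.fst hfst).toContinuousLinearMap.adjoint ∘L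
    (Lp.compMeasurePreservingₗᵢ ℝ Prod.snd hsnd).toContinuousLinearMap

lemma inner_couplingOperator (hfst : MeasurePreserving Prod.fst κ μ)
    (hsnd : MeasurePreserving Prod.snd κ ν) {v : Lp ℝ 2 ν} {w : Lp ℝ 2 μ} {a : β → ℝ} {b : α → ℝ}
    (hv : v =ᵐ[ν] a) (hw : w =ᵐ[μ] b) :
    ⟪couplingOperator hfst hsnd v, w⟫_ℝ = ∫ z, a z.2 * b z.1 ∂κ := by
  rw [couplingOperator, ContinuousLinearMap.comp_apply, ContinuousLinearMap.adjoint_inner_left]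
  exact inner_eq_integral_mul
    ((Lp.coeFn_compMeasurePreserving v hsnd).trans (hsnd.quasiMeasurePreserving.ae_eq_comp hv))
    ((Lp.coeFn_compMeasurePreserving w hfst).trans (hfst.quasiMeasurePreserving.ae_eq_comp hw))

lemma isSymmetric_couplingOperator {κ : Measure (α × α)} (hfst : MeasurePreserving Prod.fst κ μ)
    (hsnd : MeasurePreserving Prod.snd κ μ) (hswap : MeasurePreserving Prod.swap κ κ) :
    (couplingOperator hfst hsnd : Lp ℝ 2 μ →ₗ[ℝ] Lp ℝ 2 μ).IsSymmetric := by
  intro v w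
  simp only [ContinuousLinearMap.coe_coe]
  rw [real_inner_comm _ v, inner_couplingOperator hfst hsnd .rfl .rfl,
    inner_couplingOperator hfst hsnd .rfl .rfl,
    ← MeasurePreserving.integral_comp' (f := MeasurableEquiv.prodComm) hswap]
  exact integral_congr_ae (.of_forall fun z => mul_comm _ _)

end CouplingOperator

section SphereMeasure

variable {d : ℕ}

lemma uAT_pos (x : EuclideanSpace ℝ (Fin d)) : 0 < uAT d x := rho_rpow_pos _ x

lemma continuous_uAT : Continuous (uAT d) := continuous_rho_rpow _

/-- The measure `(1+|x|²)^{-d} dx`, a multiple of the pullback of the surface measure of `𝕊^d` under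
stereographic projection. -/
def sphereMeasure (d : ℕ) : Measure (EuclideanSpace ℝ (Fin d)) :=
  volume.withDensity fun x => ENNReal.ofReal (rho x ^ (-(d : ℝ)))

lemma measurable_sphereMeasure_density :
    Measurable fun x : EuclideanSpace ℝ (Fin d) => ENNReal.ofReal (rho x ^ (-(d : ℝ))) :=
  (continuous_rho_rpow _).measurable.ennreal_ofReal

instance : IsFiniteMeasure (sphereMeasure d) := by
  refine isFiniteMeasure_withDensity_ofReal (Integrable.hasFiniteIntegral ?_)
  rcases Nat.eq_zero_or_pos d with rfl | hd
  · exact Integrable.of_finite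
  · have : (0 : ℝ) < d := mod_cast hd
    exact integrable_rho_rpow_euclidean (by linarith)

lemma integral_sphereMeasure (f : EuclideanSpace ℝ (Fin d) → ℝ) :
    ∫ x, f x ∂(sphereMeasure d) = ∫ x, rho x ^ (-(d : ℝ)) * f x := by
  rw [sphereMeasure,
    integral_withDensity_eq_integral_toReal_smul measurable_sphereMeasure_density (by simp)]
  simp only [ENNReal.toReal_ofReal (rho_rpow_pos _ _).le, smul_eq_mul]

lemma integrable_sphereMeasure_iff {f : EuclideanSpace ℝ (Fin d) → ℝ} :
    Integrable f (sphereMeasure d) ↔ Integrable fun x => f x * rho x ^ (-(d : ℝ)) := by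
  rw [sphereMeasure, integrable_withDensity_iff measurable_sphereMeasure_density (by simp)]
  simp only [ENNReal.toReal_ofReal (rho_rpow_pos _ _).le]

end SphereMeasure

section GreenCoupling

variable {d : ℕ}

lemma uAT_mul_uAT_div_sq (x : EuclideanSpace ℝ (Fin d)) :
    uAT d x * (uAT d x / rho x ^ 2) = rho x ^ (-(d : ℝ)) := by
  change rho x ^ (-(((d : ℝ) - 2) / 2)) * (rho x ^ (-(((d : ℝ) - 2) / 2)) / rho x ^ 2) = _
  rw [rho_rpow_div_sq, ← rpow_add (rho_pos x)]
  congr 1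
  ring

lemma sphericalPoly_one_zero : sphericalPoly (d := d) 1 (0 : ℕ) = uAT d := by
  ext x
  rw [sphericalPoly_eq]
  simp [polyEval]

lemma decayingPotential_uAT :
    DecayingPotential (fun x => conformalEigenvalue d 0 * uAT d x / rho x ^ 2) (uAT d) := by
  have remainder_eq_zero : sphericalRemainder (d := d) 1 (0 : ℕ) (0 : ℕ) = 0 := by
    have h := sphericalRemainder_mem_levelSpan (d := d) (MvPolynomial.isHomogeneous_one _ ℝ) le_rfl
    simpa [levelSpan] using h
  have h := decayingPotential_sphericalPoly (d := d) (MvPolynomial.isHomogeneous_one _ ℝ) le_rfl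
  rw [remainder_eq_zero, add_zero, sphericalPoly_one_zero] at h
  exact h

/-- The Green function weighted so that its marginals are `sphereMeasure d`. -/
def greenDensity (d : ℕ) (z : EuclideanSpace ℝ (Fin d) × EuclideanSpace ℝ (Fin d)) : ℝ :=
  conformalEigenvalue d 0 * greenKernel d (z.1 - z.2) *
    (uAT d z.1 / rho z.1 ^ 2) * (uAT d z.2 / rho z.2 ^ 2)

lemma measurable_greenDensity : Measurable (greenDensity d) := by
  have := measurable_greenKernel d
  have := (continuous_uAT (d := d)).measurable
  unfold greenDensity rho
  fun_prop

lemma greenDensity_nonneg (hd : 3 ≤ d)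
    (z : EuclideanSpace ℝ (Fin d) × EuclideanSpace ℝ (Fin d)) : 0 ≤ greenDensity d z := by
  have := (conformalEigenvalue_pos hd 0).le
  have := greenKernel_nonneg ((Nat.le_succ 2).trans hd) (z.1 - z.2)
  have := (uAT_pos z.1).le
  have := (uAT_pos z.2).le
  unfold greenDensity
  positivity

lemma greenDensity_swap (z : EuclideanSpace ℝ (Fin d) × EuclideanSpace ℝ (Fin d)) :
    greenDensity d z.swap = greenDensity d z := by
  simp only [greenDensity, greenKernel, Prod.fst_swap, Prod.snd_swap, norm_sub_rev z.2]
  ring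

/-- The self-coupling of `sphereMeasure d` given by the Green function. -/
def greenCoupling (d : ℕ) : Measure (EuclideanSpace ℝ (Fin d) × EuclideanSpace ℝ (Fin d)) :=
  (volume.prod volume).withDensity fun z => ENNReal.ofReal (greenDensity d z)

lemma greenDensity_eq (x y : EuclideanSpace ℝ (Fin d)) :
    greenDensity d (x, y) = uAT d x / rho x ^ 2 *
      (greenKernel d (x - y) * (conformalEigenvalue d 0 * uAT d y / rho y ^ 2)) := by
  simp only [greenDensity]
  ring

lemma integrable_greenDensity (hd : 2 ≤ d) (x : EuclideanSpace ℝ (Fin d)) :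
    Integrable fun y => greenDensity d (x, y) := by
  have h := (decayingPotential_uAT.integrable_norm_sub_rpow_mul_source hd x).const_mul
    (uAT d x / rho x ^ 2 * (((d : ℝ) - 2) * sphereArea d)⁻¹)
  refine h.congr (.of_forall fun y => ?_)
  simp only [greenDensity_eq, greenKernel]
  ring

/-- `λ_0⁻¹ u_⋆` being the potential of `u_⋆/(1+|x|²)²` is what makes the marginals equal. -/
lemma integral_greenDensity (hd : 3 ≤ d) (x : EuclideanSpace ℝ (Fin d)) :
    ∫ y, greenDensity d (x, y) = rho x ^ (-(d : ℝ)) := by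
  simp only [greenDensity_eq, integral_const_mul]
  rw [decayingPotential_uAT.integral_greenKernel_mul_source hd, mul_comm, uAT_mul_uAT_div_sq]

lemma measurePreserving_fst_greenCoupling (hd : 3 ≤ d) :
    MeasurePreserving Prod.fst (greenCoupling d) (sphereMeasure d) := by
  refine ⟨measurable_fst, Measure.ext fun s hs => ?_⟩
  rw [Measure.map_apply measurable_fst hs, greenCoupling, sphereMeasure,
    withDensity_apply _ (measurable_fst hs), withDensity_apply _ hs, ← Set.prod_univ,
    setLIntegral_prod _ measurable_greenDensity.ennreal_ofReal.aemeasurable]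
  refine lintegral_congr fun x => ?_
  rw [Measure.restrict_univ, ← integral_greenDensity hd,
    ofReal_integral_eq_lintegral_ofReal (integrable_greenDensity ((Nat.le_succ 2).trans hd) x)
      (.of_forall fun y => greenDensity_nonneg hd (x, y))]

lemma measurePreserving_swap_greenCoupling :
    MeasurePreserving Prod.swap (greenCoupling d) (greenCoupling d) := by
  refine ⟨measurable_swap, Measure.ext fun s hs => ?_⟩
  rw [Measure.map_apply measurable_swap hs, greenCoupling,
    withDensity_apply _ (measurable_swap hs), withDensity_apply _ hs,
    ← (Measure.measurePreserving_swap (μ := volume) (ν := volume)).setLIntegral_comp_preimage hs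
      measurable_greenDensity.ennreal_ofReal]
  simp only [greenDensity_swap]

lemma measurePreserving_snd_greenCoupling (hd : 3 ≤ d) :
    MeasurePreserving Prod.snd (greenCoupling d) (sphereMeasure d) :=
  (measurePreserving_fst_greenCoupling hd).comp measurePreserving_swap_greenCoupling

lemma integral_greenCoupling (hd : 3 ≤ d)
    {φ : EuclideanSpace ℝ (Fin d) × EuclideanSpace ℝ (Fin d) → ℝ}
    (hφ : Integrable φ (greenCoupling d)) :
    ∫ z, φ z ∂(greenCoupling d) = ∫ x, ∫ y, greenDensity d (x, y) * φ (x, y) := by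
  have toReal_density (z) : (ENNReal.ofReal (greenDensity d z)).toReal = greenDensity d z :=
    ENNReal.toReal_ofReal (greenDensity_nonneg hd z)
  have integrable_mul : Integrable (fun z => greenDensity d z * φ z) (volume.prod volume) := by
    rw [greenCoupling, integrable_withDensity_iff measurable_greenDensity.ennreal_ofReal
      (by simp)] at hφ
    simpa only [toReal_density, mul_comm] using hφ
  rw [greenCoupling, integral_withDensity_eq_integral_toReal_smul
    measurable_greenDensity.ennreal_ofReal (by simp)]
  simp only [toReal_density, smul_eq_mul]
  exact integral_prod _ integrable_mul

end GreenCoupling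

section Represents

open scoped InnerProductSpace

variable {d : ℕ} {v w : Lp ℝ 2 (sphereMeasure d)} {f g : EuclideanSpace ℝ (Fin d) → ℝ}

/-- The vector `v` is the class of `f/u_⋆`. The map `f ↦ f/u_⋆` is an isometry from
`L²((1+|x|²)^{-2} dx)` onto `L²(sphereMeasure d)`, a space over a finite measure. -/
def Represents (v : Lp ℝ 2 (sphereMeasure d)) (f : EuclideanSpace ℝ (Fin d) → ℝ) : Prop :=
  v =ᵐ[sphereMeasure d] fun x => f x / uAT d x

lemma represents_mul_uAT (v : Lp ℝ 2 (sphereMeasure d)) :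
    Represents v fun x => v x * uAT d x :=
  .of_forall fun x => (mul_div_cancel_right₀ _ (uAT_pos x).ne').symm

lemma represents_zero : Represents (0 : Lp ℝ 2 (sphereMeasure d)) 0 := by
  filter_upwards [Lp.coeFn_zero ℝ 2 (sphereMeasure d)] with x hx
  rw [hx, Pi.zero_apply, zero_div]

lemma exists_represents (hf : MemLp (fun x => f x / uAT d x) 2 (sphereMeasure d)) :
    ∃ v, Represents v f :=
  ⟨hf.toLp, hf.coeFn_toLp⟩

lemma integrable_sq_div_uAT_iff : Integrable (fun x => (f x / uAT d x) ^ 2) (sphereMeasure d) ↔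
    Integrable fun x => f x ^ 2 / rho x ^ 2 := by
  rw [integrable_sphereMeasure_iff]
  congr! 2 with x
  have := (uAT_pos x).ne'
  rw [← uAT_mul_uAT_div_sq]
  field_simp

lemma exists_represents_of_integrable (hm : AEStronglyMeasurable f volume)
    (hf : Integrable fun x => f x ^ 2 / rho x ^ 2) : ∃ v, Represents v f := by
  refine exists_represents ((memLp_two_iff_integrable_sq ?_).2 (integrable_sq_div_uAT_iff.2 hf))
  exact (hm.aemeasurable.div continuous_uAT.aemeasurable).aestronglyMeasurable.mono_ac
    (withDensity_absolutelyContinuous _ _)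

lemma exists_represents_of_mem_decayingFunctions (hf : f ∈ decayingFunctions d) :
    ∃ v, Represents v f := by
  obtain ⟨f_continuous, f_isBigO⟩ := hf
  obtain ⟨C, hC⟩ := isBigO_top.1 f_isBigO
  refine exists_represents (MemLp.of_bound
    (f_continuous.div continuous_uAT fun x => (uAT_pos x).ne').aestronglyMeasurable C
    (.of_forall fun x => ?_))
  rw [norm_div, div_le_iff₀ (norm_pos_iff.2 (uAT_pos x).ne')]
  exact hC x

namespace Represents

lemma unique (hv : Represents v f) (hw : Represents w f) : v = w := Lp.ext (hv.trans hw.symm)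

lemma add (hv : Represents v f) (hw : Represents w g) : Represents (v + w) (f + g) := by
  filter_upwards [hv, hw, Lp.coeFn_add v w] with x hvx hwx hadd
  rw [hadd, Pi.add_apply, hvx, hwx, Pi.add_apply, add_div]

lemma smul (hv : Represents v f) (c : ℝ) : Represents (c • v) (c • f) := by
  filter_upwards [hv, Lp.coeFn_smul c v] with x hvx hsmul
  rw [hsmul, Pi.smul_apply, hvx, Pi.smul_apply, smul_eq_mul, smul_eq_mul, mul_div_assoc]

lemma inner_eq (hv : Represents v f) (hw : Represents w g) :
    ⟪v, w⟫_ℝ = ∫ x, f x * g x / rho x ^ 2 := by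
  rw [inner_eq_integral_mul hv hw, integral_sphereMeasure]
  congr 1 with x
  have := (uAT_pos x).ne'
  rw [← uAT_mul_uAT_div_sq]
  field_simp

lemma integrable_sq (hv : Represents v f) : Integrable fun x => f x ^ 2 / rho x ^ 2 :=
  integrable_sq_div_uAT_iff.1 (((memLp_congr_ae hv).1 (Lp.memLp v)).integrable_sq)

lemma norm_sq_eq (hv : Represents v f) : ‖v‖ ^ 2 = ∫ x, f x ^ 2 / rho x ^ 2 := by
  rw [← real_inner_self_eq_norm_sq, hv.inner_eq hv]
  simp only [← sq]

end Represents

end Represents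

section GreenOperator

open scoped InnerProductSpace

variable {d : ℕ} {v w : Lp ℝ 2 (sphereMeasure d)} {f g : EuclideanSpace ℝ (Fin d) → ℝ}

/-- The operator `f ↦ (−Δ)⁻¹ (f/(1+|x|²)²)`, transported to `L²(sphereMeasure d)` by
`Represents`. -/
def greenOperator (hd : 3 ≤ d) : Lp ℝ 2 (sphereMeasure d) →L[ℝ] Lp ℝ 2 (sphereMeasure d) :=
  (conformalEigenvalue d 0)⁻¹ • couplingOperator (measurePreserving_fst_greenCoupling hd)
    (measurePreserving_snd_greenCoupling hd)

lemma isSymmetric_greenOperator (hd : 3 ≤ d) :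
    (greenOperator hd : Lp ℝ 2 (sphereMeasure d) →ₗ[ℝ] Lp ℝ 2 (sphereMeasure d)).IsSymmetric :=
  (isSymmetric_couplingOperator _ _ measurePreserving_swap_greenCoupling).smul (by simp)

lemma Represents.inner_greenOperator (hd : 3 ≤ d) (hv : Represents v f) (hw : Represents w g) :
    ⟪greenOperator hd v, w⟫_ℝ =
      ∫ x, g x / rho x ^ 2 * invLap d (fun y => f y / rho y ^ 2) x := by
  have marginals_memLp : Integrable
      (fun z : _ × _ => f z.2 / uAT d z.2 * (g z.1 / uAT d z.1)) (greenCoupling d) :=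
    (((memLp_congr_ae hv).1 (Lp.memLp v)).comp_measurePreserving
      (measurePreserving_snd_greenCoupling hd)).integrable_mul
      (((memLp_congr_ae hw).1 (Lp.memLp w)).comp_measurePreserving
        (measurePreserving_fst_greenCoupling hd))
  rw [greenOperator, smul_apply, inner_smul_left, inner_couplingOperator _ _ hv hw,
    integral_greenCoupling hd marginals_memLp, ← integral_const_mul]
  congr 1 with x
  rw [invLap, ← integral_const_mul, ← integral_const_mul]
  congr 1 with y
  have := (uAT_pos x).ne'
  have := (uAT_pos y).ne'
  have := (conformalEigenvalue_pos hd 0).ne'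
  simp only [greenDensity, conj_trivial]
  field_simp

lemma Represents.greenOperator_eq (hd : 3 ≤ d) (hv : Represents v f) (hw : Represents w g)
    (h : DecayingPotential (fun x => f x / rho x ^ 2) g) : greenOperator hd v = w := by
  refine ext_inner_right ℝ fun b => ?_
  rw [hv.inner_greenOperator hd (represents_mul_uAT b), hw.inner_eq (represents_mul_uAT b)]
  congr 1 with x
  rw [invLap, h.integral_greenKernel_mul_source hd]
  ring

/-- The classes in `L²(sphereMeasure d)` of the functions of level `k`. -/
def sphericalVectors (d k : ℕ) : Set (Lp ℝ 2 (sphereMeasure d)) :=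
  {v | ∃ f ∈ sphericalSet d k, Represents v f}

/-- The functions represented by a vector of `K`. -/
def representedFunctions (K : Submodule ℝ (Lp ℝ 2 (sphereMeasure d))) :
    Submodule ℝ (EuclideanSpace ℝ (Fin d) → ℝ) where
  carrier := {f | ∃ v ∈ K, Represents v f}
  zero_mem' := ⟨0, K.zero_mem, represents_zero⟩
  add_mem' := fun ⟨_, v_mem, hv⟩ ⟨_, w_mem, hw⟩ => ⟨_, K.add_mem v_mem w_mem, hv.add hw⟩
  smul_mem' c _ := fun ⟨_, v_mem, hv⟩ => ⟨_, K.smul_mem c v_mem, hv.smul c⟩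

lemma Represents.mem_representedFunctions_iff {K : Submodule ℝ (Lp ℝ 2 (sphereMeasure d))}
    (hv : Represents v f) : f ∈ representedFunctions K ↔ v ∈ K :=
  ⟨fun ⟨_, w_mem, hw⟩ => hv.unique hw ▸ w_mem, fun v_mem => ⟨v, v_mem, hv⟩⟩

lemma levelSpan_sphericalSet_le_representedFunctions_iff {n : ℕ}
    {K : Submodule ℝ (Lp ℝ 2 (sphereMeasure d))} :
    levelSpan (sphericalSet d) n ≤ representedFunctions K ↔
      levelSpan (sphericalVectors d) n ≤ K := by
  simp only [levelSpan_le]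
  refine forall₂_congr fun k _ => ⟨?_, fun h f hf => ?_⟩
  · rintro h v ⟨f, hf, hv⟩
    exact hv.mem_representedFunctions_iff.1 (h hf)
  · obtain ⟨v, hv⟩ := exists_represents_of_mem_decayingFunctions
      (levelSpan_sphericalSet_le_decayingFunctions _ (mem_levelSpan_of_mem hf k.lt_succ_self))
    exact ⟨v, h ⟨f, hf, hv⟩, hv⟩

lemma exists_mem_levelSpan_represents {n : ℕ} (hf : f ∈ levelSpan (sphericalSet d) n) :
    ∃ v ∈ levelSpan (sphericalVectors d) n, Represents v f :=
  levelSpan_sphericalSet_le_representedFunctions_iff.2 le_rfl hf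

lemma exists_represents_mem_levelSpan {n : ℕ} (hv : v ∈ levelSpan (sphericalVectors d) n) :
    ∃ f ∈ levelSpan (sphericalSet d) n, Represents v f := by
  induction hv using Submodule.span_induction with
  | mem v hv =>
    obtain ⟨k, hk, f, hf, hvf⟩ := Set.mem_iUnion₂.1 hv
    exact ⟨f, mem_levelSpan_of_mem hf hk, hvf⟩
  | zero => exact ⟨0, Submodule.zero_mem _, represents_zero⟩
  | add v w _ _ ihv ihw =>
    obtain ⟨f, f_mem, hf⟩ := ihv
    obtain ⟨g, g_mem, hg⟩ := ihw
    exact ⟨f + g, Submodule.add_mem _ f_mem g_mem, hf.add hg⟩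
  | smul c v _ ihv =>
    obtain ⟨f, f_mem, hf⟩ := ihv
    exact ⟨c • f, Submodule.smul_mem _ c f_mem, hf.smul c⟩

lemma isLevelTriangular_greenOperator (hd : 3 ≤ d) :
    IsLevelTriangular
      (greenOperator hd : Lp ℝ 2 (sphereMeasure d) →ₗ[ℝ] Lp ℝ 2 (sphereMeasure d))
      (sphericalVectors d) (conformalEigenvalue d) := by
  rintro n v ⟨_, ⟨m, P, hP, hmn, rfl⟩, hv⟩
  obtain ⟨r, hr, hrep⟩ := exists_mem_levelSpan_represents (sphericalRemainder_mem_levelSpan hP hmn)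
  exact ⟨r, hr, ((hv.smul _).add hrep).greenOperator_eq hd hv
    (decayingPotential_sphericalPoly hP hmn)⟩

end GreenOperator

section StoneWeierstrass

variable {α K : Type*} [MeasurableSpace α] {μ : Measure α}

lemma surjective_compMeasurePreserving [MeasurableSpace K] {ν : Measure K} {p : ENNReal}
    {e : α → K} {r : K → α} (he : MeasurePreserving e μ ν) (hr : Measurable r)
    (hre : Function.LeftInverse r e) :
    Function.Surjective (Lp.compMeasurePreserving (E := ℝ) (p := p) e he) := by
  intro v
  have comp_comp : (v ∘ r) ∘ e = v := by rw [Function.comp_assoc, hre.comp_eq_id, Function.comp_id]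
  have measurable_comp : AEStronglyMeasurable (v ∘ r) ν :=
    ((Lp.stronglyMeasurable v).comp_measurable hr).aestronglyMeasurable
  have memLp_comp : MemLp (v ∘ r) p ν := by
    rw [← he.map_eq] at measurable_comp ⊢
    rw [memLp_map_measure_iff measurable_comp he.measurable.aemeasurable, comp_comp]
    exact Lp.memLp v
  refine ⟨memLp_comp.toLp, Lp.ext ((Lp.coeFn_compMeasurePreserving _ he).trans ?_)⟩
  have h := he.quasiMeasurePreserving.ae_eq_comp memLp_comp.coeFn_toLp
  rwa [comp_comp] at h

/-- Stone–Weierstrass, pulled back along a measurable embedding into a compact space. -/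
lemma dense_setOf_ae_eq_comp [IsFiniteMeasure μ] [TopologicalSpace K] [CompactSpace K]
    [TopologicalSpace.MetrizableSpace K] [MeasurableSpace K] [BorelSpace K] {p : ENNReal}
    [Fact (1 ≤ p)] (hp : p ≠ ⊤) {e : α → K} {r : K → α} (he : Measurable e) (hr : Measurable r)
    (hre : Function.LeftInverse r e) {A : Subalgebra ℝ C(K, ℝ)} (hA : A.SeparatesPoints) :
    Dense {v : Lp ℝ p μ | ∃ f ∈ A, v =ᵐ[μ] f ∘ e} := by
  have preserving : MeasurePreserving e μ (μ.map e) := he.measurePreserving μ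
  let restrict : C(K, ℝ) →L[ℝ] Lp ℝ p μ :=
    (Lp.compMeasurePreservingₗᵢ ℝ e preserving).toContinuousLinearMap ∘L
      ContinuousMap.toLp p (μ.map e) ℝ
  have denseRange_restrict : DenseRange restrict :=
    (surjective_compMeasurePreserving preserving hr hre).denseRange.comp
      (ContinuousMap.toLp_denseRange ℝ (μ.map e) ℝ hp) (Lp.compMeasurePreservingₗᵢ ℝ e
        preserving).continuous
  have dense_subalgebra : Dense (A : Set C(K, ℝ)) := by
    have h := ContinuousMap.subalgebra_topologicalClosure_eq_top_of_separatesPoints A hA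
    rw [← SetLike.coe_set_eq, Subalgebra.topologicalClosure_coe] at h
    exact dense_iff_closure_eq.2 h
  refine (denseRange_restrict.dense_image restrict.continuous dense_subalgebra).mono ?_
  rintro _ ⟨f, hf, rfl⟩
  exact ⟨f, hf, (Lp.coeFn_compMeasurePreserving _ preserving).trans
    (preserving.quasiMeasurePreserving.ae_eq_comp (ContinuousMap.coeFn_toLp (μ.map e) f))⟩

end StoneWeierstrass

section Density

variable {d : ℕ}

lemma abs_elim_div_rho_le_one (x : EuclideanSpace ℝ (Fin d)) (j : Option (Fin d)) :
    |j.elim 1 x / rho x| ≤ 1 := by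
  rw [abs_div, abs_of_pos (rho_pos x), div_le_one (rho_pos x)]
  cases j with
  | none => simpa using one_le_rho x
  | some i =>
    have coord_le : |x i| ≤ ‖x‖ := PiLp.norm_apply_le x i
    simp only [Option.elim_some, rho]
    nlinarith [sq_nonneg (‖x‖ - 1)]

/-- The point `(1, x) / (1+|x|²)`: up to an affine change of coordinates, the image of `x` on the
sphere `𝕊^d` under inverse stereographic projection. -/
def sphereCoord (x : EuclideanSpace ℝ (Fin d)) : Option (Fin d) → Set.Icc (-1 : ℝ) 1 :=
  fun j => ⟨j.elim 1 x / rho x, abs_le.1 (abs_elim_div_rho_le_one x j)⟩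

lemma measurable_sphereCoord : Measurable (sphereCoord (d := d)) := by
  refine measurable_pi_lambda _ fun j => Measurable.subtype_mk ?_
  cases j <;> simp only [Option.elim_none, Option.elim_some, rho] <;> fun_prop

/-- The left inverse of `sphereCoord`, with junk value `0` where the first coordinate vanishes. -/
def sphereCoordInv (y : Option (Fin d) → Set.Icc (-1 : ℝ) 1) : EuclideanSpace ℝ (Fin d) :=
  WithLp.toLp 2 fun i => (y (some i) : ℝ) / y none

lemma measurable_sphereCoordInv : Measurable (sphereCoordInv (d := d)) := by
  unfold sphereCoordInv
  fun_prop

lemma leftInverse_sphereCoordInv : Function.LeftInverse (sphereCoordInv (d := d)) sphereCoord := by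
  intro x
  ext i
  have := (rho_pos x).ne'
  simp only [sphereCoordInv, sphereCoord, Option.elim]
  field_simp

/-- The coordinate functions on the cube `[-1,1]^{d+1}`. -/
def cubeCoord (j : Option (Fin d)) : C(Option (Fin d) → Set.Icc (-1 : ℝ) 1, ℝ) :=
  ⟨fun y => y j, by fun_prop⟩

lemma separatesPoints_adjoin_cubeCoord :
    (Algebra.adjoin ℝ (Set.range (cubeCoord (d := d)))).SeparatesPoints := by
  intro y z hyz
  obtain ⟨j, hj⟩ := Function.ne_iff.1 hyz
  exact ⟨_, ⟨cubeCoord j, Algebra.subset_adjoin ⟨j, rfl⟩, rfl⟩, Subtype.coe_ne_coe.2 hj⟩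

lemma exists_polyEval_div_rho_pow_eq_monomial {p : C(Option (Fin d) → Set.Icc (-1 : ℝ) 1, ℝ)}
    (hp : p ∈ Submonoid.closure (Set.range cubeCoord)) :
    ∃ (m k : ℕ) (P : MvPolynomial (Fin d) ℝ), P.IsHomogeneous m ∧ m ≤ k ∧
      ∀ x, p (sphereCoord x) = polyEval P x / rho x ^ k := by
  induction hp using Submonoid.closure_induction with
  | mem p hp =>
    obtain ⟨_ | i, rfl⟩ := hp
    · exact ⟨0, 1, 1, MvPolynomial.isHomogeneous_one _ _, zero_le_one, fun x => by
        simp [polyEval, cubeCoord, sphereCoord]⟩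
    · exact ⟨1, 1, MvPolynomial.X i, MvPolynomial.isHomogeneous_X _ _, le_rfl, fun x => by
        simp [polyEval, cubeCoord, sphereCoord]⟩
  | one => exact ⟨0, 0, 1, MvPolynomial.isHomogeneous_one _ _, le_rfl, fun x => by simp [polyEval]⟩
  | mul p q _ _ ihp ihq =>
    obtain ⟨m, k, P, hP, hmk, hp⟩ := ihp
    obtain ⟨n, l, Q, hQ, hnl, hq⟩ := ihq
    refine ⟨m + n, k + l, P * Q, hP.mul hQ, add_le_add hmk hnl, fun x => ?_⟩
    simp only [ContinuousMap.mul_apply, hp, hq, polyEval, map_mul, pow_add, div_mul_div_comm]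

lemma exists_comp_sphereCoord_mul_uAT_mem_levelSpan
    {p : C(Option (Fin d) → Set.Icc (-1 : ℝ) 1, ℝ)}
    (hp : p ∈ Algebra.adjoin ℝ (Set.range cubeCoord)) :
    ∃ n, (fun x => p (sphereCoord x) * uAT d x) ∈ levelSpan (sphericalSet d) n := by
  rw [← Subalgebra.mem_toSubmodule, Algebra.adjoin_eq_span] at hp
  induction hp using Submodule.span_induction with
  | mem p hp =>
    obtain ⟨m, k, P, hP, hmk, hp⟩ := exists_polyEval_div_rho_pow_eq_monomial hp
    refine ⟨k + 1, mem_levelSpan_of_mem ⟨m, P, hP, hmk, ?_⟩ k.lt_succ_self⟩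
    ext x
    rw [sphericalPoly_eq, hp]
  | zero => exact ⟨0, by simp [← Pi.zero_def]⟩
  | add p q _ _ ihp ihq =>
    obtain ⟨m, hm⟩ := ihp
    obtain ⟨n, hn⟩ := ihq
    refine ⟨max m n, ?_⟩
    convert Submodule.add_mem _ (levelSpan_mono (le_max_left m n) hm)
      (levelSpan_mono (le_max_right m n) hn) using 1
    ext x
    exact add_mul _ _ _
  | smul c p _ ihp =>
    obtain ⟨n, hn⟩ := ihp
    refine ⟨n, ?_⟩
    convert Submodule.smul_mem _ c hn using 1
    ext x
    exact mul_assoc _ _ _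

lemma dense_iSup_levelSpan_sphericalVectors :
    Dense ((⨆ n, levelSpan (sphericalVectors d) n : Submodule ℝ (Lp ℝ 2 (sphereMeasure d))) :
      Set (Lp ℝ 2 (sphereMeasure d))) := by
  refine (dense_setOf_ae_eq_comp (p := 2) ENNReal.ofNat_ne_top measurable_sphereCoord
    measurable_sphereCoordInv leftInverse_sphereCoordInv separatesPoints_adjoin_cubeCoord).mono ?_
  rintro v ⟨p, hp, hv⟩
  obtain ⟨n, hn⟩ := exists_comp_sphereCoord_mul_uAT_mem_levelSpan hp
  obtain ⟨w, w_mem, hw⟩ := exists_mem_levelSpan_represents hn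
  have represents_v : Represents v fun x => p (sphereCoord x) * uAT d x := by
    filter_upwards [hv] with x hvx
    rw [hvx, mul_div_cancel_right₀ _ (uAT_pos x).ne', Function.comp_apply]
  rw [represents_v.unique hw]
  exact Submodule.mem_iSup_of_mem n w_mem

end Density

section LowLevels

open MvPolynomial

variable {d : ℕ}

lemma eq_C_coeff_zero_of_isHomogeneous_zero {P : MvPolynomial (Fin d) ℝ} (hP : P.IsHomogeneous 0) :
    P = C (P.coeff 0) :=
  totalDegree_eq_zero_iff_eq_C.1 (Nat.le_zero.1 hP.totalDegree_le)

lemma sum_smul_X_eq_of_isHomogeneous_one {P : MvPolynomial (Fin d) ℝ} (hP : P.IsHomogeneous 1) :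
    ∑ i, (pderiv i P).coeff 0 • X i = P := by
  conv_rhs => rw [← one_smul ℕ P, ← hP.sum_X_mul_pderiv]
  refine Finset.sum_congr rfl fun i _ => ?_
  rw [eq_C_coeff_zero_of_isHomogeneous_zero (hP.pderiv (i := i)), coeff_C, if_pos rfl, mul_comm,
    smul_eq_C_mul]

lemma sphericalPoly_smul (c : ℝ) (P : MvPolynomial (Fin d) ℝ) (k : ℝ) :
    sphericalPoly (c • P) k = c • sphericalPoly P k := by
  ext x
  simp [sphericalPoly, weightedPoly, polyEval, mul_assoc]

lemma sphericalPoly_sum {ι : Type*} (s : Finset ι) (P : ι → MvPolynomial (Fin d) ℝ) (k : ℝ) :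
    sphericalPoly (∑ i ∈ s, P i) k = ∑ i ∈ s, sphericalPoly (P i) k := by
  ext x
  simp [sphericalPoly, weightedPoly, polyEval, Finset.sum_mul]

lemma sphericalPoly_X_one (i : Fin d) : sphericalPoly (X i) (1 : ℕ) = atFi d i := by
  ext x
  rw [sphericalPoly_eq, polyEval, eval_X, pow_one, div_mul_eq_mul_div]
  rfl

lemma two_smul_sphericalPoly_one_one :
    (2 : ℝ) • sphericalPoly (d := d) 1 (1 : ℕ) = atFlast d + uAT d := by
  ext x
  have := (rho_pos x).ne'
  have numerator : 1 - ‖x‖ ^ 2 = 2 - rho x := by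
    rw [rho]
    ring
  change 2 * sphericalPoly 1 (1 : ℕ) x = (1 - ‖x‖ ^ 2) * uAT d x / rho x + uAT d x
  rw [numerator, sphericalPoly_eq, polyEval, map_one]
  field_simp
  ring

lemma levelSpan_sphericalSet_two_le {K : Submodule ℝ (EuclideanSpace ℝ (Fin d) → ℝ)} :
    levelSpan (sphericalSet d) 2 ≤ K ↔ uAT d ∈ K ∧ (∀ i, atFi d i ∈ K) ∧ atFlast d ∈ K := by
  constructor
  · intro h
    have mem_of_homogeneous {P : MvPolynomial (Fin d) ℝ} {m k : ℕ} (hP : P.IsHomogeneous m)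
        (hmk : m ≤ k) (hk : k < 2) : sphericalPoly P k ∈ K :=
      h (mem_levelSpan_of_mem ⟨m, P, hP, hmk, rfl⟩ hk)
    have uAT_mem : uAT d ∈ K := by
      rw [← sphericalPoly_one_zero]
      exact mem_of_homogeneous (isHomogeneous_one _ _) le_rfl two_pos
    refine ⟨uAT_mem, fun i => ?_, ?_⟩
    · rw [← sphericalPoly_X_one]
      exact mem_of_homogeneous (isHomogeneous_X _ i) le_rfl one_lt_two
    · rw [← add_sub_cancel_right (atFlast d) (uAT d), ← two_smul_sphericalPoly_one_one]
      exact K.sub_mem (K.smul_mem _ (mem_of_homogeneous (isHomogeneous_one _ _) zero_le_one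
        one_lt_two)) uAT_mem
  · rintro ⟨uAT_mem, atFi_mem, atFlast_mem⟩
    have one_one_mem : sphericalPoly 1 (1 : ℕ) ∈ K := by
      rw [← K.smul_mem_iff (two_ne_zero (α := ℝ)), two_smul_sphericalPoly_one_one]
      exact K.add_mem atFlast_mem uAT_mem
    refine levelSpan_le.2 fun k hk => ?_
    rintro _ ⟨m, P, hP, hmk, rfl⟩
    obtain rfl | ⟨rfl, rfl⟩ : m = 0 ∨ m = 1 ∧ k = 1 := by lia
    · rw [eq_C_coeff_zero_of_isHomogeneous_zero hP, ← mul_one (C _), ← smul_eq_C_mul,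
        sphericalPoly_smul]
      refine K.smul_mem _ ?_
      interval_cases k
      · exact sphericalPoly_one_zero (d := d) ▸ uAT_mem
      · exact one_one_mem
    · rw [← sum_smul_X_eq_of_isHomogeneous_one hP, sphericalPoly_sum]
      refine K.sum_mem fun i _ => ?_
      rw [sphericalPoly_smul, sphericalPoly_X_one]
      exact K.smul_mem _ (atFi_mem i)

end LowLevels

section Poincare

open scoped InnerProductSpace

variable {d : ℕ} {v : Lp ℝ 2 (sphereMeasure d)} {f g : EuclideanSpace ℝ (Fin d) → ℝ}

lemma Represents.mem_representedFunctions_orthogonal_iff (hv : Represents v g)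
    (hf : f ∈ decayingFunctions d) :
    f ∈ representedFunctions (ℝ ∙ v)ᗮ ↔ ∫ x, g x * f x / rho x ^ 2 = 0 := by
  obtain ⟨w, hw⟩ := exists_represents_of_mem_decayingFunctions hf
  rw [hw.mem_representedFunctions_iff, Submodule.mem_orthogonal_singleton_iff_inner_right,
    hv.inner_eq hw]

lemma Represents.orthAT_iff (hv : Represents v g) :
    orthAT d g ↔ v ∈ (levelSpan (sphericalVectors d) 2)ᗮ := by
  obtain ⟨uAT_decay, atFi_decay, atFlast_decay⟩ := levelSpan_sphericalSet_two_le.1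
    (levelSpan_sphericalSet_le_decayingFunctions (d := d) 2)
  rw [← Submodule.span_singleton_le_iff_mem, ← Submodule.isOrtho_iff_le,
    Submodule.isOrtho_comm, Submodule.isOrtho_iff_le,
    ← levelSpan_sphericalSet_le_representedFunctions_iff, levelSpan_sphericalSet_two_le,
    hv.mem_representedFunctions_orthogonal_iff uAT_decay,
    hv.mem_representedFunctions_orthogonal_iff atFlast_decay]
  simp only [hv.mem_representedFunctions_orthogonal_iff (atFi_decay _)]
  rfl

lemma conformalEigenvalue_two : conformalEigenvalue d 2 = ((d : ℝ) + 2) * (d + 4) := by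
  rw [conformalEigenvalue]
  push_cast
  ring

lemma greenKernel_pos (hd : 3 ≤ d) {x : EuclideanSpace ℝ (Fin d)} (hx : x ≠ 0) :
    0 < greenKernel d x := by
  have hd' : (3 : ℝ) ≤ d := mod_cast hd
  exact div_pos (rpow_pos_of_pos (norm_pos_iff.2 hx) _)
    (mul_pos (by linarith) (sphereArea_pos (by lia)))

/-- Integrability of `g²` does not make `g` measurable; for non-measurable `g` the Bochner integral
defining the potential takes its default value. -/
lemma invLap_div_sq_eq_zero_of_not_aestronglyMeasurable (hd : 3 ≤ d)
    (hg : ¬AEStronglyMeasurable g volume) (x : EuclideanSpace ℝ (Fin d)) :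
    invLap d (fun y => g y / rho y ^ 2) x = 0 := by
  refine integral_undef fun h => hg ?_
  have : Nonempty (Fin d) := ⟨⟨0, by lia⟩⟩
  have weight_measurable : Measurable fun y => greenKernel d (x - y) / rho y ^ 2 :=
    ((measurable_greenKernel d).comp (measurable_const.sub measurable_id)).div
      (by fun_prop [rho])
  refine (h.aemeasurable.div weight_measurable.aemeasurable).aestronglyMeasurable.congr ?_
  filter_upwards [Measure.ae_ne volume x] with y hy
  have := (greenKernel_pos hd (sub_ne_zero.2 hy.symm)).ne'
  have := (rho_pos y).ne'
  simp only [Pi.div_apply]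
  field_simp

lemma Represents.inner_greenOperator_le (hd : 3 ≤ d) (hv : Represents v g) (ho : orthAT d g) :
    ⟪greenOperator hd v, v⟫_ℝ ≤ (conformalEigenvalue d 2)⁻¹ * ‖v‖ ^ 2 :=
  (isLevelTriangular_greenOperator hd).inner_map_self_le (isSymmetric_greenOperator hd)
    (conformalEigenvalue_pos hd) (conformalEigenvalue_strictMono (by lia)).monotone
    dense_iSup_levelSpan_sphericalVectors (hv.orthAT_iff.1 ho)

theorem integral_div_sq_mul_invLap_le (hd : 3 ≤ d)
    (hg : Integrable fun x => g x ^ 2 / rho x ^ 2) (ho : orthAT d g) :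
    ∫ x, g x / rho x ^ 2 * invLap d (fun y => g y / rho y ^ 2) x ≤
      (conformalEigenvalue d 2)⁻¹ * ∫ x, g x ^ 2 / rho x ^ 2 := by
  by_cases hm : AEStronglyMeasurable g volume
  · obtain ⟨v, hv⟩ := exists_represents_of_integrable hm hg
    rw [← hv.norm_sq_eq, ← hv.inner_greenOperator hd hv]
    exact hv.inner_greenOperator_le hd ho
  · simp only [invLap_div_sq_eq_zero_of_not_aestronglyMeasurable hd hm, mul_zero, integral_zero]
    have := conformalEigenvalue_pos hd 2
    have : 0 ≤ ∫ x, g x ^ 2 / rho x ^ 2 := integral_nonneg fun x => by positivity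
    positivity

end Poincare

section Dirichlet

open scoped InnerProductSpace

variable {d : ℕ} {f s q : EuclideanSpace ℝ (Fin d) → ℝ} {v : Lp ℝ 2 (sphereMeasure d)}

lemma norm_gradient_sq (f : EuclideanSpace ℝ (Fin d) → ℝ) (x : EuclideanSpace ℝ (Fin d)) :
    ‖gradient f x‖ ^ 2 = ∑ i, partialDeriv i f x ^ 2 := by
  have coord (i : Fin d) : gradient f x i = partialDeriv i f x := by
    rw [partialDeriv, ← inner_gradient_left, EuclideanSpace.inner_single_right]
    simp
  simp only [EuclideanSpace.norm_sq_eq, coord, norm_eq_abs, sq_abs]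

lemma integrable_partialDeriv_sq (h : Integrable fun x => ‖gradient f x‖ ^ 2) (i : Fin d) :
    Integrable fun x => partialDeriv i f x ^ 2 := by
  refine h.mono' ((measurable_partialDeriv i f).pow_const 2).aestronglyMeasurable
    (.of_forall fun x => ?_)
  rw [norm_gradient_sq, norm_of_nonneg (sq_nonneg _)]
  exact Finset.single_le_sum (fun i _ => sq_nonneg (partialDeriv i f x)) (Finset.mem_univ i)

lemma integral_norm_gradient_sq (h : ∀ i, Integrable fun x => partialDeriv i f x ^ 2) :
    ∫ x, ‖gradient f x‖ ^ 2 = ∑ i, ∫ x, partialDeriv i f x ^ 2 := by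
  simp only [norm_gradient_sq]
  exact integral_finsetSum _ fun i _ => h i

lemma DecayingPotential.integral_norm_gradient_sq (hd : 3 ≤ d) (h : DecayingPotential s q) :
    ∫ x, ‖gradient q x‖ ^ 2 = ∫ x, q x * s x := by
  rw [h.integral_mul_source_eq_dirichlet hd h, _root_.integral_norm_gradient_sq fun i => by
    simpa only [sq] using h.integrable_partialDeriv_mul hd h i]
  simp only [sq]

lemma exists_represents_of_decayingPotential (h : DecayingPotential s q) : ∃ v, Represents v q :=
  exists_represents_of_mem_decayingFunctions ⟨h.differentiable.continuous, h.isBigO⟩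

namespace MemD12

lemma integrable_mul_rho_rpow (hd : 3 ≤ d) (hf : MemD12 d f) :
    Integrable fun x => f x * rho x ^ (-((d : ℝ) / 2)) := by
  have hd' : (3 : ℝ) ≤ d := mod_cast hd
  have : (0 : ℝ) < (d : ℝ) - 2 := by linarith
  have exponents_conjugate :
      (2 * (d : ℝ) / ((d : ℝ) - 2)).HolderConjugate (2 * (d : ℝ) / ((d : ℝ) + 2)) := by
    refine holderConjugate_iff.2 ⟨(one_lt_div this).2 (by linarith), ?_⟩
    field_simp
    ring
  have weight_integrable : Integrable fun x : EuclideanSpace ℝ (Fin d) =>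
      (rho x ^ (-((d : ℝ) / 2))) ^ (2 * (d : ℝ) / ((d : ℝ) + 2)) := by
    simp only [← rpow_mul (rho_pos _).le]
    refine integrable_rho_rpow_euclidean ?_
    have : 1 < 2 * (d : ℝ) / ((d : ℝ) + 2) := (one_lt_div (by linarith)).2 (by linarith)
    nlinarith
  refine ((hf.2.2.div_const (2 * d / (d - 2))).add
    (weight_integrable.div_const (2 * d / (d + 2)))).mono'
    (hf.1.continuous.mul (continuous_rho_rpow _)).aestronglyMeasurable (.of_forall fun x => ?_)
  have weight_nonneg := (rho_rpow_pos (-((d : ℝ) / 2)) x).le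
  rw [norm_mul, norm_of_nonneg weight_nonneg, norm_eq_abs]
  exact young_inequality_of_nonneg (abs_nonneg _) weight_nonneg exponents_conjugate

lemma two_mul_integral_mul_source_le (hd : 3 ≤ d) (hf : MemD12 d f) (h : DecayingPotential s q) :
    2 * ∫ x, f x * s x ≤ (∫ x, ‖gradient f x‖ ^ 2) + ∫ x, q x * s x := by
  have int_f := integrable_partialDeriv_sq hf.2.1
  have int_q (i : Fin d) : Integrable fun x => partialDeriv i q x ^ 2 := by
    simpa only [sq] using h.integrable_partialDeriv_mul hd h i
  have memLp_two {g : EuclideanSpace ℝ (Fin d) → ℝ} {i : Fin d}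
      (hg : Integrable fun x => partialDeriv i g x ^ 2) : MemLp (partialDeriv i g) 2 :=
    (memLp_two_iff_integrable_sq (measurable_partialDeriv i g).aestronglyMeasurable).2 hg
  have int_mul (i : Fin d) : Integrable fun x => partialDeriv i f x * partialDeriv i q x :=
    (memLp_two (int_f i)).integrable_mul (memLp_two (int_q i))
  rw [h.integral_mul_source hf.1 (hf.integrable_mul_rho_rpow hd) int_mul,
    ← h.integral_norm_gradient_sq hd, integral_norm_gradient_sq int_f,
    integral_norm_gradient_sq int_q, Finset.mul_sum, ← Finset.sum_add_distrib]
  refine Finset.sum_le_sum fun i _ => ?_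
  rw [← integral_const_mul, ← integral_add (int_f i) (int_q i)]
  refine integral_mono ((int_mul i).const_mul 2) ((int_f i).add (int_q i)) fun x => ?_
  simpa only [mul_assoc] using two_mul_le_add_sq (partialDeriv i f x) (partialDeriv i q x)

/-- With `w` standing for `g`, this is `2∫fg/(1+|x|²)² ≤ ∫|∇f|² + ∫|∇q|²` for the solution `q` of
`-Δq = g/(1+|x|²)²`. It passes from the dense set of `g` with a classical solution to all `g`. -/
lemma two_mul_inner_le (hd : 3 ≤ d) (hf : MemD12 d f) (hv : Represents v f)
    (w : Lp ℝ 2 (sphereMeasure d)) :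
    2 * ⟪v, w⟫_ℝ ≤ (∫ x, ‖gradient f x‖ ^ 2) + ⟪greenOperator hd w, w⟫_ℝ := by
  induction w using dense_iSup_levelSpan_sphericalVectors.induction with
  | isClosed =>
    exact isClosed_le (by fun_prop) (by fun_prop)
  | mem w hw =>
    obtain ⟨n, hwn⟩ := (Submodule.mem_iSup_of_directed _ levelSpan_mono.directed_le).1 hw
    obtain ⟨p, hp, hwp⟩ := exists_represents_mem_levelSpan hwn
    obtain ⟨q, hq⟩ := levelSpan_sphericalSet_le_solvableFunctions hd n hp
    obtain ⟨z, hz⟩ := exists_represents_of_decayingPotential hq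
    rw [hwp.greenOperator_eq hd hz hq, hv.inner_eq hwp, hz.inner_eq hwp]
    simpa only [mul_div_assoc] using hf.two_mul_integral_mul_source_le hd hq

end MemD12

end Dirichlet

section QuadraticForms

variable {d : ℕ} {f : EuclideanSpace ℝ (Fin d) → ℝ}

lemma conformalEigenvalue_one : conformalEigenvalue d 1 = (d : ℝ) * (d + 2) := by
  rw [conformalEigenvalue]
  push_cast
  ring

lemma quadF_eq : quadF d f =
    (∫ x, ‖gradient f x‖ ^ 2) - conformalEigenvalue d 1 * ∫ x, f x ^ 2 / rho x ^ 2 := by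
  rw [conformalEigenvalue_one]
  rfl

lemma quadG_eq : quadG d f = (conformalEigenvalue d 1)⁻¹ * (∫ x, f x ^ 2 / rho x ^ 2) -
    ∫ x, f x / rho x ^ 2 * invLap d (fun y => f y / rho y ^ 2) x := by
  rw [conformalEigenvalue_one, ← one_div]
  rfl

theorem le_quadG (hd : 3 ≤ d) (hf : Integrable fun x => f x ^ 2 / rho x ^ 2) (ho : orthAT d f) :
    ((conformalEigenvalue d 1)⁻¹ - (conformalEigenvalue d 2)⁻¹) * ∫ x, f x ^ 2 / rho x ^ 2 ≤
      quadG d f := by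
  rw [quadG_eq, sub_mul]
  exact sub_le_sub_left (integral_div_sq_mul_invLap_le hd hf ho) _

/-- The choice `w = λ_2 v` in `MemD12.two_mul_inner_le` loses nothing on an extremal `f`, which is
itself the potential of `λ_2 f/(1+|x|²)²`. -/
theorem quadG_le (hd : 3 ≤ d) (hfD : MemD12 d f) (hf : Integrable fun x => f x ^ 2 / rho x ^ 2)
    (ho : orthAT d f) :
    quadG d f ≤ (conformalEigenvalue d 1 * conformalEigenvalue d 2)⁻¹ * quadF d f := by
  obtain ⟨v, hv⟩ := exists_represents_of_integrable hfD.1.continuous.aestronglyMeasurable hf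
  have poincare := integral_div_sq_mul_invLap_le hd hf ho
  have dirichlet := hfD.two_mul_inner_le hd hv (conformalEigenvalue d 2 • v)
  rw [map_smul, real_inner_smul_left, real_inner_smul_right, real_inner_smul_right,
    real_inner_self_eq_norm_sq, hv.norm_sq_eq, hv.inner_greenOperator hd hv] at dirichlet
  rw [quadG_eq, quadF_eq]
  have first_pos := conformalEigenvalue_pos hd 1
  have second_pos := conformalEigenvalue_pos hd 2
  have gap : 0 < conformalEigenvalue d 2 - conformalEigenvalue d 1 :=
    sub_pos.2 (conformalEigenvalue_strictMono (by lia) one_lt_two)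
  rw [inv_mul_eq_div, le_div_iff₀ second_pos] at poincare
  rw [inv_mul_eq_div, inv_mul_eq_div, le_div_iff₀ (by positivity), sub_mul, ← mul_assoc,
    div_mul_cancel₀ _ first_pos.ne']
  nlinarith [mul_nonneg gap.le (sub_nonneg.2 poincare)]

end QuadraticForms

section Eigenfunctions

variable {d : ℕ} {f : EuclideanSpace ℝ (Fin d) → ℝ} {μ : ℝ}

lemma invLap_eq_of_eigenfunction (hd : 3 ≤ d) (hμ : μ ≠ 0)
    (h : DecayingPotential (fun x => μ * f x / rho x ^ 2) f) (x : EuclideanSpace ℝ (Fin d)) :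
    invLap d (fun y => f y / rho y ^ 2) x = μ⁻¹ * f x := by
  rw [← h.integral_greenKernel_mul_source hd x, invLap, ← integral_const_mul]
  congr 1 with y
  field_simp

lemma quadG_eq_of_eigenfunction (hd : 3 ≤ d) (hμ : μ ≠ 0)
    (h : DecayingPotential (fun x => μ * f x / rho x ^ 2) f) :
    quadG d f = ((conformalEigenvalue d 1)⁻¹ - μ⁻¹) * ∫ x, f x ^ 2 / rho x ^ 2 := by
  simp only [quadG_eq, invLap_eq_of_eigenfunction hd hμ h]
  rw [sub_mul, ← integral_const_mul μ⁻¹]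
  congr! 3
  ring

lemma quadF_eq_of_eigenfunction (hd : 3 ≤ d)
    (h : DecayingPotential (fun x => μ * f x / rho x ^ 2) f) :
    quadF d f = (μ - conformalEigenvalue d 1) * ∫ x, f x ^ 2 / rho x ^ 2 := by
  rw [quadF_eq, h.integral_norm_gradient_sq hd, sub_mul, ← integral_const_mul μ]
  congr! 3
  ring

lemma orthAT_of_eigenfunction (hd : 3 ≤ d) (hμ : μ ≠ 0)
    (h : DecayingPotential (fun x => μ * f x / rho x ^ 2) f)
    (hμ' : ∀ k < 2, conformalEigenvalue d k ≠ μ) : orthAT d f := by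
  obtain ⟨v, hv⟩ := exists_represents_of_decayingPotential h
  have eigen : greenOperator hd v = μ⁻¹ • v := by
    rw [eq_inv_smul_iff₀ hμ, ← map_smul]
    exact (hv.smul μ).greenOperator_eq hd hv h
  refine hv.orthAT_iff.2 ((isLevelTriangular_greenOperator hd).mem_orthogonal_of_eigenvector
    (isSymmetric_greenOperator hd) eigen fun k hk => ?_)
  rw [ne_eq, inv_mul_eq_one₀ hμ]
  exact (hμ' k hk).symm

lemma decayingPotential_sphericalPoly_of_harmonic {P : MvPolynomial (Fin d) ℝ} {k : ℕ}
    (hP : P.IsHomogeneous k) (harm : polyLaplacian P = 0) :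
    DecayingPotential (fun x => conformalEigenvalue d k * sphericalPoly P k x / rho x ^ 2)
      (sphericalPoly P k) := by
  have remainder_eq_zero : sphericalRemainder P k k = 0 := by
    ext x
    simp [sphericalRemainder, harm, sphericalPoly, weightedPoly_zero]
  simpa [remainder_eq_zero] using decayingPotential_sphericalPoly hP le_rfl

end Eigenfunctions

section Extremal

open MvPolynomial

variable {d : ℕ}

lemma polyLaplacian_X_mul_X {i j : Fin d} (hij : i ≠ j) : polyLaplacian (X i * X j) = 0 := by
  refine Finset.sum_eq_zero fun k _ => ?_
  rcases eq_or_ne i k with rfl | hik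
  · simp [pderiv_X_of_ne hij.symm]
  · rcases eq_or_ne j k with rfl | hjk
    · simp [pderiv_X_of_ne hik]
    · simp [pderiv_X_of_ne hik, pderiv_X_of_ne hjk]

lemma not_sphericalPoly_ae_eq_zero {P : MvPolynomial (Fin d) ℝ} (hP : P ≠ 0) (k : ℝ) :
    ¬sphericalPoly P k =ᵐ[volume] fun _ => 0 := by
  intro h
  have eq_zero : sphericalPoly P k = fun _ => 0 :=
    ((differentiable_weightedPoly _ _).continuous.ae_eq_iff_eq volume continuous_const).1 h
  refine hP (MvPolynomial.funext fun x => ?_)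
  simpa [polyEval] using (mul_eq_zero.1 (congrFun eq_zero (WithLp.toLp 2 x))).resolve_right
    (rho_rpow_pos _ _).ne'

/-- The witness is `x_i x_j (1+|x|²)^{-2} u_⋆` with `i ≠ j`, which comes from the spherical harmonic
`x_i x_j` of degree two on `𝕊^d`. -/
theorem exists_eigenfunction_two (hd : 2 ≤ d) :
    ∃ f : EuclideanSpace ℝ (Fin d) → ℝ, ¬f =ᵐ[volume] (fun _ => 0) ∧
      DecayingPotential (fun x => conformalEigenvalue d 2 * f x / rho x ^ 2) f := by
  have : Nontrivial (Fin d) := Fin.nontrivial_iff_two_le.2 hd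
  obtain ⟨i, j, hij⟩ := exists_pair_ne (Fin d)
  exact ⟨sphericalPoly (X i * X j) (2 : ℕ),
    not_sphericalPoly_ae_eq_zero (mul_ne_zero (X_ne_zero i) (X_ne_zero j)) _,
    decayingPotential_sphericalPoly_of_harmonic
      ((isHomogeneous_X _ i).mul (isHomogeneous_X _ j)) (polyLaplacian_X_mul_X hij)⟩

theorem exists_extremal (hd : 3 ≤ d) :
    ∃ f : EuclideanSpace ℝ (Fin d) → ℝ, Integrable (fun x => f x ^ 2 / rho x ^ 2) ∧ orthAT d f ∧
      ¬f =ᵐ[volume] (fun _ => 0) ∧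
      ((conformalEigenvalue d 1)⁻¹ - (conformalEigenvalue d 2)⁻¹) * (∫ x, f x ^ 2 / rho x ^ 2) =
        quadG d f ∧
      quadG d f = (conformalEigenvalue d 1 * conformalEigenvalue d 2)⁻¹ * quadF d f := by
  obtain ⟨f, f_ne_zero, hf⟩ := exists_eigenfunction_two (d := d) (by lia)
  obtain ⟨v, hv⟩ := exists_represents_of_decayingPotential hf
  have first_ne := (conformalEigenvalue_pos hd 1).ne'
  have second_ne := (conformalEigenvalue_pos hd 2).ne'
  have quadG_f := quadG_eq_of_eigenfunction hd second_ne hf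
  refine ⟨f, hv.integrable_sq, orthAT_of_eigenfunction hd second_ne hf fun k hk => ?_, f_ne_zero,
    quadG_f.symm, ?_⟩
  · exact (conformalEigenvalue_strictMono (by lia) hk).ne
  · rw [quadG_f, quadF_eq_of_eigenfunction hd hf]
    field_simp

end Extremal

/-- dual spectral estimates around the Aubin-Talenti function:
(i) dual Poincaré inequality for the inverse Laplacian, (ii) two-sided comparison of
`G` with the weighted `L²` norm and with `F`, both achieved by a nonzero function. -/
theorem dual_spectral_estimates (d : ℕ) (hd : 3 ≤ d) :
    (∀ g : EuclideanSpace ℝ (Fin d) → ℝ,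
      Integrable (fun x => g x ^ 2 / (1 + ‖x‖ ^ 2) ^ 2) → orthAT d g →
      (∫ x, g x / (1 + ‖x‖ ^ 2) ^ 2 *
          invLap d (fun y => g y / (1 + ‖y‖ ^ 2) ^ 2) x) ≤
        1 / (((d : ℝ) + 2) * ((d : ℝ) + 4)) * ∫ x, g x ^ 2 / (1 + ‖x‖ ^ 2) ^ 2) ∧
    (∀ f : EuclideanSpace ℝ (Fin d) → ℝ, MemD12 d f →
      Integrable (fun x => f x ^ 2 / (1 + ‖x‖ ^ 2) ^ 2) → orthAT d f →
      4 / ((d : ℝ) * ((d : ℝ) + 2) * ((d : ℝ) + 4)) *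
          (∫ x, f x ^ 2 / (1 + ‖x‖ ^ 2) ^ 2) ≤ quadG d f ∧
        quadG d f ≤ 1 / ((d : ℝ) * ((d : ℝ) + 2) ^ 2 * ((d : ℝ) + 4)) * quadF d f) ∧
    (∃ f : EuclideanSpace ℝ (Fin d) → ℝ,
      Integrable (fun x => f x ^ 2 / (1 + ‖x‖ ^ 2) ^ 2) ∧ orthAT d f ∧
      ¬ (f =ᵐ[volume] (fun _ => 0 : EuclideanSpace ℝ (Fin d) → ℝ)) ∧
      4 / ((d : ℝ) * ((d : ℝ) + 2) * ((d : ℝ) + 4)) *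
          (∫ x, f x ^ 2 / (1 + ‖x‖ ^ 2) ^ 2) = quadG d f ∧
      quadG d f = 1 / ((d : ℝ) * ((d : ℝ) + 2) ^ 2 * ((d : ℝ) + 4)) * quadF d f) := by
  have lower_const : 4 / ((d : ℝ) * (d + 2) * (d + 4)) =
      (conformalEigenvalue d 1)⁻¹ - (conformalEigenvalue d 2)⁻¹ := by
    have : d ≠ 0 := by lia
    rw [conformalEigenvalue_one, conformalEigenvalue_two]
    field_simp
    ring
  have upper_const : 1 / ((d : ℝ) * (d + 2) ^ 2 * (d + 4)) =
      (conformalEigenvalue d 1 * conformalEigenvalue d 2)⁻¹ := by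
    rw [conformalEigenvalue_one, conformalEigenvalue_two, one_div]
    ring
  rw [lower_const, upper_const, one_div (_ * _), ← conformalEigenvalue_two]
  exact ⟨fun g hg ho => integral_div_sq_mul_invLap_le hd hg ho,
    fun f hfD hf ho => ⟨le_quadG hd hf ho, quadG_le hd hfD hf ho⟩, exists_extremal hd⟩
end
end

section
/- Let d ≥ 3 be an integer, m = (d−2)/(d+2), and let v : [0,T) × ℝ^d → (0,∞) be a smooth positive solution of the fast diffusion equation ∂v/∂t = Δ(v^m). Assume that J(t) = ∫_{ℝ^d} v(t,x)^{2d/(d+2)} dx and H(t) = ∫ v(t) (−Δ)^{−1} v(t) dx − S_d ‖v(t)‖_{2d/(d+2)}² are finite and twice differentiable, and that the identities J'(t) = −(m+1) ∫ |∇ v(t)^m|² dx and H'(t) = 2 J(t)^{2/d} [ S_d ‖∇u(t)‖_2² − ‖u(t)‖_{2^*}² ] hold, where u = v^{(d−2)/(d+2)}. Then H''(t) · J(t) ≤ H'(t) · J'(t) for all t ∈ (0,T). -/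
open MeasureTheory Real

noncomputable section

/-!
Write `J(t) = ∫ v_t^(m+1)` and `K(t) = ∫ |∇ v_t^m|²`, and test the equation against the fixed
function `u = v_t^m`. Cutoffs make this legitimate: the gradients of the cutoffs `η(x/n)` have
constant norm in `L^d`, so `u ∈ L^(2d/(d-2))` makes the boundary terms vanish. For `s > t`, Young's
inequality gives
`∫ v_s u ≥ J(t) - ((J(t) - J(s)) / (m+1) + K(t) (s-t)) / 2`,
while Hölder's inequality gives `∫ v_s u ≤ J(s)^(1/(m+1)) J(t)^(m/(m+1))`. The two bounds agree to
first order at `s = t`, and comparing second-order terms yields `K' J + 2 m K² ≤ 0`. Finally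
`H'' J - H' J' = 2 S_d J^(2/d) (K' J + 2 m K²)`.
-/

section RealVariable

open Set Filter Topology

theorem nonneg_of_hasDerivAt_of_eventually_le {F F' : ℝ → ℝ} {t c : ℝ}
    (hF : ∀ᶠ s in 𝓝 t, HasDerivAt F (F' s) s) (hF't : F' t = 0) (hF' : HasDerivAt F' c t)
    (hmin : ∀ᶠ s in 𝓝[>] t, F t ≤ F s) : 0 ≤ c := by
  by_contra! hneg
  have hslope : ∀ᶠ s in 𝓝[>] t, slope F' t s < 0 :=
    ((hasDerivAt_iff_tendsto_slope.1 hF').eventually (gt_mem_nhds hneg)).filter_mono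
      (nhdsWithin_mono _ fun s hs ↦ ne_of_gt hs)
  obtain ⟨b, hb, hsub⟩ := mem_nhdsGT_iff_exists_Ioc_subset.1
    ((hF.filter_mono nhdsWithin_le_nhds).and (hslope.and hmin))
  have htb : t < b := hb
  have hcont : ContinuousOn F (Icc t b) := fun s hs ↦ by
    rcases hs.1.eq_or_lt with rfl | hts
    · exact hF.self_of_nhds.continuousAt.continuousWithinAt
    · exact (hsub ⟨hts, hs.2⟩).1.continuousAt.continuousWithinAt
  have hderiv : ∀ s ∈ interior (Icc t b), deriv F s < 0 := fun s hs ↦ by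
    rw [interior_Icc] at hs
    obtain ⟨hFs, hlt, -⟩ := hsub ⟨hs.1, hs.2.le⟩
    rw [slope_def_field, hF't, sub_zero, div_neg_iff] at hlt
    rw [hFs.deriv]
    rcases hlt with h | h <;> linarith [hs.1]
  have hlt := strictAntiOn_of_deriv_neg (convex_Icc t b) hcont hderiv
    (left_mem_Icc.2 htb.le) (right_mem_Icc.2 htb.le) htb
  exact (hsub ⟨htb, le_rfl⟩).2.2.not_gt hlt

theorem hasDerivAt_rpow_mul_const_sub {J : ℝ → ℝ} {K θ m a b c s t : ℝ} (hJs : 0 < J s)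
    (hθ : θ * (m + 1) = 1) (hJ : HasDerivAt J (-(m + 1) * K) s) :
    HasDerivAt (fun r ↦ J r ^ θ * b - (a - ((a - J r) / (m + 1) + c * (r - t)) / 2))
      (-(K * J s ^ (θ - 1)) * b + (K + c) / 2) s := by
  have hpow := (hJ.rpow_const (p := θ) (Or.inl hJs.ne')).mul_const b
  have hlin := (((hJ.const_sub a).div_const (m + 1)).add
    (((hasDerivAt_id s).sub_const t).const_mul c)).div_const 2 |>.const_sub a
  refine (hpow.sub hlin).congr_deriv ?_
  have hm : m + 1 ≠ 0 := right_ne_zero_of_mul_eq_one hθ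
  have hdiv : -(-(m + 1) * K) / (m + 1) = K := by field_simp
  rw [hdiv]
  linear_combination (-K * J s ^ (θ - 1) * b) * hθ

-- Equality holds at `s = t` to first order, so the second-order terms of the two sides compare.
theorem deriv_mul_add_sq_nonpos_of_eventually_le {J K : ℝ → ℝ} {m t k : ℝ} (hm : 0 < m)
    (hJt : 0 < J t) (hJ : ∀ᶠ s in 𝓝 t, HasDerivAt J (-(m + 1) * K s) s) (hK : HasDerivAt K k t)
    (hle : ∀ᶠ s in 𝓝[>] t, J t - ((J t - J s) / (m + 1) + K t * (s - t)) / 2 ≤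
      J s ^ (1 / (m + 1)) * J t ^ (m / (m + 1))) :
    k * J t + 2 * m * K t ^ 2 ≤ 0 := by
  obtain ⟨θ, hθ⟩ : ∃ θ, θ = 1 / (m + 1) := ⟨_, rfl⟩
  have hθm : θ * (m + 1) = 1 := by rw [hθ]; field_simp
  have hθ' : m / (m + 1) = 1 - θ := by rw [hθ]; field_simp; ring
  rw [← hθ, hθ'] at hle
  have hpow₀ : J t ^ θ * J t ^ (1 - θ) = J t := by
    rw [← rpow_add hJt, add_sub_cancel, rpow_one]
  have hpow₁ : J t ^ (θ - 1) * J t ^ (1 - θ) = 1 := by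
    rw [← rpow_add hJt, sub_add_sub_cancel, sub_self, rpow_zero]
  have hpow₂ : J t ^ (θ - 1 - 1) * J t ^ (1 - θ) * J t = 1 := by
    rw [← rpow_add hJt, ← rpow_add_one hJt.ne']
    ring_nf
    exact rpow_zero _
  let F s := J s ^ θ * J t ^ (1 - θ) - (J t - ((J t - J s) / (m + 1) + K t * (s - t)) / 2)
  let F' s := -(K s * J s ^ (θ - 1)) * J t ^ (1 - θ) + (K s + K t) / 2
  have hF : ∀ᶠ s in 𝓝 t, HasDerivAt F (F' s) s := by
    filter_upwards [hJ, hJ.self_of_nhds.continuousAt.eventually (lt_mem_nhds hJt)] with s hs hJs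
    exact hasDerivAt_rpow_mul_const_sub hJs hθm hs
  have hF' := ((hK.mul (hJ.self_of_nhds.rpow_const (p := θ - 1) (Or.inl hJt.ne'))).neg.mul_const
    (J t ^ (1 - θ))).add ((hK.add_const (K t)).div_const 2)
  have hF't : F' t = 0 := by linear_combination (-K t) * hpow₁
  have hFt : F t = 0 := by simp [F, hpow₀]
  have hmin : ∀ᶠ s in 𝓝[>] t, F t ≤ F s := hle.mono fun s hs ↦ hFt ▸ sub_nonneg.2 hs
  have hsecond := mul_nonneg (nonneg_of_hasDerivAt_of_eventually_le hF hF't hF' hmin) hJt.le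
  linear_combination 2 * hsecond - 2 * k * J t * hpow₁ +
    2 * K t ^ 2 * (m + 1) * (θ - 1) * hpow₂ + 2 * K t ^ 2 * hθm

theorem second_deriv_mul_sub_eq {J K H' : ℝ → ℝ} {a c p t k h : ℝ} (hJt : 0 < J t)
    (hJ : HasDerivAt J (-p * K t) t) (hK : HasDerivAt K k t) (hH' : HasDerivAt H' h t)
    (hH'eq : H' =ᶠ[𝓝 t] fun r ↦ 2 * J r ^ a * (c * K r - J r ^ (1 - a))) :
    h * J t - H' t * (-p * K t) =
      2 * c * J t ^ a * (k * J t + p * (1 - a) * K t ^ 2) := by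
  have hprod := ((hJ.rpow_const (p := a) (Or.inl hJt.ne')).const_mul 2).fun_mul
    ((hK.const_mul c).fun_sub (hJ.rpow_const (p := 1 - a) (Or.inl hJt.ne')))
  have hpow : ∀ b : ℝ, J t ^ (b - 1) * J t = J t ^ b := fun b ↦ by
    rw [← rpow_add_one hJt.ne', sub_add_cancel]
  rw [hH'.unique (hprod.congr_of_eventuallyEq hH'eq), hH'eq.self_of_nhds]
  linear_combination (2 * (-p * K t * a) * (c * K t - J t ^ (1 - a))) * hpow a +
    (2 * J t ^ a * (p * K t * (1 - a))) * hpow (1 - a)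

theorem differentiableAt_of_eventuallyEq_rpow_mul_sub {J K G : ℝ → ℝ} {a b c t : ℝ} (hc : c ≠ 0)
    (hJt : 0 < J t) (hJ : DifferentiableAt ℝ J t) (hG : DifferentiableAt ℝ G t)
    (hGeq : G =ᶠ[𝓝 t] fun r ↦ 2 * J r ^ a * (c * K r - J r ^ b)) : DifferentiableAt ℝ K t := by
  have hKeq : K =ᶠ[𝓝 t] fun r ↦ (G r / (2 * J r ^ a) + J r ^ b) / c := by
    filter_upwards [hGeq, hJ.continuousAt.eventually (lt_mem_nhds hJt)] with r hr hJr
    have := rpow_pos_of_pos hJr a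
    rw [hr]
    field_simp
    ring
  have hJa := hJ.rpow_const (p := a) (Or.inl hJt.ne')
  have hJb := hJ.rpow_const (p := b) (Or.inl hJt.ne')
  have := rpow_pos_of_pos hJt a
  have hquot := ((hG.div (hJa.const_mul 2) (by positivity)).add hJb).div_const c
  exact hquot.congr_of_eventuallyEq hKeq

end RealVariable

section Integral

open Set Filter Topology

variable {α : Type*} [MeasurableSpace α] {μ : Measure α}

theorem memLp_of_integrable_rpow {f : α → ℝ} {p : ℝ} (hp : 0 < p) (hf : ∀ x, 0 ≤ f x)
    (hfm : AEStronglyMeasurable f μ) (hfi : Integrable (fun x ↦ f x ^ p) μ) :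
    MemLp f (ENNReal.ofReal p) μ := by
  rw [← integrable_norm_rpow_iff hfm (by simpa using hp) ENNReal.ofReal_ne_top,
    ENNReal.toReal_ofReal hp.le]
  simpa only [norm_of_nonneg (hf _)] using hfi

section Power

variable {f g : α → ℝ} {m : ℝ}

theorem holderConjugate_add_one (hm : 0 < m) : (m + 1).HolderConjugate ((m + 1) / m) := by
  refine ⟨?_, by positivity, by positivity⟩
  field_simp
  ring

theorem rpow_rpow_add_one_div {a : ℝ} (ha : 0 ≤ a) (hm : m ≠ 0) :
    (a ^ m) ^ ((m + 1) / m) = a ^ (m + 1) := by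
  rw [← rpow_mul ha, mul_div_cancel₀ _ hm]

theorem memLp_rpow (hm : 0 < m) (hg : ∀ x, 0 ≤ g x) (hgm : AEStronglyMeasurable g μ)
    (hgi : Integrable (fun x ↦ g x ^ (m + 1)) μ) :
    MemLp (fun x ↦ g x ^ m) (ENNReal.ofReal ((m + 1) / m)) μ :=
  memLp_of_integrable_rpow (by positivity) (fun x ↦ rpow_nonneg (hg x) m)
    (hgm.aemeasurable.pow_const m).aestronglyMeasurable
    (by simpa only [rpow_rpow_add_one_div (hg _) hm.ne'] using hgi)

theorem integrable_mul_rpow (hm : 0 < m) (hf : ∀ x, 0 ≤ f x) (hg : ∀ x, 0 ≤ g x)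
    (hfm : AEStronglyMeasurable f μ) (hgm : AEStronglyMeasurable g μ)
    (hfi : Integrable (fun x ↦ f x ^ (m + 1)) μ) (hgi : Integrable (fun x ↦ g x ^ (m + 1)) μ) :
    Integrable (fun x ↦ f x * g x ^ m) μ :=
  have := (holderConjugate_add_one hm).ennrealOfReal
  (memLp_of_integrable_rpow (by positivity) hf hfm hfi).integrable_mul (memLp_rpow hm hg hgm hgi)

theorem integral_mul_rpow_le (hm : 0 < m) (hf : ∀ x, 0 ≤ f x) (hg : ∀ x, 0 ≤ g x)
    (hfm : AEStronglyMeasurable f μ) (hgm : AEStronglyMeasurable g μ)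
    (hfi : Integrable (fun x ↦ f x ^ (m + 1)) μ) (hgi : Integrable (fun x ↦ g x ^ (m + 1)) μ) :
    ∫ x, f x * g x ^ m ∂μ ≤
      (∫ x, f x ^ (m + 1) ∂μ) ^ (1 / (m + 1)) * (∫ x, g x ^ (m + 1) ∂μ) ^ (m / (m + 1)) := by
  have hholder := integral_mul_le_Lp_mul_Lq_of_nonneg (holderConjugate_add_one hm) (ae_of_all _ hf)
    (ae_of_all _ fun x ↦ rpow_nonneg (hg x) m)
    (memLp_of_integrable_rpow (by positivity) hf hfm hfi) (memLp_rpow hm hg hgm hgi)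
  simpa only [rpow_rpow_add_one_div (hg _) hm.ne', one_div_div] using hholder

end Power

theorem holderConjugate_div_sub_two {d : ℝ} (hd : 2 < d) :
    (d / (d - 2)).HolderConjugate (d / 2) := by
  have := sub_pos.2 hd
  refine ⟨?_, by positivity, by positivity⟩
  field_simp
  ring

theorem integral_sq_mul_sq_le_of_forall_notMem_eq_zero {f g : α → ℝ} {A : Set α} {d : ℝ}
    (hd : 2 < d) (hf : ∀ x, 0 ≤ f x) (hg : ∀ x, 0 ≤ g x) (hgA : ∀ x ∉ A, g x = 0)
    (hfm : AEStronglyMeasurable f μ) (hgm : AEStronglyMeasurable g μ)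
    (hfi : Integrable (fun x ↦ f x ^ (2 * d / (d - 2))) μ)
    (hgi : Integrable (fun x ↦ g x ^ d) μ) :
    ∫ x, f x ^ 2 * g x ^ 2 ∂μ ≤
      (∫ x in A, f x ^ (2 * d / (d - 2)) ∂μ) ^ ((d - 2) / d) * (∫ x, g x ^ d ∂μ) ^ (2 / d) := by
  have hd₀ : 0 < d := by linarith
  have := sub_pos.2 hd
  have hfpow x : (f x ^ 2) ^ (d / (d - 2)) = f x ^ (2 * d / (d - 2)) := by
    rw [← rpow_natCast_mul (hf x), Nat.cast_ofNat, mul_div_assoc]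
  have hgpow x : (g x ^ 2) ^ (d / 2) = g x ^ d := by
    rw [← rpow_natCast_mul (hg x), Nat.cast_ofNat, mul_div_cancel₀ _ two_ne_zero]
  have hholder := integral_mul_le_Lp_mul_Lq_of_nonneg (μ := μ.restrict A)
    (f := fun x ↦ f x ^ 2) (g := fun x ↦ g x ^ 2) (holderConjugate_div_sub_two hd)
    (ae_of_all _ fun x ↦ sq_nonneg (f x)) (ae_of_all _ fun x ↦ sq_nonneg (g x))
    (memLp_of_integrable_rpow (by positivity) (fun x ↦ sq_nonneg (f x)) (hfm.restrict.pow 2)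
      (by simpa only [hfpow] using hfi.restrict))
    (memLp_of_integrable_rpow (by positivity) (fun x ↦ sq_nonneg (g x)) (hgm.restrict.pow 2)
      (by simpa only [hgpow] using hgi.restrict))
  simp only [hfpow, hgpow, one_div_div] at hholder
  rwa [setIntegral_eq_integral_of_forall_compl_eq_zero fun x hx ↦ by simp [hgA x hx],
    setIntegral_eq_integral_of_forall_compl_eq_zero (f := fun x ↦ g x ^ d)
      fun x hx ↦ by rw [hgA x hx, zero_rpow hd₀.ne']] at hholder

theorem hasDerivAt_integral_mul_of_hasCompactSupport {X : Type*} [TopologicalSpace X]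
    [MeasurableSpace X] [OpensMeasurableSpace X] {μ : Measure X} [IsFiniteMeasureOnCompacts μ]
    {U : Set ℝ} (hU : IsOpen U) {v w : ℝ → X → ℝ} (hv : ∀ s ∈ U, Continuous (v s))
    (hw : ContinuousOn (Function.uncurry w) (U ×ˢ univ))
    (hvw : ∀ s ∈ U, ∀ x, HasDerivAt (fun r ↦ v r x) (w s x) s)
    {f : X → ℝ} (hf : Continuous f) (hfc : HasCompactSupport f) {t : ℝ} (ht : t ∈ U) :
    HasDerivAt (fun s ↦ ∫ x, f x * v s x ∂μ) (∫ x, f x * w t x ∂μ) t := by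
  obtain ⟨δ, hδ, hball⟩ := Metric.nhds_basis_closedBall.mem_iff.1 (hU.mem_nhds ht)
  obtain ⟨C, hC⟩ := ((isCompact_closedBall t δ).prod hfc).exists_bound_of_continuousOn
    (hw.mono (prod_mono hball (subset_univ _)))
  have hwt : Continuous (w t) :=
    hw.comp_continuous (f := fun x ↦ (t, x)) (by fun_prop) fun x ↦ ⟨ht, mem_univ x⟩
  refine (hasDerivAt_integral_of_dominated_loc_of_deriv_le (F := fun s x ↦ f x * v s x)
    (F' := fun s x ↦ f x * w s x) (bound := fun x ↦ ‖f x‖ * C) (Metric.closedBall_mem_nhds t hδ)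
    ?_ ?_ ?_ (ae_of_all _ fun x s hs ↦ ?_) ?_ (ae_of_all _ fun x s hs ↦ ?_)).2
  · filter_upwards [hU.mem_nhds ht] with s hs
    exact (hf.mul (hv s hs)).aestronglyMeasurable
  · exact (hf.mul (hv t ht)).integrable_of_hasCompactSupport hfc.mul_right
  · exact (hf.mul hwt).aestronglyMeasurable
  · rw [norm_mul]
    by_cases hx : x ∈ tsupport f
    · exact mul_le_mul_of_nonneg_left (hC (s, x) ⟨hs, hx⟩) (norm_nonneg _)
    · simp [image_eq_zero_of_notMem_tsupport hx]
  · exact (hf.norm.integrable_of_hasCompactSupport hfc.norm).mul_const C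
  · exact (hvw s (hball hs) x).const_mul (f x)

theorem tendsto_setIntegral_le_norm_atTop {E F : Type*} [NormedAddCommGroup E] [MeasurableSpace E]
    [OpensMeasurableSpace E] [NormedAddCommGroup F] [NormedSpace ℝ F] {μ : Measure E} {f : E → F}
    (hf : Integrable f μ) :
    Tendsto (fun n : ℕ ↦ ∫ x in {x | (n : ℝ) + 1 ≤ ‖x‖}, f x ∂μ) atTop (𝓝 0) := by
  have hanti : Antitone fun n : ℕ ↦ {x : E | (n : ℝ) + 1 ≤ ‖x‖} :=
    fun n k hnk x (hx : (k : ℝ) + 1 ≤ ‖x‖) ↦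
      (add_le_add_left (Nat.cast_le.2 hnk) (1 : ℝ)).trans hx
  have hempty : ⋂ n : ℕ, {x : E | (n : ℝ) + 1 ≤ ‖x‖} = ∅ :=
    eq_empty_of_forall_notMem fun x hx ↦ by
      obtain ⟨n, hn⟩ := exists_nat_gt ‖x‖
      have : (n : ℝ) + 1 ≤ ‖x‖ := mem_iInter.1 hx n
      linarith
  simpa [hempty] using tendsto_setIntegral_of_antitone
    (fun n ↦ measurableSet_le measurable_const measurable_norm) hanti ⟨0, hf.integrableOn⟩

end Integral

section Gradient

open Set Filter Topology InnerProductSpace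
open scoped Gradient Laplacian

variable {E : Type*} [NormedAddCommGroup E] [InnerProductSpace ℝ E]

theorem inner_le_half_mul_norm_sq_add {ε : ℝ} (hε : 0 < ε) (x y : E) :
    inner ℝ x y ≤ ε / 2 * ‖y‖ ^ 2 + 1 / (2 * ε) * ‖x‖ ^ 2 := by
  have hsq : ‖x - ε • y‖ ^ 2 = ‖x‖ ^ 2 - 2 * (ε * inner ℝ x y) + ε ^ 2 * ‖y‖ ^ 2 := by
    rw [norm_sub_sq_real, real_inner_smul_right, norm_smul, mul_pow, norm_eq_abs, sq_abs]
  have hnonneg : 0 ≤ 1 / (2 * ε) * ‖x - ε • y‖ ^ 2 := by positivity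
  rw [hsq] at hnonneg
  field_simp at hnonneg ⊢
  linarith

section Complete

variable [CompleteSpace E] {f g h : E → ℝ} {x : E}

theorem gradient_fun_mul (hf : DifferentiableAt ℝ f x) (hg : DifferentiableAt ℝ g x) :
    ∇ (fun y ↦ f y * g y) x = f x • ∇ g x + g x • ∇ f x := by
  simp [gradient, fderiv_fun_mul hf hg]

theorem gradient_comp_smul (f : E → ℝ) (c : ℝ) (x : E) :
    ∇ (fun y ↦ f (c • y)) x = c • ∇ f (c • x) := by
  simp [gradient, fderiv_comp_smul]

theorem continuous_gradient (hf : ContDiff ℝ 1 f) : Continuous (∇ f) :=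
  (toDual ℝ E).symm.continuous.comp (hf.continuous_fderiv one_ne_zero)

theorem hasCompactSupport_gradient (hf : HasCompactSupport f) : HasCompactSupport (∇ f) :=
  (hf.fderiv ℝ).comp_left (map_zero (toDual ℝ E).symm)

theorem gradient_contDiffBump_eq_zero {c : E} (η : ContDiffBump c)
    (hx : x ∈ Metric.ball c η.rIn) : ∇ η x = 0 := by
  rw [(η.eventuallyEq_one_of_mem_ball hx).gradient_eq]
  exact gradient_const ..

theorem inner_gradient_mul_le (hf : DifferentiableAt ℝ f x) (hg : DifferentiableAt ℝ g x)
    (hf₀ : 0 ≤ f x) (hf₁ : f x ≤ 1) {ε : ℝ} (hε : 0 < ε) (w : E) :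
    inner ℝ (∇ (fun y ↦ f y * g y) x) w ≤
      (1 + ε) / 2 * ‖w‖ ^ 2 + 1 / 2 * ‖∇ g x‖ ^ 2 +
        1 / (2 * ε) * (g x ^ 2 * ‖∇ f x‖ ^ 2) := by
  have hmain := inner_le_half_mul_norm_sq_add one_pos (f x • ∇ g x) w
  have herror := inner_le_half_mul_norm_sq_add hε (g x • ∇ f x) w
  have hcut : ‖f x • ∇ g x‖ ≤ ‖∇ g x‖ := by
    rw [norm_smul, norm_of_nonneg hf₀]
    exact mul_le_of_le_one_left (norm_nonneg _) hf₁
  have hcut_sq := pow_le_pow_left₀ (norm_nonneg _) hcut 2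
  rw [norm_smul (g x), mul_pow, norm_eq_abs, sq_abs] at herror
  rw [gradient_fun_mul hf hg, inner_add_left]
  linarith

end Complete

section FiniteDimensional

variable [FiniteDimensional ℝ E] [MeasurableSpace E] [BorelSpace E] {μ : Measure E}
  {f g h : E → ℝ}

theorem integral_mul_laplacian [μ.IsAddHaarMeasure] (hf : ContDiff ℝ 1 f)
    (hfc : HasCompactSupport f) (hg : ContDiff ℝ 2 g) :
    ∫ x, f x * Δ g x ∂μ = -∫ x, inner ℝ (∇ f x) (∇ g x) ∂μ := by
  let b := stdOrthonormalBasis ℝ E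
  have hg' : ContDiff ℝ 1 (fderiv ℝ g) := hg.fderiv_right le_rfl
  have hgb i : ContDiff ℝ 1 fun x ↦ fderiv ℝ g x (b i) := hg'.clm_apply contDiff_const
  have hfb i : Continuous fun x ↦ fderiv ℝ f x (b i) :=
    (hf.continuous_fderiv one_ne_zero).clm_apply continuous_const
  have hgbb i : Continuous fun x ↦ fderiv ℝ (fun y ↦ fderiv ℝ g y (b i)) x (b i) :=
    ((hgb i).continuous_fderiv one_ne_zero).clm_apply continuous_const
  have hlap x : f x * Δ g x = ∑ i, f x * fderiv ℝ (fun y ↦ fderiv ℝ g y (b i)) x (b i) := by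
    rw [laplacian_eq_iteratedFDeriv_orthonormalBasis g b, Finset.mul_sum]
    refine Finset.sum_congr rfl fun i _ ↦ ?_
    rw [iteratedFDeriv_two_apply, fderiv_clm_apply (hg'.differentiable one_ne_zero x)
      (differentiableAt_const _)]
    simp
  have hinner x : inner ℝ (∇ f x) (∇ g x) = ∑ i, fderiv ℝ f x (b i) * fderiv ℝ g x (b i) := by
    rw [← b.sum_inner_mul_inner]
    simp [inner_gradient_left, inner_gradient_right]
  have hlapi i : Integrable (fun x ↦ f x * fderiv ℝ (fun y ↦ fderiv ℝ g y (b i)) x (b i)) μ :=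
    (hf.continuous.mul (hgbb i)).integrable_of_hasCompactSupport hfc.mul_right
  have hinneri i : Integrable (fun x ↦ fderiv ℝ f x (b i) * fderiv ℝ g x (b i)) μ :=
    ((hfb i).mul (hgb i).continuous).integrable_of_hasCompactSupport
      (hfc.fderiv_apply ℝ (b i)).mul_right
  simp only [hlap, hinner]
  rw [integral_finsetSum _ fun i _ ↦ hlapi i, integral_finsetSum _ fun i _ ↦ hinneri i,
    ← Finset.sum_neg_distrib]
  exact Finset.sum_congr rfl fun i _ ↦
    integral_mul_fderiv_eq_neg_fderiv_mul_of_integrable (hinneri i) (hlapi i)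
      ((hf.continuous.mul (hgb i).continuous).integrable_of_hasCompactSupport hfc.mul_right)
      (fun x _ ↦ hf.differentiable one_ne_zero x) fun x _ ↦ (hgb i).differentiable one_ne_zero x

theorem integral_inner_gradient_mul_le [IsFiniteMeasureOnCompacts μ]
    (hf : ContDiff ℝ 1 f) (hfc : HasCompactSupport f) (hf₀ : ∀ x, 0 ≤ f x) (hf₁ : ∀ x, f x ≤ 1)
    (hg : ContDiff ℝ 1 g) (hgi : Integrable (fun x ↦ ‖∇ g x‖ ^ 2) μ)
    (hh : ContDiff ℝ 1 h) (hhi : Integrable (fun x ↦ ‖∇ h x‖ ^ 2) μ) {ε : ℝ} (hε : 0 < ε) :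
    ∫ x, inner ℝ (∇ (fun y ↦ f y * g y) x) (∇ h x) ∂μ ≤
      (1 + ε) / 2 * ∫ x, ‖∇ h x‖ ^ 2 ∂μ + 1 / 2 * ∫ x, ‖∇ g x‖ ^ 2 ∂μ +
        1 / (2 * ε) * ∫ x, g x ^ 2 * ‖∇ f x‖ ^ 2 ∂μ := by
  have hfg : Integrable (fun x ↦ g x ^ 2 * ‖∇ f x‖ ^ 2) μ := by
    have hcont := (hg.continuous.pow 2).mul ((continuous_gradient hf).norm.pow 2)
    refine hcont.integrable_of_hasCompactSupport ?_
    exact (hasCompactSupport_gradient hfc).mono fun x hx h₀ ↦ hx (by simp [h₀])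
  have hleft : Integrable (fun x ↦ inner ℝ (∇ (fun y ↦ f y * g y) x) (∇ h x)) μ := by
    have hcont := (continuous_gradient (hf.mul hg)).inner (𝕜 := ℝ) (continuous_gradient hh)
    have hsupp : HasCompactSupport (∇ fun y ↦ f y * g y) :=
      hasCompactSupport_gradient hfc.mul_right
    exact hcont.integrable_of_hasCompactSupport (hsupp.mono fun x hx h₀ ↦ hx (by simp [h₀]))
  have henergy := (hhi.const_mul ((1 + ε) / 2)).fun_add (hgi.const_mul (1 / 2))
  have herror := hfg.const_mul (1 / (2 * ε))
  rw [← integral_const_mul, ← integral_const_mul, ← integral_const_mul,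
    ← integral_add (hhi.const_mul _) (hgi.const_mul _), ← integral_add henergy herror]
  exact integral_mono hleft (henergy.fun_add herror) fun x ↦
    inner_gradient_mul_le (hf.differentiable one_ne_zero x) (hg.differentiable one_ne_zero x)
      (hf₀ x) (hf₁ x) hε _

end FiniteDimensional

theorem lap_eq_laplacian (d : ℕ) (u : EuclideanSpace ℝ (Fin d) → ℝ) : lap d u = Δ u := by
  rw [laplacian_eq_iteratedFDeriv_orthonormalBasis u (EuclideanSpace.basisFun (Fin d) ℝ)]
  ext x
  simp [lap]

end Gradient

section Cutoff

open Set Filter Topology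
open scoped Gradient

variable {E : Type*} [NormedAddCommGroup E] [InnerProductSpace ℝ E] [FiniteDimensional ℝ E]
  [MeasurableSpace E]

/-- A sequence of compactly supported `C¹` cutoffs `φ n → 1` whose gradients are negligible in `L²`
for the weight `u²`. It serves to test an equation against `u`, which need not have compact support:
test against `φ n * u` and let `n → ∞`. -/
structure IsCutoffSequence (μ : Measure E) (u : E → ℝ) (φ : ℕ → E → ℝ) : Prop where
  contDiff n : ContDiff ℝ 1 (φ n)
  hasCompactSupport n : HasCompactSupport (φ n)
  nonneg n x : 0 ≤ φ n x
  le_one n x : φ n x ≤ 1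
  tendsto_one x : Tendsto (fun n ↦ φ n x) atTop (𝓝 1)
  tendsto_integral_zero :
    Tendsto (fun n ↦ ∫ x, u x ^ 2 * ‖∇ (φ n) x‖ ^ 2 ∂μ) atTop (𝓝 0)

variable [BorelSpace E] {μ : Measure E}

theorem integral_norm_gradient_comp_smul_pow_finrank [μ.IsAddHaarMeasure] (f : E → ℝ) {c : ℝ}
    (hc : c ≠ 0) :
    ∫ x, ‖∇ (fun y ↦ f (c • y)) x‖ ^ Module.finrank ℝ E ∂μ =
      ∫ x, ‖∇ f x‖ ^ Module.finrank ℝ E ∂μ := by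
  simp only [gradient_comp_smul, norm_smul, mul_pow]
  rw [integral_const_mul, Measure.integral_comp_smul μ (fun x ↦ ‖∇ f x‖ ^ Module.finrank ℝ E),
    smul_eq_mul, abs_inv, abs_pow, norm_eq_abs, mul_inv_cancel_left₀]
  positivity

theorem integral_sq_mul_norm_gradient_bump_le [μ.IsAddHaarMeasure] {d : ℕ}
    (hdim : Module.finrank ℝ E = d) (hd : 2 < d) {u : E → ℝ} (hu : Continuous u)
    (hu₀ : ∀ x, 0 ≤ u x) (hui : Integrable (fun x ↦ u x ^ (2 * (d : ℝ) / ((d : ℝ) - 2))) μ)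
    (η : ContDiffBump (0 : E)) {c : ℝ} (hc : 0 < c) :
    ∫ x, u x ^ 2 * ‖∇ (fun y ↦ η (c • y)) x‖ ^ 2 ∂μ ≤
      (∫ x in {x | η.rIn / c ≤ ‖x‖}, u x ^ (2 * (d : ℝ) / ((d : ℝ) - 2)) ∂μ) ^
          (((d : ℝ) - 2) / d) *
        (∫ x, ‖∇ η x‖ ^ d ∂μ) ^ (2 / (d : ℝ)) := by
  have hcont : Continuous (∇ fun y ↦ η (c • y)) :=
    continuous_gradient (η.contDiff.comp (contDiff_const_smul c))
  have hsupp : HasCompactSupport (∇ fun y ↦ η (c • y)) :=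
    hasCompactSupport_gradient (η.hasCompactSupport.comp_smul hc.ne')
  have hzero : ∀ x ∉ {x : E | η.rIn / c ≤ ‖x‖}, ‖∇ (fun y ↦ η (c • y)) x‖ = 0 := fun x hx ↦ by
    have hball : c • x ∈ Metric.ball (0 : E) η.rIn := by
      rw [mem_ball_zero_iff, norm_smul, norm_of_nonneg hc.le, ← lt_div_iff₀' hc]
      exact not_le.1 hx
    rw [gradient_comp_smul, gradient_contDiffBump_eq_zero η hball, smul_zero, norm_zero]
  have hint : Integrable (fun x ↦ ‖∇ (fun y ↦ η (c • y)) x‖ ^ (d : ℝ)) μ := by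
    simp only [rpow_natCast]
    refine (hcont.norm.pow _).integrable_of_hasCompactSupport (hsupp.mono fun x hx h₀ ↦ hx ?_)
    simp [h₀, (zero_lt_two.trans hd).ne']
  have hholder := integral_sq_mul_sq_le_of_forall_notMem_eq_zero (Nat.ofNat_lt_cast.2 hd) hu₀
    (fun x ↦ norm_nonneg (∇ (fun y ↦ η (c • y)) x)) hzero hu.aestronglyMeasurable
    hcont.norm.aestronglyMeasurable hui hint
  rw [← hdim] at hholder ⊢
  simpa only [rpow_natCast, integral_norm_gradient_comp_smul_pow_finrank _ hc.ne'] using hholder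

theorem exists_isCutoffSequence [μ.IsAddHaarMeasure] {d : ℕ} (hdim : Module.finrank ℝ E = d)
    (hd : 2 < d) {u : E → ℝ} (hu : Continuous u) (hu₀ : ∀ x, 0 ≤ u x)
    (hui : Integrable (fun x ↦ u x ^ (2 * (d : ℝ) / ((d : ℝ) - 2))) μ) :
    ∃ φ, IsCutoffSequence μ u φ := by
  let η : ContDiffBump (0 : E) := ⟨1, 2, one_pos, one_lt_two⟩
  let c (n : ℕ) : ℝ := ((n : ℝ) + 1)⁻¹
  have hc n : 0 < c n := by positivity
  have hc₀ : Tendsto c atTop (𝓝 0) := by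
    simpa only [one_div] using tendsto_one_div_add_atTop_nhds_zero_nat (𝕜 := ℝ)
  refine ⟨fun n x ↦ η (c n • x), fun n ↦ η.contDiff.comp (contDiff_const_smul (c n)),
    fun n ↦ η.hasCompactSupport.comp_smul (hc n).ne', fun n x ↦ η.nonneg, fun n x ↦ η.le_one,
    fun x ↦ ?_, ?_⟩
  · have hlim := (η.continuous.tendsto ((0 : ℝ) • x)).comp (hc₀.smul_const x)
    rwa [zero_smul, η.one_of_mem_closedBall (by simp [η])] at hlim
  · have hexp : 0 < ((d : ℝ) - 2) / d := by
      have := sub_pos.2 (Nat.ofNat_lt_cast.2 hd : (2 : ℝ) < d)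
      positivity
    have htail := ((tendsto_setIntegral_le_norm_atTop hui).rpow_const (Or.inr hexp.le)).mul_const
      ((∫ x, ‖∇ η x‖ ^ d ∂μ) ^ (2 / (d : ℝ)))
    rw [zero_rpow hexp.ne', zero_mul] at htail
    refine squeeze_zero (fun n ↦ integral_nonneg fun x ↦ by positivity) (fun n ↦ ?_) htail
    simpa only [η, c, div_inv_eq_mul, one_mul] using
      integral_sq_mul_norm_gradient_bump_le hdim hd hu hu₀ hui η (hc n)

end Cutoff

section Flow

open Set Filter Topology
open scoped Gradient Laplacian

variable {E : Type*} [NormedAddCommGroup E] [InnerProductSpace ℝ E] [FiniteDimensional ℝ E]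

/-- `v` is a positive `C²` solution of the nonlinear diffusion equation `∂v/∂t = Δ(v^m)` for times
in the open set `U`. -/
structure IsDiffusionFlow (m : ℝ) (U : Set ℝ) (v : ℝ → E → ℝ) : Prop where
  isOpen : IsOpen U
  pos : ∀ t ∈ U, ∀ x, 0 < v t x
  contDiffOn : ContDiffOn ℝ 2 (Function.uncurry v) (U ×ˢ univ)
  hasDerivAt : ∀ t ∈ U, ∀ x, HasDerivAt (fun s ↦ v s x) (Δ (fun y ↦ v t y ^ m) x) t

variable {m : ℝ} {U : Set ℝ} {v : ℝ → E → ℝ} {t s : ℝ}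

namespace IsDiffusionFlow

theorem contDiff (hv : IsDiffusionFlow m U v) (ht : t ∈ U) : ContDiff ℝ 2 (v t) :=
  contDiffOn_univ.1 <| hv.contDiffOn.comp (f := fun x ↦ (t, x))
    (contDiff_prodMk_right t).contDiffOn fun x _ ↦ ⟨ht, mem_univ x⟩

theorem contDiff_rpow (hv : IsDiffusionFlow m U v) (ht : t ∈ U) :
    ContDiff ℝ 2 fun x ↦ v t x ^ m :=
  (hv.contDiff ht).rpow_const_of_ne fun x ↦ (hv.pos t ht x).ne'

theorem continuousOn_laplacian_rpow (hv : IsDiffusionFlow m U v) :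
    ContinuousOn (Function.uncurry fun t ↦ Δ fun x ↦ v t x ^ m) (U ×ˢ univ) := by
  have hopen : IsOpen (U ×ˢ (univ : Set E)) := hv.isOpen.prod isOpen_univ
  have hcont : ContinuousOn (fun p ↦ fderiv ℝ (Function.uncurry v) p (1, 0)) (U ×ˢ univ) :=
    (hv.contDiffOn.continuousOn_fderiv_of_isOpen hopen one_le_two).clm_apply continuousOn_const
  refine hcont.congr fun p hp ↦ ?_
  have hfderiv : HasFDerivAt (Function.uncurry v) (fderiv ℝ (Function.uncurry v) p) (p.1, p.2) :=
    ((hv.contDiffOn.contDiffAt (hopen.mem_nhds hp)).differentiableAt two_ne_zero).hasFDerivAt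
  have hline : HasDerivAt (fun r ↦ (r, p.2)) ((1 : ℝ), (0 : E)) p.1 :=
    (hasDerivAt_id p.1).prodMk (hasDerivAt_const p.1 p.2)
  exact (hv.hasDerivAt p.1 hp.1 p.2).unique
    (HasFDerivAt.comp_hasDerivAt (l := Function.uncurry v) p.1 hfderiv hline)

end IsDiffusionFlow

variable [MeasurableSpace E]

/-- The integral `∫ f^p`; along the flow it is used with `p = m + 1`, where it is the Lyapunov
functional `J`. -/
def powerMass (μ : Measure E) (p : ℝ) (f : E → ℝ) : ℝ := ∫ x, f x ^ p ∂μ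

/-- The Dirichlet integral `∫ |∇u|²`. As a Bochner integral it is `0` when `∇u` is not square
integrable. -/
def dirichletEnergy (μ : Measure E) (u : E → ℝ) : ℝ := ∫ x, ‖∇ u x‖ ^ 2 ∂μ

/-- A diffusion flow along which `∫ v^(m+1)` is finite and is dissipated at the rate
`(m + 1) ∫ |∇ v^m|²`, the rate found by formally testing the equation against `v^m`. -/
structure IsDissipativeFlow (μ : Measure E) (m : ℝ) (U : Set ℝ) (v : ℝ → E → ℝ) : Prop
    extends IsDiffusionFlow m U v where
  integrable : ∀ t ∈ U, Integrable (fun x ↦ v t x ^ (m + 1)) μ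
  hasDerivAt_powerMass : ∀ t ∈ U, HasDerivAt (fun r ↦ powerMass μ (m + 1) (v r))
    (-(m + 1) * dirichletEnergy μ fun x ↦ v t x ^ m) t

theorem dirichletEnergy_nonneg (μ : Measure E) (u : E → ℝ) : 0 ≤ dirichletEnergy μ u :=
  integral_nonneg fun _ ↦ sq_nonneg _

theorem integrable_of_dirichletEnergy_pos {μ : Measure E} {u : E → ℝ}
    (hu : 0 < dirichletEnergy μ u) : Integrable (fun x ↦ ‖∇ u x‖ ^ 2) μ :=
  Not.imp_symm integral_undef hu.ne'

variable {μ : Measure E}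

theorem IsDiffusionFlow.hasDerivAt_integral_mul [BorelSpace E] [μ.IsAddHaarMeasure]
    (hv : IsDiffusionFlow m U v) {ψ : E → ℝ} (hψ : ContDiff ℝ 1 ψ) (hψc : HasCompactSupport ψ)
    (ht : t ∈ U) :
    HasDerivAt (fun r ↦ ∫ x, ψ x * v r x ∂μ)
      (-∫ x, inner ℝ (∇ ψ x) (∇ (fun y ↦ v t y ^ m) x) ∂μ) t := by
  rw [← integral_mul_laplacian hψ hψc (hv.contDiff_rpow ht)]
  exact hasDerivAt_integral_mul_of_hasCompactSupport hv.isOpen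
    (fun s hs ↦ (hv.contDiff hs).continuous) hv.continuousOn_laplacian_rpow hv.hasDerivAt
    hψ.continuous hψc ht

namespace IsDissipativeFlow

theorem powerMass_pos [μ.IsOpenPosMeasure] (hv : IsDissipativeFlow μ m U v)
    (ht : t ∈ U) : 0 < powerMass μ (m + 1) (v t) :=
  integral_pos_of_integrable_nonneg_nonzero (x := 0)
    ((hv.contDiff ht).rpow_const_of_ne fun x ↦ (hv.pos t ht x).ne').continuous
    (hv.integrable t ht) (fun x ↦ rpow_nonneg (hv.pos t ht x).le _)
    (rpow_pos_of_pos (hv.pos t ht 0) _).ne'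

variable [BorelSpace E]

theorem tendsto_integral_cutoff {φ : ℕ → E → ℝ} (hv : IsDissipativeFlow μ m U v) (ht : t ∈ U)
    (hφ : IsCutoffSequence μ (fun x ↦ v t x ^ m) φ) :
    Tendsto (fun n ↦ ∫ x, φ n x * v t x ^ m * v t x ∂μ) atTop
      (𝓝 (powerMass μ (m + 1) (v t))) := by
  have hpow n x : φ n x * v t x ^ m * v t x = φ n x * v t x ^ (m + 1) := by
    rw [mul_assoc, ← rpow_add_one (hv.pos t ht x).ne']
  have hnonneg x : 0 ≤ v t x ^ (m + 1) := rpow_nonneg (hv.pos t ht x).le _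
  simp only [hpow]
  refine tendsto_integral_of_dominated_convergence (fun x ↦ v t x ^ (m + 1))
    (fun n ↦ (hφ.contDiff n).continuous.aestronglyMeasurable.mul
      (hv.integrable t ht).aestronglyMeasurable)
    (hv.integrable t ht) (fun n ↦ ae_of_all _ fun x ↦ ?_) (ae_of_all _ fun x ↦ ?_)
  · rw [norm_of_nonneg (mul_nonneg (hφ.nonneg n x) (hnonneg x))]
    exact mul_le_of_le_one_left (hnonneg x) (hφ.le_one n x)
  · simpa only [one_mul] using (hφ.tendsto_one x).mul_const (v t x ^ (m + 1))

theorem integral_cutoff_mul_le [IsFiniteMeasureOnCompacts μ] (hv : IsDissipativeFlow μ m U v)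
    (hm : 0 < m) (ht : t ∈ U) (hs : s ∈ U) {φ : E → ℝ} (hφ : Continuous φ)
    (hφc : HasCompactSupport φ) (hφ₁ : ∀ x, φ x ≤ 1) :
    ∫ x, φ x * v t x ^ m * v s x ∂μ ≤ ∫ x, v s x * v t x ^ m ∂μ := by
  have hcont := (hφ.mul (hv.contDiff_rpow ht).continuous).mul (hv.contDiff hs).continuous
  refine integral_mono (hcont.integrable_of_hasCompactSupport hφc.mul_right.mul_right)
    (integrable_mul_rpow hm (fun x ↦ (hv.pos s hs x).le) (fun x ↦ (hv.pos t ht x).le)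
      (hv.contDiff hs).continuous.aestronglyMeasurable
      (hv.contDiff ht).continuous.aestronglyMeasurable (hv.integrable s hs) (hv.integrable t ht))
    fun x ↦ ?_
  have hnonneg := mul_nonneg (hv.pos s hs x).le (rpow_nonneg (hv.pos t ht x).le m)
  calc φ x * v t x ^ m * v s x = φ x * (v s x * v t x ^ m) := by ring
    _ ≤ v s x * v t x ^ m := mul_le_of_le_one_left hnonneg (hφ₁ x)

variable [μ.IsAddHaarMeasure]

theorem integral_cutoff_sub_le (hv : IsDissipativeFlow μ m U v) (hm : m + 1 ≠ 0) (hts : t ≤ s)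
    (hU : Icc t s ⊆ U)
    (henergy : ∀ r ∈ Icc t s, Integrable (fun x ↦ ‖∇ (fun y ↦ v r y ^ m) x‖ ^ 2) μ)
    {φ : E → ℝ} (hφ : ContDiff ℝ 1 φ) (hφc : HasCompactSupport φ) (hφ₀ : ∀ x, 0 ≤ φ x)
    (hφ₁ : ∀ x, φ x ≤ 1) {ε : ℝ} (hε : 0 < ε) :
    ∫ x, φ x * v t x ^ m * v t x ∂μ -
      ((1 + ε) / 2 * ((powerMass μ (m + 1) (v t) - powerMass μ (m + 1) (v s)) / (m + 1)) +
        (1 / 2 * dirichletEnergy μ (fun x ↦ v t x ^ m) +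
          1 / (2 * ε) * ∫ x, (v t x ^ m) ^ 2 * ‖∇ φ x‖ ^ 2 ∂μ) * (s - t)) ≤
      ∫ x, φ x * v t x ^ m * v s x ∂μ := by
  have ht : t ∈ Icc t s := left_mem_Icc.2 hts
  have hs : s ∈ Icc t s := right_mem_Icc.2 hts
  have hu {r : ℝ} (hr : r ∈ Icc t s) : ContDiff ℝ 1 fun x ↦ v r x ^ m :=
    (hv.contDiff_rpow (hU hr)).of_le one_le_two
  let b := 1 / 2 * dirichletEnergy μ (fun x ↦ v t x ^ m) +
    1 / (2 * ε) * ∫ x, (v t x ^ m) ^ 2 * ‖∇ φ x‖ ^ 2 ∂μ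
  let g r := ∫ x, φ x * v t x ^ m * v r x ∂μ +
    ((1 + ε) / 2 * ((powerMass μ (m + 1) (v t) - powerMass μ (m + 1) (v r)) / (m + 1)) +
      b * (r - t))
  have hg {r : ℝ} (hr : r ∈ Icc t s) : ∃ g' ≥ 0, HasDerivAt g g' r := by
    have hpair := hv.hasDerivAt_integral_mul (μ := μ) (hφ.mul (hu ht)) hφc.mul_right (hU hr)
    have hmass := ((hv.hasDerivAt_powerMass r (hU hr)).const_sub
      (powerMass μ (m + 1) (v t))).div_const (m + 1) |>.const_mul ((1 + ε) / 2)
    refine ⟨_, ?_, hpair.add (hmass.add (((hasDerivAt_id r).sub_const t).const_mul b))⟩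
    have hyoung := integral_inner_gradient_mul_le hφ hφc hφ₀ hφ₁ (hu ht) (henergy t ht) (hu hr)
      (henergy r hr) hε
    rw [neg_mul, neg_neg, mul_div_cancel_left₀ _ hm]
    simp only [b, dirichletEnergy]
    linarith
  have hmono : MonotoneOn g (Icc t s) := monotoneOn_of_deriv_nonneg (convex_Icc t s)
    (fun r hr ↦ (hg hr).choose_spec.2.continuousAt.continuousWithinAt)
    (fun r hr ↦ (hg (interior_subset hr)).choose_spec.2.differentiableAt.differentiableWithinAt)
    fun r hr ↦ by
      obtain ⟨g', hg', hderiv⟩ := hg (interior_subset hr)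
      rwa [hderiv.deriv]
  have hle := hmono ht hs hts
  simp only [g, sub_self, zero_div, mul_zero, add_zero] at hle
  exact sub_le_iff_le_add.2 hle

theorem powerMass_sub_le_integral_mul_rpow {φ : ℕ → E → ℝ} (hv : IsDissipativeFlow μ m U v)
    (hm : 0 < m) (hts : t ≤ s) (hU : Icc t s ⊆ U)
    (henergy : ∀ r ∈ Icc t s, Integrable (fun x ↦ ‖∇ (fun y ↦ v r y ^ m) x‖ ^ 2) μ)
    (hφ : IsCutoffSequence μ (fun x ↦ v t x ^ m) φ) :
    powerMass μ (m + 1) (v t) -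
      ((powerMass μ (m + 1) (v t) - powerMass μ (m + 1) (v s)) / (m + 1) +
        dirichletEnergy μ (fun x ↦ v t x ^ m) * (s - t)) / 2 ≤
      ∫ x, v s x * v t x ^ m ∂μ := by
  have ht : t ∈ U := hU (left_mem_Icc.2 hts)
  have hs : s ∈ U := hU (right_mem_Icc.2 hts)
  obtain ⟨a, ha⟩ : ∃ a, a = (powerMass μ (m + 1) (v t) - powerMass μ (m + 1) (v s)) / (m + 1) :=
    ⟨_, rfl⟩
  obtain ⟨K, hK⟩ : ∃ K, K = dirichletEnergy μ fun x ↦ v t x ^ m := ⟨_, rfl⟩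
  have hε : ∀ ε > 0, powerMass μ (m + 1) (v t) - ((1 + ε) / 2 * a + 1 / 2 * K * (s - t)) ≤
      ∫ x, v s x * v t x ^ m ∂μ := fun ε hε ↦ by
    have hlim := (hv.tendsto_integral_cutoff ht hφ).sub <|
      (((hφ.tendsto_integral_zero.const_mul (1 / (2 * ε))).const_add (1 / 2 * K)).mul_const
        (s - t)).const_add ((1 + ε) / 2 * a)
    rw [mul_zero, add_zero] at hlim
    refine le_of_tendsto' hlim fun n ↦ ?_
    rw [ha, hK]
    exact (hv.integral_cutoff_sub_le (by positivity) hts hU henergy (hφ.contDiff n)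
      (hφ.hasCompactSupport n) (hφ.nonneg n) (hφ.le_one n) hε).trans
      (hv.integral_cutoff_mul_le hm ht hs (hφ.contDiff n).continuous (hφ.hasCompactSupport n)
        (hφ.le_one n))
  have hcont : Continuous fun ε ↦
      powerMass μ (m + 1) (v t) - ((1 + ε) / 2 * a + 1 / 2 * K * (s - t)) := by fun_prop
  have hlim := le_of_tendsto ((hcont.tendsto 0).mono_left (nhdsWithin_le_nhds (s := Ioi 0)))
    (eventually_mem_nhdsWithin.mono hε)
  rw [← ha, ← hK]
  linarith

theorem powerMass_sub_le_rpow_mul_rpow {φ : ℕ → E → ℝ} (hv : IsDissipativeFlow μ m U v)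
    (hm : 0 < m) (hts : t ≤ s) (hU : Icc t s ⊆ U)
    (henergy : ∀ r ∈ Icc t s, Integrable (fun x ↦ ‖∇ (fun y ↦ v r y ^ m) x‖ ^ 2) μ)
    (hφ : IsCutoffSequence μ (fun x ↦ v t x ^ m) φ) :
    powerMass μ (m + 1) (v t) -
      ((powerMass μ (m + 1) (v t) - powerMass μ (m + 1) (v s)) / (m + 1) +
        dirichletEnergy μ (fun x ↦ v t x ^ m) * (s - t)) / 2 ≤
      powerMass μ (m + 1) (v s) ^ (1 / (m + 1)) * powerMass μ (m + 1) (v t) ^ (m / (m + 1)) := by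
  have ht : t ∈ U := hU (left_mem_Icc.2 hts)
  have hs : s ∈ U := hU (right_mem_Icc.2 hts)
  exact (hv.powerMass_sub_le_integral_mul_rpow hm hts hU henergy hφ).trans <|
    integral_mul_rpow_le hm (fun x ↦ (hv.pos s hs x).le) (fun x ↦ (hv.pos t ht x).le)
      (hv.contDiff hs).continuous.aestronglyMeasurable
      (hv.contDiff ht).continuous.aestronglyMeasurable (hv.integrable s hs) (hv.integrable t ht)

theorem deriv_dirichletEnergy_mul_add_sq_nonpos {φ : ℕ → E → ℝ} {k : ℝ}
    (hv : IsDissipativeFlow μ m U v) (hm : 0 < m) (ht : t ∈ U)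
    (hφ : IsCutoffSequence μ (fun x ↦ v t x ^ m) φ)
    (hk : HasDerivAt (fun r ↦ dirichletEnergy μ fun x ↦ v r x ^ m) k t) :
    k * powerMass μ (m + 1) (v t) + 2 * m * (dirichletEnergy μ fun x ↦ v t x ^ m) ^ 2 ≤ 0 := by
  rcases (dirichletEnergy_nonneg μ fun x ↦ v t x ^ m).eq_or_lt with hzero | hpos
  · have hmin : IsLocalMin (fun r ↦ dirichletEnergy μ fun x ↦ v r x ^ m) t :=
      Eventually.of_forall fun r ↦ hzero.ge.trans (dirichletEnergy_nonneg μ _)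
    simp [hmin.hasDerivAt_eq_zero hk, ← hzero]
  · have hnear : ∀ᶠ r in 𝓝 t, r ∈ U ∧ Integrable (fun x ↦ ‖∇ (fun y ↦ v r y ^ m) x‖ ^ 2) μ :=
      (hv.isOpen.eventually_mem ht).and <| (hk.continuousAt.eventually (lt_mem_nhds hpos)).mono
        fun r hr ↦ integrable_of_dirichletEnergy_pos hr
    obtain ⟨b, hb, hsub⟩ := mem_nhdsGE_iff_exists_Icc_subset.1 (mem_nhdsWithin_of_mem_nhds hnear)
    refine deriv_mul_add_sq_nonpos_of_eventually_le
      (J := fun r ↦ powerMass μ (m + 1) (v r)) hm (hv.powerMass_pos ht)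
      ((hv.isOpen.eventually_mem ht).mono hv.hasDerivAt_powerMass) hk ?_
    filter_upwards [Ioo_mem_nhdsGT hb] with s hs
    have hIcc : Icc t s ⊆ Icc t b := Icc_subset_Icc_right hs.2.le
    exact hv.powerMass_sub_le_rpow_mul_rpow hm hs.1.le (fun r hr ↦ (hsub (hIcc hr)).1)
      (fun r hr ↦ (hsub (hIcc hr)).2) hφ

end IsDissipativeFlow

end Flow

section Concavity

open Set Filter Topology

theorem sobolevConst_pos {d : ℕ} (hd : 2 < d) : 0 < sobolevConst d := by
  have hd' : (2 : ℝ) < d := by exact_mod_cast hd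
  have := sub_pos.2 hd'
  have := Gamma_pos_of_pos (by linarith : (0 : ℝ) < d)
  have := Gamma_pos_of_pos (by linarith : (0 : ℝ) < (d : ℝ) / 2)
  unfold sobolevConst
  positivity

variable {E : Type*} [NormedAddCommGroup E] [InnerProductSpace ℝ E] [FiniteDimensional ℝ E]
  [MeasurableSpace E] [BorelSpace E] {μ : Measure E} [μ.IsAddHaarMeasure]
  {d : ℕ} {U : Set ℝ} {v : ℝ → E → ℝ} {t : ℝ}

theorem IsDissipativeFlow.exists_isCutoffSequence_rpow
    (hv : IsDissipativeFlow μ (((d : ℝ) - 2) / ((d : ℝ) + 2)) U v)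
    (hdim : Module.finrank ℝ E = d) (hd : 2 < d) (ht : t ∈ U) :
    ∃ φ, IsCutoffSequence μ (fun x ↦ v t x ^ (((d : ℝ) - 2) / ((d : ℝ) + 2))) φ := by
  have hd' : (0 : ℝ) < (d : ℝ) - 2 := sub_pos.2 (by exact_mod_cast hd)
  obtain ⟨m, hm⟩ : ∃ m, m = ((d : ℝ) - 2) / ((d : ℝ) + 2) := ⟨_, rfl⟩
  have hm₀ : m ≠ 0 := by rw [hm]; positivity
  have hexp : (m + 1) / m = 2 * (d : ℝ) / ((d : ℝ) - 2) := by
    rw [hm]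
    field_simp
    ring
  rw [← hm] at hv ⊢
  refine exists_isCutoffSequence hdim hd (hv.contDiff_rpow ht).continuous
    (fun x ↦ rpow_nonneg (hv.pos t ht x).le m) ?_
  simpa only [← hexp, rpow_rpow_add_one_div (hv.pos t ht _).le hm₀] using hv.integrable t ht

theorem flow_concavity_general (hdim : Module.finrank ℝ E = d) (hd : 2 < d) {m : ℝ}
    (hm : m = ((d : ℝ) - 2) / ((d : ℝ) + 2)) (hv : IsDissipativeFlow μ m U v) {c : ℝ}
    (hc : 0 < c) {G : ℝ → ℝ} {h : ℝ} (ht : t ∈ U) (hG : HasDerivAt G h t)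
    (hGeq : ∀ r ∈ U, G r = 2 * powerMass μ (m + 1) (v r) ^ ((2 : ℝ) / d) *
      (c * dirichletEnergy μ (fun x ↦ v r x ^ m) -
        powerMass μ (m + 1) (v r) ^ (((d : ℝ) - 2) / d))) :
    h * powerMass μ (m + 1) (v t) ≤
      G t * (-(m + 1) * dirichletEnergy μ fun x ↦ v t x ^ m) := by
  have hd' : (0 : ℝ) < (d : ℝ) - 2 := sub_pos.2 (by exact_mod_cast hd)
  have hm₀ : 0 < m := by rw [hm]; positivity
  have hexp : ((d : ℝ) - 2) / d = 1 - 2 / d := by field_simp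
  have hcoeff : (m + 1) * (1 - 2 / d) = 2 * m := by rw [hm]; field_simp; ring
  have hM := hv.powerMass_pos ht
  have hM' := hv.hasDerivAt_powerMass t ht
  have hGeq' := (hv.isOpen.eventually_mem ht).mono hGeq
  rw [hexp] at hGeq'
  have hK := (differentiableAt_of_eventuallyEq_rpow_mul_sub hc.ne' hM hM'.differentiableAt
    hG.differentiableAt hGeq').hasDerivAt
  obtain ⟨φ, hφ⟩ := (hm ▸ hv).exists_isCutoffSequence_rpow hdim hd ht
  have hdecay := hv.deriv_dirichletEnergy_mul_add_sq_nonpos hm₀ ht (hm ▸ hφ) hK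
  have hsecond := second_deriv_mul_sub_eq hM hM' hK hG hGeq'
  rw [hcoeff] at hsecond
  have := mul_nonpos_of_nonneg_of_nonpos
    (mul_nonneg (mul_nonneg zero_le_two hc.le) (rpow_nonneg hM.le ((2 : ℝ) / d))) hdecay
  linarith

end Concavity

/-- the key concavity estimate `H'' J ≤ H' J'` along the fast diffusion
flow `∂v/∂t = Δ(v^m)`, `m = (d−2)/(d+2)`, for all dimensions `d ≥ 3`. -/
theorem flow_concavity (d : ℕ) (hd : 3 ≤ d) (T : ℝ) (hT : 0 < T)
    (v : ℝ → EuclideanSpace ℝ (Fin d) → ℝ)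
    (hpos : ∀ t ∈ Set.Ico (0 : ℝ) T, ∀ x, 0 < v t x)
    (hsmooth : ContDiffOn ℝ (⊤ : ℕ∞) (fun p : ℝ × EuclideanSpace ℝ (Fin d) => v p.1 p.2)
      (Set.Ico (0 : ℝ) T ×ˢ (Set.univ : Set (EuclideanSpace ℝ (Fin d)))))
    (hpde : ∀ t ∈ Set.Ico (0 : ℝ) T, ∀ x,
      HasDerivAt (fun s => v s x)
        (lap d (fun y => v t y ^ (((d : ℝ) - 2) / ((d : ℝ) + 2))) x) t)
    (J J' H H' H'' : ℝ → ℝ)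
    (hint1 : ∀ t ∈ Set.Ico (0 : ℝ) T,
      Integrable (fun x => v t x ^ (2 * (d : ℝ) / ((d : ℝ) + 2))))
    (hint2 : ∀ t ∈ Set.Ico (0 : ℝ) T,
      Integrable (fun x => v t x * invLap d (v t) x))
    (hJdef : ∀ t ∈ Set.Ico (0 : ℝ) T,
      J t = ∫ x, v t x ^ (2 * (d : ℝ) / ((d : ℝ) + 2)))
    (hHdef : ∀ t ∈ Set.Ico (0 : ℝ) T,
      H t = (∫ x, v t x * invLap d (v t) x) -
        sobolevConst d *
          (∫ x, v t x ^ (2 * (d : ℝ) / ((d : ℝ) + 2))) ^ (((d : ℝ) + 2) / (d : ℝ)))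
    (hJ' : ∀ t ∈ Set.Ico (0 : ℝ) T, HasDerivAt J (J' t) t)
    (hJ'eq : ∀ t ∈ Set.Ico (0 : ℝ) T,
      J' t = -((((d : ℝ) - 2) / ((d : ℝ) + 2)) + 1) *
        ∫ x, ‖gradient (fun y => v t y ^ (((d : ℝ) - 2) / ((d : ℝ) + 2))) x‖ ^ 2)
    (hH' : ∀ t ∈ Set.Ico (0 : ℝ) T, HasDerivAt H (H' t) t)
    (hH'' : ∀ t ∈ Set.Ico (0 : ℝ) T, HasDerivAt H' (H'' t) t)
    (hH'eq : ∀ t ∈ Set.Ico (0 : ℝ) T,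
      H' t = 2 * J t ^ ((2 : ℝ) / (d : ℝ)) *
        (sobolevConst d *
            (∫ x, ‖gradient (fun y => v t y ^ (((d : ℝ) - 2) / ((d : ℝ) + 2))) x‖ ^ 2) -
          J t ^ (((d : ℝ) - 2) / (d : ℝ)))) :
    ∀ t ∈ Set.Ioo (0 : ℝ) T, H'' t * J t ≤ H' t * J' t := by
  obtain ⟨m, hm⟩ : ∃ m, m = ((d : ℝ) - 2) / ((d : ℝ) + 2) := ⟨_, rfl⟩
  have hp : 2 * (d : ℝ) / ((d : ℝ) + 2) = m + 1 := by rw [hm]; field_simp; ring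
  simp only [← hm, hp] at hpde hint1 hJdef hJ'eq hH'eq
  have hIco {t : ℝ} (ht : t ∈ Set.Ioo 0 T) : t ∈ Set.Ico 0 T := Set.Ioo_subset_Ico_self ht
  have hflow : IsDissipativeFlow volume m (Set.Ioo 0 T) v :=
    { isOpen := isOpen_Ioo
      pos := fun t ht ↦ hpos t (hIco ht)
      contDiffOn := (hsmooth.of_le (WithTop.coe_le_coe.2 le_top)).mono
        (Set.prod_mono_left Set.Ioo_subset_Ico_self)
      hasDerivAt := fun t ht x ↦ lap_eq_laplacian d _ ▸ hpde t (hIco ht) x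
      integrable := fun t ht ↦ hint1 t (hIco ht)
      hasDerivAt_powerMass := fun t ht ↦ by
        refine (hJ'eq t (hIco ht) ▸ hJ' t (hIco ht)).congr_of_eventuallyEq ?_
        filter_upwards [isOpen_Ioo.mem_nhds ht] with r hr using (hJdef r (hIco hr)).symm }
  intro t ht
  rw [hJ'eq t (hIco ht), hJdef t (hIco ht)]
  refine flow_concavity_general finrank_euclideanSpace_fin hd hm hflow (sobolevConst_pos hd) ht
    (hH'' t (hIco ht)) fun r hr ↦ ?_
  rw [hH'eq r (hIco hr), hJdef r (hIco hr)]
  rfl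
end
end
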